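/- Third Growth Theorem: Let Y = (y,s) ∈ ℝ^{n+1}, r > 0, and let u ∈ C^{2,1} on the closure of Q_r(Y) satisfy −u_t + Lu ≥ 0 at every point of Q_r(Y). Let Q⁰ := Q_{r/2}(Y⁰) with Y⁰ := (y, s − (3/4)r²), and suppose |{X ∈ Q⁰ : u(X) > 0}| ≤ μ·|Q⁰| for some constant μ < 1. Then M_{r/2}(Y) ≤ β · M_r(Y), where M_ρ(Y) := max over the closure of Q_ρ(Y) of u₊, u₊ := max(u,0), and β < 1 is a positive constant depending only on n, ν, S and μ. -/

import Mathlib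

open MeasureTheory ENNReal Metric Set RealInnerProductSpace

noncomputable section

/-- `n`-dimensional Euclidean space. -/
abbrev En (n : ℕ) : Type := EuclideanSpace ℝ (Fin n)

variable {n : ℕ}

/-- Time derivative `u_t`. -/
def Dt (u : En n × ℝ → ℝ) (X : En n × ℝ) : ℝ :=
  deriv (fun t => u (X.1, t)) X.2

/-- First spatial derivative `D_i u`. -/
def Dx (u : En n × ℝ → ℝ) (i : Fin n) (X : En n × ℝ) : ℝ :=
  fderiv ℝ (fun x => u (x, X.2)) X.1 (EuclideanSpace.single i 1)

/-- Second spatial derivative `D_{ij} u`. -/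
def Dxx (u : En n × ℝ → ℝ) (i j : Fin n) (X : En n × ℝ) : ℝ :=
  Dx (Dx u j) i X

/-- `u` is of class `C^{2,1}` on `Q`: `u`, `D_i u`, `D_{ij} u`, `u_t` exist and are
continuous on `Q`. -/
structure IsC21 (u : En n × ℝ → ℝ) (Q : Set (En n × ℝ)) : Prop where
  cont : ContinuousOn u Q
  diff_t : ∀ X ∈ Q, DifferentiableAt ℝ (fun t => u (X.1, t)) X.2
  diff_x : ∀ X ∈ Q, DifferentiableAt ℝ (fun x => u (x, X.2)) X.1
  diff_xx : ∀ j : Fin n, ∀ X ∈ Q, DifferentiableAt ℝ (fun x => Dx u j (x, X.2)) X.1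
  cont_t : ContinuousOn (Dt u) Q
  cont_x : ∀ i, ContinuousOn (Dx u i) Q
  cont_xx : ∀ i j, ContinuousOn (Dxx u i j) Q

/-- Uniform parabolicity with constant `ν` on `Q`:
`ν⁻¹|ξ|² ≤ Σ a_ij ξ_i ξ_j` and `Σ a_ij² ≤ ν²`. -/
def UnifParabolic (ν : ℝ) (a : En n × ℝ → Matrix (Fin n) (Fin n) ℝ)
    (Q : Set (En n × ℝ)) : Prop :=
  ∀ X ∈ Q, (∀ ξ : Fin n → ℝ, ν⁻¹ * (∑ i, ξ i ^ 2) ≤ ∑ i, ∑ j, a X i j * ξ i * ξ j) ∧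
    (∑ i, ∑ j, (a X i j) ^ 2) ≤ ν ^ 2

/-- `Lu = Σ_{ij} a_ij D_ij u + Σ_i b_i D_i u`. -/
def Lop (a : En n × ℝ → Matrix (Fin n) (Fin n) ℝ) (b : En n × ℝ → En n)
    (u : En n × ℝ → ℝ) (X : En n × ℝ) : ℝ :=
  (∑ i, ∑ j, a X i j * Dxx u i j X) + ∑ i, b X i * Dx u i X

/-- `∫ (ess sup_t |f(x,t)|)ⁿ dx`, the `n`-th power of the `L^n_x L^∞_t` norm of `f`
over the set `Q ⊆ ℝⁿ × ℝ`. -/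
def LxnLtinfPow {E : Type*} [NNNorm E] (f : En n × ℝ → E) (Q : Set (En n × ℝ)) : ℝ≥0∞ :=
  ∫⁻ x, (essSup (fun t => (‖f (x, t)‖₊ : ℝ≥0∞)) (volume.restrict {t | (x, t) ∈ Q})) ^ n

/-- The `L^n_x L^∞_t` norm of `f` over `Q`. -/
def LxnLtinf {E : Type*} [NNNorm E] (f : En n × ℝ → E) (Q : Set (En n × ℝ)) : ℝ≥0∞ :=
  (LxnLtinfPow f Q) ^ (1 / (n : ℝ))

/-- The box `B_ρ(y) × (t₁, t₂)`. -/
def box (y : En n) (ρ t₁ t₂ : ℝ) : Set (En n × ℝ) := ball y ρ ×ˢ Ioo t₁ t₂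

/-- The standard parabolic cylinder `Q_r(Y) = B_r(y) × (s - r², s)`. -/
def pcyl (Y : En n × ℝ) (r : ℝ) : Set (En n × ℝ) := box Y.1 r (Y.2 - r ^ 2) Y.2

/-- The slanted cylinder `V_r(Y) = {(x,t) : |x - (t/s)y| < r, 0 < t < s}`. -/
def slantCyl (Y : En n × ℝ) (r : ℝ) : Set (En n × ℝ) :=
  {X | ‖X.1 - (X.2 / Y.2) • Y.1‖ < r ∧ 0 < X.2 ∧ X.2 < Y.2}

/-- Supremum of the positive part `u₊` over a set `A`. -/
def supPos (u : En n × ℝ → ℝ) (A : Set (En n × ℝ)) : ℝ :=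
  sSup ((fun X => max (u X) 0) '' A)

/-- `Ω` is a Lipschitz domain with character `(rΩ, mΩ)`: at every boundary point `y`
there is a coordinate frame, encoded by the unit "vertical" direction `e`, in which
`Ω ∩ B_{rΩ}(y)` is the region above the graph of an `mΩ`-Lipschitz function `φ`
of the tangential variables. -/
def IsLipschitzDomain (Ω : Set (En n)) (rΩ mΩ : ℝ) : Prop :=
  0 < rΩ ∧ 0 ≤ mΩ ∧
  ∀ y ∈ frontier Ω, ∃ (e : En n) (φ : En n → ℝ),
    ‖e‖ = 1 ∧ LipschitzWith (Real.toNNReal mΩ) φ ∧ φ 0 = 0 ∧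
    (∀ x, x ∈ Ω ∩ ball y rΩ ↔
      dist x y < rΩ ∧ φ ((x - y) - ⟪x - y, e⟫ • e) < ⟪x - y, e⟫) ∧
    (∀ ρ : ℝ, 0 < ρ → ρ ≤ rΩ → y + ρ • e ∈ Ω)

/-!
Let `M` be the maximum of `u₊` over the closure of `Q_r(Y)`. Then `v = M - u` is a nonnegative
supersolution with `v ≥ M` on a fixed proportion of `Q⁰`, and the theorem says that `v ≥ c M` on the
closure of `Q_{r/2}(Y)` for some `c > 0`.

The starting point is a growth lemma: if `v ≥ 1` on most of a cylinder, then `v` is bounded below at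
the top of it. To prove it one applies the parabolic Alexandrov–Bakelman–Pucci–Krylov–Tso estimate
to the differences of `v` and Gaussian barriers. The drift term of one such estimate is of size `S`,
which is not small. Taking `N` barriers of radii `2⁻ʲ`, one gets a left-hand side growing like `N`,
while the drift terms decay geometrically at each point and add up to a multiple of `S`: for large
`N` this is a contradiction. Chains of cylinders then propagate the lower bound in space and time.

If instead `v > l` only on part of a cylinder, cover the set `{v > l}` by parabolic balls of which
it fills most but not too much. On the cylinders stacked on top of them `v` exceeds a multiple of
`l`, so the measure of the superlevel set grows by a fixed factor ("ink spots"). It cannot grow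
forever, so after finitely many steps some ball of radius comparable to `r` is mostly filled, and
the growth lemma applies there.
-/

section LinearAlgebra

variable {E : Type*} [NormedAddCommGroup E] [InnerProductSpace ℝ E] [FiniteDimensional ℝ E]

theorem abs_det_le_trace_pow_finrank {T : E →ₗ[ℝ] E} (hT : T.IsPositive) :
    |LinearMap.det T| ≤ LinearMap.trace ℝ E T ^ Module.finrank ℝ E := by
  have heig := hT.nonneg_eigenvalues rfl
  rw [hT.isSymmetric.det_eq_prod_eigenvalues rfl, hT.isSymmetric.trace_eq_sum_eigenvalues rfl]
  simp only [RCLike.ofReal_real_eq_id, id_eq]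
  rw [abs_of_nonneg (Finset.prod_nonneg fun k _ => heig k)]
  calc ∏ k, hT.isSymmetric.eigenvalues rfl k
      ≤ ∏ _k : Fin (Module.finrank ℝ E), ∑ k, hT.isSymmetric.eigenvalues rfl k :=
        Finset.prod_le_prod (fun k _ => heig k)
          fun k _ => Finset.single_le_sum (fun k _ => heig k) (Finset.mem_univ k)
    _ = _ := by simp

/-- The second-order part `∑ a_ij T_ij` of an operator with coefficients `A`, evaluated at a
Hessian `T`. -/
def hessTrace (A : Matrix (Fin n) (Fin n) ℝ) : (En n →L[ℝ] En n) →ₗ[ℝ] ℝ where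
  toFun T := ∑ i, ∑ j, A i j * T (EuclideanSpace.single i 1) j
  map_add' T T' := by simp [mul_add, Finset.sum_add_distrib]
  map_smul' c T := by simp [Finset.mul_sum, mul_left_comm]

theorem hessTrace_apply (A : Matrix (Fin n) (Fin n) ℝ) (T : En n →L[ℝ] En n) :
    hessTrace A T = ∑ i, ∑ j, A i j * T (EuclideanSpace.single i 1) j := rfl

theorem hessTrace_id (A : Matrix (Fin n) (Fin n) ℝ) :
    hessTrace A (ContinuousLinearMap.id ℝ (En n)) = A.trace := by
  simp [hessTrace_apply, Matrix.trace, PiLp.single_apply]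

theorem hessTrace_smulRight_innerSL (A : Matrix (Fin n) (Fin n) ℝ) (b : En n) :
    hessTrace A ((innerSL ℝ b).smulRight b) = ∑ i, ∑ j, A i j * b i * b j := by
  simp [hessTrace_apply, EuclideanSpace.inner_single_right, mul_assoc]

/-- Uniform ellipticity of a single coefficient matrix: the pointwise condition in
`UnifParabolic`. -/
def IsElliptic (ν : ℝ) (A : Matrix (Fin n) (Fin n) ℝ) : Prop :=
  (∀ ξ : Fin n → ℝ, ν⁻¹ * (∑ i, ξ i ^ 2) ≤ ∑ i, ∑ j, A i j * ξ i * ξ j) ∧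
    (∑ i, ∑ j, (A i j) ^ 2) ≤ ν ^ 2

namespace IsElliptic

variable {ν : ℝ} {A : Matrix (Fin n) (Fin n) ℝ}

theorem inv_mul_sq_norm_le (hA : IsElliptic ν A) (b : En n) :
    ν⁻¹ * ‖b‖ ^ 2 ≤ hessTrace A ((innerSL ℝ b).smulRight b) := by
  rw [hessTrace_smulRight_innerSL, EuclideanSpace.real_norm_sq_eq]
  exact hA.1 fun i => b i

theorem inv_mul_trace_le_hessTrace (hA : IsElliptic ν A) {T : En n →L[ℝ] En n}
    (hT : T.IsPositive) : ν⁻¹ * LinearMap.trace ℝ (En n) T ≤ hessTrace A T := by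
  have hpos : (T : En n →ₗ[ℝ] En n).IsPositive := T.isPositive_toLinearMap_iff.2 hT
  set b := hpos.isSymmetric.eigenvectorBasis rfl
  set l := hpos.isSymmetric.eigenvalues rfl
  have heig : ∀ k, T (b k) = l k • b k := hpos.isSymmetric.apply_eigenvectorBasis rfl
  have hspec : T = ∑ k, l k • (innerSL ℝ (b k)).smulRight (b k) := by
    ext1 x
    conv_lhs => rw [← b.sum_repr x]
    simp only [map_sum, map_smul, heig, sum_apply, smul_apply,
      ContinuousLinearMap.smulRight_apply, innerSL_apply_apply, b.repr_apply_apply]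
    exact Finset.sum_congr rfl fun k _ => smul_comm _ _ _
  have hrank (k) : ν⁻¹ ≤ hessTrace A ((innerSL ℝ (b k)).smulRight (b k)) := by
    simpa [b.norm_eq_one] using hA.inv_mul_sq_norm_le (b k)
  calc ν⁻¹ * LinearMap.trace ℝ (En n) T = ∑ k, l k * ν⁻¹ := by
        rw [hpos.isSymmetric.trace_eq_sum_eigenvalues rfl, ← Finset.sum_mul, mul_comm]; rfl
    _ ≤ ∑ k, l k * hessTrace A ((innerSL ℝ (b k)).smulRight (b k)) := Finset.sum_le_sum fun k _ =>
        mul_le_mul_of_nonneg_left (hrank k) (hpos.nonneg_eigenvalues rfl k)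
    _ = hessTrace A T := by
        conv_rhs => rw [hspec]
        simp only [map_sum, map_smul, smul_eq_mul]

theorem trace_le (hν : 0 ≤ ν) (hA : IsElliptic ν A) : A.trace ≤ n * ν := by
  have hdiag (i : Fin n) : A i i ≤ ν := by
    refine (abs_le_of_sq_le_sq' (le_trans ?_ hA.2) hν).2
    calc A i i ^ 2 ≤ ∑ j, A i j ^ 2 :=
          Finset.single_le_sum (f := fun j => A i j ^ 2) (fun _ _ => sq_nonneg _)
            (Finset.mem_univ i)
      _ ≤ ∑ i, ∑ j, A i j ^ 2 := Finset.single_le_sum (f := fun i => ∑ j, A i j ^ 2)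
            (fun _ _ => Finset.sum_nonneg fun _ _ => sq_nonneg _) (Finset.mem_univ i)
  simpa [Matrix.trace] using Finset.sum_le_sum fun i (_ : i ∈ Finset.univ) => hdiag i

end IsElliptic

end LinearAlgebra

section DerivativeTests

theorem nonpos_of_hasDerivAt_deriv_of_isLocalMax {f f' : ℝ → ℝ} {f'' x : ℝ}
    (hf : ∀ᶠ t in nhds x, HasDerivAt f (f' t) t) (hf' : HasDerivAt f' f'' x)
    (hmax : IsLocalMax f x) : f'' ≤ 0 := by
  by_contra! hpos
  have hderiv : deriv f =ᶠ[nhds x] f' := hf.mono fun t ht => ht.deriv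
  have hderiv₂ : deriv (deriv f) x = f'' := hderiv.deriv_eq.trans hf'.deriv
  have hmin : IsLocalMin f x := isLocalMin_of_deriv_deriv_pos (hderiv₂ ▸ hpos)
    hmax.deriv_eq_zero hf.self_of_nhds.continuousAt
  have hconst : f =ᶠ[nhds x] fun _ => f x := by
    filter_upwards [hmax, hmin] with t h₁ h₂ using le_antisymm h₁ h₂
  have hzero : deriv f =ᶠ[nhds x] fun _ => 0 := by simpa using hconst.deriv
  rw [← hderiv₂, hzero.deriv_eq, deriv_const] at hpos
  exact hpos.false

theorem hasDerivAt_nonpos_of_eventually_le_left {f : ℝ → ℝ} {f' t : ℝ} (hf : HasDerivAt f f' t)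
    (hmin : ∀ᶠ s in nhdsWithin t (Iio t), f t ≤ f s) : f' ≤ 0 := by
  have hslope : Filter.Tendsto (slope f t) (nhdsWithin t (Iio t)) (nhds f') :=
    (hasDerivAt_iff_tendsto_slope.1 hf).mono_left (nhdsWithin_mono _ fun s hs => ne_of_lt hs)
  refine le_of_tendsto hslope ?_
  filter_upwards [hmin, self_mem_nhdsWithin] with s hle hlt
  rw [slope_def_field]
  exact div_nonpos_of_nonneg_of_nonpos (sub_nonneg.2 hle) (sub_nonpos.2 (le_of_lt hlt))

variable {E : Type*} [NormedAddCommGroup E] [InnerProductSpace ℝ E] [CompleteSpace E]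
  {w : E → ℝ} {p x y : E}

theorem gradient_eq_of_isLocalMax_sub_inner {g : E} (hw : HasGradientAt w g x)
    (hmax : IsLocalMax (fun z => w z - ⟪p, z - y⟫) x) : g = p := by
  have hlin : HasGradientAt (fun z => ⟪p, z - y⟫) p x := by
    rw [hasGradientAt_iff_hasFDerivAt]
    simpa [inner_sub_right] using
      ((InnerProductSpace.toDual ℝ E p).hasFDerivAt (x := x)).sub_const ⟪p, y⟫
  have hzero := hmax.hasFDerivAt_eq_zero (hw.hasFDerivAt.sub hlin.hasFDerivAt)
  exact (InnerProductSpace.toDual ℝ E).injective (sub_eq_zero.1 hzero)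

theorem inner_hess_nonpos_of_isLocalMax_sub_inner {g : E → E} {H : E →L[ℝ] E}
    (hw : ∀ᶠ z in nhds x, HasGradientAt w (g z) z) (hg : HasFDerivAt g H x)
    (hmax : IsLocalMax (fun z => w z - ⟪p, z - y⟫) x) (e : E) : ⟪H e, e⟫ ≤ 0 := by
  have hline (t : ℝ) : HasDerivAt (fun t : ℝ => x + t • e) e t := by
    simpa using ((hasDerivAt_id t).smul_const e).const_add x
  have hcont : Filter.Tendsto (fun t : ℝ => x + t • e) (nhds 0) (nhds x) := by
    simpa using (show Continuous fun t : ℝ => x + t • e by fun_prop).tendsto 0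
  refine nonpos_of_hasDerivAt_deriv_of_isLocalMax (x := 0)
    (f := fun t => w (x + t • e) - ⟪p, x + t • e - y⟫)
    (f' := fun t => ⟪g (x + t • e), e⟫ - ⟪p, e⟫) ?_ ?_ ?_
  · filter_upwards [hcont.eventually hw] with t ht
    refine HasDerivAt.sub ?_ ?_
    · simpa [Function.comp_def] using ht.hasFDerivAt.comp_hasDerivAt t (hline t)
    · simpa [Function.comp_def] using
        (innerSL ℝ p).hasFDerivAt.comp_hasDerivAt t ((hline t).sub_const y)
  · refine HasDerivAt.sub_const _ ?_
    have hg₀ : HasFDerivAt g H (x + (0 : ℝ) • e) := by simpa using hg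
    simpa [real_inner_comm, Function.comp_def] using
      (innerSL ℝ e).hasFDerivAt.comp_hasDerivAt (0 : ℝ) (hg₀.comp_hasDerivAt (0 : ℝ) (hline 0))
  · simpa [IsLocalMax, IsMaxFilter] using hcont.eventually hmax

theorem isSymmetric_of_hasGradientAt {g : E → E} {H : E →L[ℝ] E}
    (hw : ∀ᶠ z in nhds x, HasGradientAt w (g z) z) (hg : HasFDerivAt g H x) :
    (H : E →ₗ[ℝ] E).IsSymmetric := fun a b => by
  have hdual := (innerSL ℝ (E := E)).hasFDerivAt.comp x hg
  have hsymm := second_derivative_symmetric_of_eventually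
    (f' := fun z => innerSL ℝ (g z)) (hw.mono fun z hz => hz.hasFDerivAt) hdual a b
  exact hsymm.trans (real_inner_comm _ _)

theorem isPositive_neg_hess_of_isLocalMax_sub_inner {g : E → E} {H : E →L[ℝ] E}
    (hw : ∀ᶠ z in nhds x, HasGradientAt w (g z) z) (hg : HasFDerivAt g H x)
    (hmax : IsLocalMax (fun z => w z - ⟪p, z - y⟫) x) : (-H).IsPositive := by
  have hsymm := isSymmetric_of_hasGradientAt hw hg
  refine ⟨fun a b => ?_, fun e => ?_⟩
  · simpa using hsymm a b
  · simpa [ContinuousLinearMap.reApplyInnerSelf_apply] using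
      inner_hess_nonpos_of_isLocalMax_sub_inner hw hg hmax e

end DerivativeTests

section AreaFormula

variable {E : Type*} [NormedAddCommGroup E] [NormedSpace ℝ E] [FiniteDimensional ℝ E]
  [MeasurableSpace E] [BorelSpace E]

theorem lintegral_le_lintegral_abs_det_of_support_subset_image (μ : Measure E) [μ.IsAddHaarMeasure]
    {f : E → E} {f' : E → E →L[ℝ] E} {C : Set E} (hC : MeasurableSet C) (hf : Continuous f)
    (hff' : ∀ x ∈ C, HasFDerivAt f (f' x) x) (hf' : Continuous f') {φ : E → ℝ≥0∞}
    (hφ : Measurable φ) (hsupp : Function.support φ ⊆ f '' C) :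
    ∫⁻ p, φ p ∂μ ≤ ∫⁻ x in C, ENNReal.ofReal |(f' x).det| * φ (f x) ∂μ := by
  set J : E → ℝ≥0∞ := fun x => ENNReal.ofReal |(f' x).det|
  have hJ : Measurable J :=
    (ENNReal.continuous_ofReal.comp (ContinuousLinearMap.continuous_det.comp hf').abs).measurable
  have hle : μ.restrict (Function.support φ) ≤ ((μ.restrict C).withDensity J).map f := by
    refine Measure.le_iff.2 fun A hA => ?_
    have hpre := hf.measurable hA
    rw [Measure.restrict_apply hA, Measure.map_apply hf.measurable hA,
      withDensity_apply _ hpre, Measure.restrict_restrict hpre]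
    refine le_trans (measure_mono ?_) (addHaar_image_le_lintegral_abs_det_fderiv μ
      (hpre.inter hC) fun x hx => (hff' x hx.2).hasFDerivWithinAt)
    rintro p ⟨hpA, hp⟩
    obtain ⟨x, hx, rfl⟩ := hsupp hp
    exact ⟨x, ⟨hpA, hx⟩, rfl⟩
  calc ∫⁻ p, φ p ∂μ = ∫⁻ p in Function.support φ, φ p ∂μ :=
        (setLIntegral_eq_of_support_subset subset_rfl).symm
    _ ≤ ∫⁻ p, φ p ∂((μ.restrict C).withDensity J).map f := lintegral_mono' hle le_rfl
    _ = ∫⁻ x, φ (f x) ∂(μ.restrict C).withDensity J := lintegral_map hφ hf.measurable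
    _ = ∫⁻ x in C, J x * φ (f x) ∂μ :=
        lintegral_withDensity_eq_lintegral_mul _ hJ (hφ.comp hf.measurable)

end AreaFormula

section Jets

/-- A function on space-time together with candidates for its spatial gradient, its spatial Hessian
and its time derivative. Carrying the derivatives as functions on all of space-time lets them be
continuous up to the boundary of a cylinder inside which `Jet.IsJetOn` holds. -/
structure Jet (n : ℕ) where
  val : En n × ℝ → ℝ
  grad : En n × ℝ → En n
  hess : En n × ℝ → En n →L[ℝ] En n
  dt : En n × ℝ → ℝ

namespace Jet

/-- The components of `v` are continuous, and on `U` they are the derivatives of `v.val`. -/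
structure IsJetOn (v : Jet n) (U : Set (En n × ℝ)) : Prop where
  continuous_val : Continuous v.val
  continuous_grad : Continuous v.grad
  continuous_hess : Continuous v.hess
  continuous_dt : Continuous v.dt
  hasGradientAt : ∀ X ∈ U, HasGradientAt (fun x => v.val (x, X.2)) (v.grad X) X.1
  hasFDerivAt_grad : ∀ X ∈ U, HasFDerivAt (fun x => v.grad (x, X.2)) (v.hess X) X.1
  hasDerivAt_dt : ∀ X ∈ U, HasDerivAt (fun t => v.val (X.1, t)) (v.dt X) X.2

instance : Add (Jet n) :=
  ⟨fun v w => ⟨v.val + w.val, v.grad + w.grad, v.hess + w.hess, v.dt + w.dt⟩⟩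

instance : Sub (Jet n) :=
  ⟨fun v w => ⟨v.val - w.val, v.grad - w.grad, v.hess - w.hess, v.dt - w.dt⟩⟩

instance : SMul ℝ (Jet n) :=
  ⟨fun c v => ⟨c • v.val, c • v.grad, c • v.hess, c • v.dt⟩⟩

variable {v w : Jet n} {U : Set (En n × ℝ)}

theorem IsJetOn.add (hv : v.IsJetOn U) (hw : w.IsJetOn U) : (v + w).IsJetOn U where
  continuous_val := hv.continuous_val.add hw.continuous_val
  continuous_grad := hv.continuous_grad.add hw.continuous_grad
  continuous_hess := hv.continuous_hess.add hw.continuous_hess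
  continuous_dt := hv.continuous_dt.add hw.continuous_dt
  hasGradientAt X hX := by
    rw [hasGradientAt_iff_hasFDerivAt]
    exact ((hv.hasGradientAt X hX).hasFDerivAt.add (hw.hasGradientAt X hX).hasFDerivAt).congr_fderiv
      (map_add (InnerProductSpace.toDual ℝ (En n)) _ _).symm
  hasFDerivAt_grad X hX := (hv.hasFDerivAt_grad X hX).add (hw.hasFDerivAt_grad X hX)
  hasDerivAt_dt X hX := (hv.hasDerivAt_dt X hX).add (hw.hasDerivAt_dt X hX)

theorem IsJetOn.sub (hv : v.IsJetOn U) (hw : w.IsJetOn U) : (v - w).IsJetOn U where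
  continuous_val := hv.continuous_val.sub hw.continuous_val
  continuous_grad := hv.continuous_grad.sub hw.continuous_grad
  continuous_hess := hv.continuous_hess.sub hw.continuous_hess
  continuous_dt := hv.continuous_dt.sub hw.continuous_dt
  hasGradientAt X hX := by
    rw [hasGradientAt_iff_hasFDerivAt]
    exact ((hv.hasGradientAt X hX).hasFDerivAt.sub (hw.hasGradientAt X hX).hasFDerivAt).congr_fderiv
      (map_sub (InnerProductSpace.toDual ℝ (En n)) _ _).symm
  hasFDerivAt_grad X hX := (hv.hasFDerivAt_grad X hX).sub (hw.hasFDerivAt_grad X hX)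
  hasDerivAt_dt X hX := (hv.hasDerivAt_dt X hX).sub (hw.hasDerivAt_dt X hX)

theorem IsJetOn.const_smul (hv : v.IsJetOn U) (c : ℝ) : (c • v).IsJetOn U where
  continuous_val := hv.continuous_val.const_smul c
  continuous_grad := hv.continuous_grad.const_smul c
  continuous_hess := hv.continuous_hess.const_smul c
  continuous_dt := hv.continuous_dt.const_smul c
  hasGradientAt X hX := by
    rw [hasGradientAt_iff_hasFDerivAt]
    exact ((hv.hasGradientAt X hX).hasFDerivAt.const_smul c).congr_fderiv
      (map_smul (InnerProductSpace.toDual ℝ (En n)) _ _).symm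
  hasFDerivAt_grad X hX := (hv.hasFDerivAt_grad X hX).const_smul c
  hasDerivAt_dt X hX := (hv.hasDerivAt_dt X hX).const_smul c

theorem IsJetOn.mono {U' : Set (En n × ℝ)} (hv : v.IsJetOn U) (h : U' ⊆ U) : v.IsJetOn U' where
  __ := hv
  hasGradientAt X hX := hv.hasGradientAt X (h hX)
  hasFDerivAt_grad X hX := hv.hasFDerivAt_grad X (h hX)
  hasDerivAt_dt X hX := hv.hasDerivAt_dt X (h hX)

end Jet

end Jets

section LegendreTransform

/-- The maximum of `w X - ⟪p, X.1 - y⟫` over `X ∈ closedBall y ρ × [t₀, t]`, a parabolic Legendre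
transform of `w` evaluated at `q = (p, t)`. The time interval is parametrized by `[0, 1]`, so that
the transform is continuous in `t` as well. -/
def legendreSup (w : En n × ℝ → ℝ) (y : En n) (ρ t₀ : ℝ) (q : En n × ℝ) : ℝ :=
  sSup ((fun z : En n × ℝ => w (z.1, t₀ + z.2 * (q.2 - t₀)) - ⟪q.1, z.1 - y⟫) ''
    (closedBall y ρ ×ˢ Icc (0 : ℝ) 1))

variable {w : En n × ℝ → ℝ} {x y p : En n} {ρ t₀ t t' T κ k L d : ℝ}

theorem continuous_legendreSup (hw : Continuous w) (y : En n) (ρ t₀ : ℝ) :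
    Continuous (legendreSup w y ρ t₀) := by
  refine ((isCompact_closedBall y ρ).prod isCompact_Icc).continuous_sSup
    (f := fun (q z : En n × ℝ) => w (z.1, t₀ + z.2 * (q.2 - t₀)) - ⟪q.1, z.1 - y⟫) ?_
  simp only [Function.HasUncurry.uncurry]
  fun_prop

theorem sub_inner_le_legendreSup (hw : Continuous w) (hx : x ∈ closedBall y ρ)
    (ht' : t' ∈ Icc t₀ t) : w (x, t') - ⟪p, x - y⟫ ≤ legendreSup w y ρ t₀ (p, t) := by
  have hbdd : BddAbove ((fun z : En n × ℝ => w (z.1, t₀ + z.2 * (t - t₀)) - ⟪p, z.1 - y⟫) ''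
      (closedBall y ρ ×ˢ Icc (0 : ℝ) 1)) :=
    (((isCompact_closedBall y ρ).prod isCompact_Icc).image (by fun_prop)).bddAbove
  refine le_csSup hbdd ?_
  have hσ : (t' - t₀) / (t - t₀) ∈ Icc (0 : ℝ) 1 :=
    ⟨div_nonneg (sub_nonneg.2 ht'.1) (sub_nonneg.2 (ht'.1.trans ht'.2)),
      div_le_one_of_le₀ (sub_le_sub_right ht'.2 t₀) (sub_nonneg.2 (ht'.1.trans ht'.2))⟩
  refine ⟨(x, (t' - t₀) / (t - t₀)), ⟨hx, hσ⟩, ?_⟩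
  have hcancel : t₀ + (t' - t₀) / (t - t₀) * (t - t₀) = t' := by
    rw [div_mul_cancel_of_imp fun h => by linarith [ht'.1, ht'.2], add_sub_cancel]
  simp only [hcancel]

theorem exists_legendreSup_eq (hw : Continuous w) (hρ : 0 ≤ ρ) (ht : t₀ ≤ t) (p : En n) :
    ∃ x ∈ closedBall y ρ, ∃ t' ∈ Icc t₀ t,
      legendreSup w y ρ t₀ (p, t) = w (x, t') - ⟪p, x - y⟫ := by
  obtain ⟨⟨x, σ⟩, ⟨hx, hσ⟩, heq, -⟩ :=
    ((isCompact_closedBall y ρ).prod isCompact_Icc).exists_sSup_image_eq_and_ge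
      (⟨(y, 0), by simp [hρ]⟩ : (closedBall y ρ ×ˢ Icc (0 : ℝ) 1).Nonempty)
      (f := fun z => w (z.1, t₀ + z.2 * (t - t₀)) - ⟪p, z.1 - y⟫) (by fun_prop)
  exact ⟨x, hx, t₀ + σ * (t - t₀), ⟨by nlinarith [hσ.1], by nlinarith [hσ.2]⟩, heq⟩

theorem legendreSup_mono (hw : Continuous w) (hρ : 0 ≤ ρ) (ht : t₀ ≤ t) (htt' : t ≤ t') :
    legendreSup w y ρ t₀ (p, t) ≤ legendreSup w y ρ t₀ (p, t') := by
  obtain ⟨x, hx, t₁, ht₁, heq⟩ := exists_legendreSup_eq hw hρ ht p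
  exact heq ▸ sub_inner_le_legendreSup hw hx ⟨ht₁.1, ht₁.2.trans htt'⟩

theorem legendreSup_le_add (hw : Continuous w) (hρ : 0 ≤ ρ) (hL : 0 ≤ L)
    (hlip : ∀ x ∈ closedBall y ρ, ∀ t ∈ Icc t₀ T, ∀ t' ∈ Icc t₀ T, t ≤ t' →
      w (x, t') - w (x, t) ≤ L * (t' - t)) (ht : t₀ ≤ t) (htt' : t ≤ t') (ht' : t' ≤ T) :
    legendreSup w y ρ t₀ (p, t') ≤ legendreSup w y ρ t₀ (p, t) + L * (t' - t) := by
  obtain ⟨x, hx, t₁, ht₁, heq⟩ := exists_legendreSup_eq hw hρ (ht.trans htt') p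
  rcases le_total t₁ t with h | h
  · have hle := sub_inner_le_legendreSup (p := p) hw hx ⟨ht₁.1, h⟩
    rw [← heq] at hle
    exact hle.trans (le_add_of_nonneg_right (mul_nonneg hL (sub_nonneg.2 htt')))
  · have hle := sub_inner_le_legendreSup (p := p) hw hx ⟨ht, le_refl t⟩
    have hinc := hlip x hx t ⟨ht, htt'.trans ht'⟩ t₁ ⟨ht₁.1, ht₁.2.trans ht'⟩ h
    have hscale : L * (t₁ - t) ≤ L * (t' - t) :=
      mul_le_mul_of_nonneg_left (sub_le_sub_right ht₁.2 t) hL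
    linarith

/-- The Legendre transform cut off from below at height `k`, as a function of time. Where it grows
it is attained at points at which `w` is positive. -/
def cutLegendre (w : En n × ℝ → ℝ) (y : En n) (ρ t₀ k : ℝ) (p : En n) (t : ℝ) : ℝ :=
  max (legendreSup w y ρ t₀ (p, t)) k

theorem measurable_deriv_cutLegendre (hw : Continuous w) :
    Measurable fun q : En n × ℝ => deriv (cutLegendre w y ρ t₀ k q.1) q.2 :=
  measurable_deriv_with_param ((continuous_legendreSup hw y ρ t₀).max continuous_const)

theorem lipschitzOnWith_cutLegendre (hw : Continuous w) (hρ : 0 ≤ ρ) (hL : 0 ≤ L)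
    (hlip : ∀ x ∈ closedBall y ρ, ∀ t ∈ Icc t₀ T, ∀ t' ∈ Icc t₀ T, t ≤ t' →
      w (x, t') - w (x, t) ≤ L * (t' - t)) :
    LipschitzOnWith L.toNNReal (cutLegendre w y ρ t₀ k p) (Icc t₀ T) := by
  refine LipschitzOnWith.of_le_add_mul _ fun t ht t' ht' => ?_
  rw [Real.coe_toNNReal L hL, cutLegendre, cutLegendre]
  have hdist : 0 ≤ L * dist t t' := mul_nonneg hL dist_nonneg
  refine max_le ?_ ((le_max_right _ _).trans (le_add_of_nonneg_right hdist))
  have hmax := le_max_left (legendreSup w y ρ t₀ (p, t')) k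
  rcases le_total t t' with h | h
  · linarith [legendreSup_mono (y := y) (p := p) hw hρ ht.1 h]
  · rw [Real.dist_eq, abs_of_nonneg (sub_nonneg.2 h)]
    linarith [legendreSup_le_add (p := p) hw hρ hL hlip ht'.1 h ht.2]

theorem cutLegendre_eq_of_deriv_pos (hd : 0 < deriv (cutLegendre w y ρ t₀ k p) t) :
    k < legendreSup w y ρ t₀ (p, t) ∧
      cutLegendre w y ρ t₀ k p t = legendreSup w y ρ t₀ (p, t) := by
  suffices hlt : k < legendreSup w y ρ t₀ (p, t) from ⟨hlt, max_eq_left hlt.le⟩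
  by_contra! hle
  have hmin : IsLocalMin (cutLegendre w y ρ t₀ k p) t := Filter.Eventually.of_forall fun _ =>
    (max_eq_right hle).trans_le (le_max_right _ _)
  exact hd.ne' hmin.deriv_eq_zero

theorem deriv_cutLegendre_nonpos_of_attained_before (hw : Continuous w) (hx : x ∈ closedBall y ρ)
    (ht' : t₀ ≤ t') (htt' : t' < t)
    (heq : legendreSup w y ρ t₀ (p, t) = w (x, t') - ⟪p, x - y⟫) :
    deriv (cutLegendre w y ρ t₀ k p) t ≤ 0 := by
  by_contra! hpos
  refine hpos.not_ge (hasDerivAt_nonpos_of_eventually_le_left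
    (differentiableAt_of_deriv_ne_zero hpos.ne').hasDerivAt ?_)
  filter_upwards [Ioo_mem_nhdsLT htt'] with s hs
  rw [(cutLegendre_eq_of_deriv_pos hpos).2, heq]
  exact (sub_inner_le_legendreSup hw hx ⟨ht', hs.1.le⟩).trans (le_max_left _ _)

theorem deriv_cutLegendre_le (hw : Continuous w) (hx : x ∈ closedBall y ρ) (ht : t₀ < t)
    (hdt : HasDerivAt (fun t => w (x, t)) d t)
    (hle : legendreSup w y ρ t₀ (p, t) ≤ w (x, t) - ⟪p, x - y⟫)
    (hpos : 0 < deriv (cutLegendre w y ρ t₀ k p) t) :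
    deriv (cutLegendre w y ρ t₀ k p) t ≤ d := by
  have hdiff := (differentiableAt_of_deriv_ne_zero hpos.ne').hasDerivAt.sub hdt
  refine sub_nonpos.1 (hasDerivAt_nonpos_of_eventually_le_left hdiff ?_)
  filter_upwards [Ioo_mem_nhdsLT ht] with s hs
  have hs_le : w (x, s) - ⟪p, x - y⟫ ≤ cutLegendre w y ρ t₀ k p s :=
    (sub_inner_le_legendreSup hw hx ⟨hs.1.le, le_rfl⟩).trans (le_max_left _ _)
  rw [Pi.sub_apply, Pi.sub_apply, (cutLegendre_eq_of_deriv_pos hpos).2]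
  linarith

theorem abs_inner_sub_le_mul (hp : ‖p‖ ≤ κ) (hx : x ∈ closedBall y ρ) :
    |⟪p, x - y⟫| ≤ κ * ρ :=
  (abs_real_inner_le_norm _ _).trans
    (mul_le_mul hp (mem_closedBall_iff_norm.1 hx) (norm_nonneg _) ((norm_nonneg _).trans hp))

theorem le_cutLegendre_sub_cutLegendre {m : ℝ} {x₀ : En n} (hw : Continuous w) (hT : t₀ ≤ T)
    (hbot : ∀ x ∈ closedBall y ρ, w (x, t₀) ≤ 0) (hx₀ : x₀ ∈ closedBall y ρ)
    (hm : m ≤ w (x₀, T)) (hp : ‖p‖ ≤ κ) :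
    m - 2 * (κ * ρ) ≤
      cutLegendre w y ρ t₀ (κ * ρ) p T - cutLegendre w y ρ t₀ (κ * ρ) p t₀ := by
  have hρ : 0 ≤ ρ := dist_nonneg.trans hx₀
  have hbottom : cutLegendre w y ρ t₀ (κ * ρ) p t₀ ≤ κ * ρ := by
    refine max_le ?_ le_rfl
    obtain ⟨x, hx, t', ht', heq⟩ := exists_legendreSup_eq (y := y) hw hρ (le_refl t₀) p
    rw [heq, le_antisymm ht'.2 ht'.1]
    linarith [hbot x hx, (abs_le.1 (abs_inner_sub_le_mul hp hx)).1]
  have htop : m - κ * ρ ≤ cutLegendre w y ρ t₀ (κ * ρ) p T := by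
    refine le_trans ?_ ((sub_inner_le_legendreSup hw hx₀ ⟨hT, le_rfl⟩).trans (le_max_left _ _))
    linarith [(abs_le.1 (abs_inner_sub_le_mul hp hx₀)).2]
  linarith

end LegendreTransform

section ParabolicABP

namespace Jet

/-- The contact points: `X = (x, t)` with `x ∈ ball y ρ` where `w` is positive and increasing in
time, has slope less than `κ`, and stays below its tangent plane on
`closedBall y ρ × [t₀, t]`. -/
def contactSet (w : Jet n) (y : En n) (ρ t₀ κ : ℝ) : Set (En n × ℝ) :=
  {X | X.1 ∈ ball y ρ ∧ ‖w.grad X‖ < κ ∧ 0 < w.dt X ∧ 0 < w.val X ∧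
    legendreSup w.val y ρ t₀ (w.grad X, X.2) ≤ w.val X - ⟪w.grad X, X.1 - y⟫}

/-- The Jacobian of `(x, t) ↦ (∇w, w - ∇w · x)`, which the parabolic
Alexandrov–Bakelman–Pucci–Krylov–Tso estimate integrates over the contact set. -/
def jacobian (w : Jet n) (X : En n × ℝ) : ℝ≥0∞ :=
  ENNReal.ofReal |(w.hess X).det| * ENNReal.ofReal (w.dt X)

variable {w : Jet n} {U : Set (En n × ℝ)} {x y p : En n} {ρ t₀ t T κ m : ℝ}

theorem IsJetOn.measurable_jacobian (hw : w.IsJetOn U) : Measurable w.jacobian :=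
  (ENNReal.continuous_ofReal.comp
    (ContinuousLinearMap.continuous_det.comp hw.continuous_hess).abs).measurable.mul
      hw.continuous_dt.measurable.ennreal_ofReal

theorem IsJetOn.measurableSet_contactSet (hw : w.IsJetOn U) (y : En n) (ρ t₀ κ : ℝ) :
    MeasurableSet (w.contactSet y ρ t₀ κ) := by
  have hsup := continuous_legendreSup hw.continuous_val y ρ t₀
  have hgrad := hw.continuous_grad
  have hval := hw.continuous_val
  refine .inter ?_ (.inter ?_ (.inter ?_ (.inter ?_ ?_)))
  · exact (isOpen_ball.preimage continuous_fst).measurableSet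
  · exact (isOpen_lt hgrad.norm continuous_const).measurableSet
  · exact (isOpen_lt continuous_const hw.continuous_dt).measurableSet
  · exact (isOpen_lt continuous_const hval).measurableSet
  · exact (isClosed_le (hsup.comp (hgrad.prodMk continuous_snd)) (by fun_prop)).measurableSet

theorem isLocalMax_of_legendreSup_le (hw : Continuous w.val) (hx : x ∈ ball y ρ) (ht : t₀ ≤ t)
    (hle : legendreSup w.val y ρ t₀ (p, t) ≤ w.val (x, t) - ⟪p, x - y⟫) :
    IsLocalMax (fun z => w.val (z, t) - ⟪p, z - y⟫) x := by
  filter_upwards [isOpen_ball.mem_nhds hx] with z hz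
  exact (sub_inner_le_legendreSup hw (ball_subset_closedBall hz) ⟨ht, le_rfl⟩).trans hle

theorem IsJetOn.isPositive_neg_hess_of_mem_contactSet (hw : w.IsJetOn (ball y ρ ×ˢ Ioo t₀ T))
    (ht : t ∈ Ioo t₀ T) (hX : (x, t) ∈ w.contactSet y ρ t₀ κ) : (-w.hess (x, t)).IsPositive := by
  obtain ⟨hx, -, -, -, hle⟩ := hX
  refine isPositive_neg_hess_of_isLocalMax_sub_inner ?_ (hw.hasFDerivAt_grad (x, t) ⟨hx, ht⟩)
    (isLocalMax_of_legendreSup_le hw.continuous_val hx ht.1.le hle)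
  filter_upwards [isOpen_ball.mem_nhds hx] with z hz using hw.hasGradientAt (z, t) ⟨hz, ht⟩

theorem IsJetOn.exists_mem_contactSet (hw : w.IsJetOn (ball y ρ ×ˢ Ioo t₀ T)) (hρ : 0 ≤ ρ)
    (hlat : ∀ x ∈ sphere y ρ, ∀ t ∈ Icc t₀ T, w.val (x, t) ≤ 0) (hp : ‖p‖ < κ)
    (ht : t ∈ Ioo t₀ T) (hd : 0 < deriv (cutLegendre w.val y ρ t₀ (κ * ρ) p) t) :
    ∃ x, (x, t) ∈ w.contactSet y ρ t₀ κ ∧ w.grad (x, t) = p := by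
  obtain ⟨hlt, -⟩ := cutLegendre_eq_of_deriv_pos hd
  obtain ⟨x, hx, t', ht', heq⟩ := exists_legendreSup_eq (y := y) hw.continuous_val hρ ht.1.le p
  obtain rfl : t' = t := by
    by_contra hne
    exact hd.not_ge (deriv_cutLegendre_nonpos_of_attained_before hw.continuous_val hx ht'.1
      (lt_of_le_of_ne ht'.2 hne) heq)
  have hpos : 0 < w.val (x, t') := by
    linarith [(abs_le.1 (abs_inner_sub_le_mul hp.le hx)).1]
  have hball : x ∈ ball y ρ := lt_of_le_of_ne hx fun hsphere =>
    hpos.not_ge (hlat x hsphere t' (Ioo_subset_Icc_self ht))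
  have hgrad : w.grad (x, t') = p := gradient_eq_of_isLocalMax_sub_inner
    (hw.hasGradientAt (x, t') ⟨hball, ht⟩)
    (isLocalMax_of_legendreSup_le hw.continuous_val hball ht.1.le heq.le)
  have hdt : 0 < w.dt (x, t') := hd.trans_le <| deriv_cutLegendre_le hw.continuous_val hx ht.1
    (hw.hasDerivAt_dt (x, t') ⟨hball, ht⟩) heq.le hd
  exact ⟨x, ⟨hball, hgrad.symm ▸ hp, hdt, hpos, hgrad.symm ▸ heq.le⟩, hgrad⟩

theorem IsJetOn.lintegral_deriv_cutLegendre_le (hw : w.IsJetOn (ball y ρ ×ˢ Ioo t₀ T))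
    (hρ : 0 ≤ ρ) (hlat : ∀ x ∈ sphere y ρ, ∀ t ∈ Icc t₀ T, w.val (x, t) ≤ 0)
    (ht : t ∈ Ioo t₀ T) :
    ∫⁻ p in ball (0 : En n) κ, ENNReal.ofReal (deriv (cutLegendre w.val y ρ t₀ (κ * ρ) p) t) ≤
      ∫⁻ x, (w.contactSet y ρ t₀ κ).indicator w.jacobian (x, t) := by
  set f := cutLegendre w.val y ρ t₀ (κ * ρ)
  set φ := (ball (0 : En n) κ).indicator fun p => ENNReal.ofReal (deriv (f p) t)
  set C := (fun x => (x, t)) ⁻¹' w.contactSet y ρ t₀ κ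
  have hC : MeasurableSet C :=
    (by fun_prop : Measurable fun x : En n => (x, t)) (hw.measurableSet_contactSet y ρ t₀ κ)
  have hφ : Measurable φ :=
    ((measurable_deriv_cutLegendre hw.continuous_val).ennreal_ofReal.comp
      (by fun_prop : Measurable fun p : En n => (p, t))).indicator measurableSet_ball
  have hsupp : Function.support φ ⊆ (fun x => w.grad (x, t)) '' C := by
    intro p hp
    obtain ⟨hball, hpos⟩ := indicator_apply_ne_zero.1 hp
    exact hw.exists_mem_contactSet hρ hlat (mem_ball_zero_iff.1 hball) ht
      (ENNReal.ofReal_ne_zero_iff.1 hpos)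
  have hφ_le (x) (hx : x ∈ C) : φ (w.grad (x, t)) ≤ ENNReal.ofReal (w.dt (x, t)) := by
    obtain ⟨hball, -, hdt, -, hle⟩ := hx
    refine (indicator_le_self _ _ _).trans (ENNReal.ofReal_le_ofReal ?_)
    rcases le_or_gt (deriv (f (w.grad (x, t))) t) 0 with hd | hd
    · exact hd.trans hdt.le
    · exact deriv_cutLegendre_le hw.continuous_val (ball_subset_closedBall hball) ht.1
        (hw.hasDerivAt_dt (x, t) ⟨hball, ht⟩) hle hd
  have hgrad := hw.continuous_grad
  have hhess := hw.continuous_hess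
  calc ∫⁻ p in ball (0 : En n) κ, ENNReal.ofReal (deriv (f p) t)
      = ∫⁻ p, φ p := (lintegral_indicator measurableSet_ball _).symm
    _ ≤ ∫⁻ x in C, ENNReal.ofReal |(w.hess (x, t)).det| * φ (w.grad (x, t)) :=
        lintegral_le_lintegral_abs_det_of_support_subset_image volume hC (by fun_prop)
          (fun x hx => hw.hasFDerivAt_grad (x, t) ⟨hx.1, ht⟩) (by fun_prop) hφ hsupp
    _ ≤ ∫⁻ x in C, w.jacobian (x, t) :=
        setLIntegral_mono' hC fun x hx => mul_le_mul_right (hφ_le x hx) _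
    _ = ∫⁻ x, (w.contactSet y ρ t₀ κ).indicator w.jacobian (x, t) :=
        (lintegral_indicator hC _).symm

theorem IsJetOn.exists_time_lipschitz (hw : w.IsJetOn (closedBall y ρ ×ˢ Ioo t₀ T)) :
    ∃ L, 0 ≤ L ∧ ∀ x ∈ closedBall y ρ, ∀ t ∈ Icc t₀ T, ∀ t' ∈ Icc t₀ T, t ≤ t' →
      w.val (x, t') - w.val (x, t) ≤ L * (t' - t) := by
  obtain ⟨L, hL⟩ := ((isCompact_closedBall y ρ).prod isCompact_Icc).exists_bound_of_continuousOn
    (s := closedBall y ρ ×ˢ Icc t₀ T) hw.continuous_dt.continuousOn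
  refine ⟨max L 0, le_max_right _ _, fun x hx => ?_⟩
  have hval := hw.continuous_val
  have hder (t) (ht : t ∈ Ioo t₀ T) := hw.hasDerivAt_dt (x, t) ⟨hx, ht⟩
  refine (convex_Icc t₀ T).image_sub_le_mul_sub_of_deriv_le (f := fun t => w.val (x, t))
    (by fun_prop) ?_ ?_ <;> rw [interior_Icc]
  · exact fun t ht => (hder t ht).differentiableAt.differentiableWithinAt
  · intro t ht
    rw [(hder t ht).deriv]
    exact (le_abs_self _).trans
      ((hL (x, t) ⟨hx, Ioo_subset_Icc_self ht⟩).trans (le_max_left _ _))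

theorem IsJetOn.ofReal_le_lintegral_deriv_cutLegendre {x₀ : En n}
    (hw : w.IsJetOn (closedBall y ρ ×ˢ Ioo t₀ T)) (hT : t₀ ≤ T)
    (hbot : ∀ x ∈ closedBall y ρ, w.val (x, t₀) ≤ 0) (hx₀ : x₀ ∈ closedBall y ρ)
    (hm : m ≤ w.val (x₀, T)) (hp : ‖p‖ ≤ κ) :
    ENNReal.ofReal (m - 2 * (κ * ρ)) ≤
      ∫⁻ t in Ioo t₀ T, ENNReal.ofReal (deriv (cutLegendre w.val y ρ t₀ (κ * ρ) p) t) := by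
  obtain ⟨L, hL, hlip⟩ := hw.exists_time_lipschitz
  set f := cutLegendre w.val y ρ t₀ (κ * ρ) p
  have hac : AbsolutelyContinuousOnInterval f t₀ T := by
    refine LipschitzOnWith.absolutelyContinuousOnInterval (K := L.toNNReal) ?_
    rw [uIcc_of_le hT]
    exact lipschitzOnWith_cutLegendre hw.continuous_val (dist_nonneg.trans hx₀) hL hlip
  have hint : ∫ t in Ioo t₀ T, deriv f t = f T - f t₀ := by
    rw [← hac.integral_deriv_eq_sub, intervalIntegral.integral_of_le hT,
      integral_Ioc_eq_integral_Ioo]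
  have hintegrable : IntegrableOn (deriv f) (Ioo t₀ T) :=
    (intervalIntegrable_iff_integrableOn_Ioo_of_le hT).1 hac.intervalIntegrable_deriv
  refine ENNReal.ofReal_le_of_le_toReal ?_
  calc m - 2 * (κ * ρ) ≤ f T - f t₀ :=
        le_cutLegendre_sub_cutLegendre hw.continuous_val hT hbot hx₀ hm hp
    _ ≤ (∫⁻ t in Ioo t₀ T, ENNReal.ofReal (deriv f t)).toReal := by
        rw [← hint, integral_eq_lintegral_pos_part_sub_lintegral_neg_part hintegrable]
        exact sub_le_self _ ENNReal.toReal_nonneg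

/-- The parabolic Alexandrov–Bakelman–Pucci–Krylov–Tso estimate. -/
theorem IsJetOn.ofReal_mul_volume_ball_le_lintegral_jacobian {x₀ : En n}
    (hw : w.IsJetOn (closedBall y ρ ×ˢ Ioo t₀ T)) (hT : t₀ ≤ T)
    (hbot : ∀ x ∈ closedBall y ρ, w.val (x, t₀) ≤ 0)
    (hlat : ∀ x ∈ sphere y ρ, ∀ t ∈ Icc t₀ T, w.val (x, t) ≤ 0) (hx₀ : x₀ ∈ closedBall y ρ)
    (hm : m ≤ w.val (x₀, T)) :
    ENNReal.ofReal (m - 2 * (κ * ρ)) * volume (ball (0 : En n) κ) ≤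
      ∫⁻ x, ∫⁻ t in Ioo t₀ T, (w.contactSet y ρ t₀ κ).indicator w.jacobian (x, t) := by
  set f := cutLegendre w.val y ρ t₀ (κ * ρ)
  have hf : Measurable fun q : En n × ℝ => ENNReal.ofReal (deriv (f q.1) q.2) :=
    (measurable_deriv_cutLegendre hw.continuous_val).ennreal_ofReal
  have hJ : Measurable ((w.contactSet y ρ t₀ κ).indicator w.jacobian) :=
    hw.measurable_jacobian.indicator (hw.measurableSet_contactSet y ρ t₀ κ)
  calc ENNReal.ofReal (m - 2 * (κ * ρ)) * volume (ball (0 : En n) κ)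
      = ∫⁻ p in ball (0 : En n) κ, ENNReal.ofReal (m - 2 * (κ * ρ)) := by rw [setLIntegral_const]
    _ ≤ ∫⁻ p in ball (0 : En n) κ, ∫⁻ t in Ioo t₀ T, ENNReal.ofReal (deriv (f p) t) :=
        setLIntegral_mono' measurableSet_ball fun p hp =>
          hw.ofReal_le_lintegral_deriv_cutLegendre hT hbot hx₀ hm (mem_ball_zero_iff.1 hp).le
    _ = ∫⁻ t in Ioo t₀ T, ∫⁻ p in ball (0 : En n) κ, ENNReal.ofReal (deriv (f p) t) :=
        lintegral_lintegral_swap hf.aemeasurable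
    _ ≤ ∫⁻ t in Ioo t₀ T, ∫⁻ x, (w.contactSet y ρ t₀ κ).indicator w.jacobian (x, t) :=
        setLIntegral_mono' measurableSet_Ioo fun t ht =>
          (hw.mono (prod_mono_left ball_subset_closedBall)).lintegral_deriv_cutLegendre_le
            (dist_nonneg.trans hx₀) hlat ht
    _ = _ := lintegral_lintegral_swap (hJ.comp measurable_swap).aemeasurable

end Jet

end ParabolicABP

theorem setLIntegral_neg_deriv_le {V V' : ℝ → ℝ} {R : Set ℝ} {t₀ c d : ℝ} (hR : MeasurableSet R)
    (hR_sub : R ⊆ Ici t₀) (hV : ∀ t ∈ R, HasDerivAt V (V' t) t) (hneg : ∀ t ∈ R, V' t < 0)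
    (hmem : ∀ t ∈ R, V t ∈ Icc c d) (hmin : ∀ t ∈ R, ∀ s ∈ Icc t₀ t, V t ≤ V s) :
    ∫⁻ t in R, ENNReal.ofReal (-V' t) ≤ ENNReal.ofReal (d - c) := by
  have hlt (t₁) (h₁ : t₁ ∈ R) (t₂) (h₂ : t₂ ∈ R) (h₁₂ : t₁ < t₂) : V t₂ < V t₁ := by
    refine lt_of_le_of_ne (hmin t₂ h₂ t₁ ⟨hR_sub h₁, h₁₂.le⟩) fun heq => (hneg t₁ h₁).not_ge ?_
    have hslope : Filter.Tendsto (slope V t₁) (nhdsWithin t₁ (Ioi t₁)) (nhds (V' t₁)) :=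
      (hasDerivAt_iff_tendsto_slope.1 (hV t₁ h₁)).mono_left
        (nhdsWithin_mono _ fun s hs => ne_of_gt hs)
    refine ge_of_tendsto hslope ?_
    filter_upwards [Ioo_mem_nhdsGT h₁₂] with s hs
    rw [slope_def_field, ← heq]
    exact div_nonneg (sub_nonneg.2 (hmin t₂ h₂ s ⟨(hR_sub h₁).trans hs.1.le, hs.2.le⟩))
      (sub_nonneg.2 hs.1.le)
  have hinj : InjOn V R := StrictAntiOn.injOn fun t₁ h₁ t₂ h₂ => hlt t₁ h₁ t₂ h₂
  have harea := lintegral_abs_det_fderiv_eq_addHaar_image volume hR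
    (fun t ht => (hV t ht).hasFDerivAt.hasFDerivWithinAt) hinj
  calc ∫⁻ t in R, ENNReal.ofReal (-V' t)
      = ∫⁻ t in R, ENNReal.ofReal |(ContinuousLinearMap.toSpanSingleton ℝ (V' t)).det| :=
        setLIntegral_congr_fun hR fun t ht => by simp [abs_of_neg (hneg t ht)]
    _ = volume (V '' R) := harea
    _ ≤ volume (Icc c d) := measure_mono (image_subset_iff.2 hmem)
    _ = ENNReal.ofReal (d - c) := Real.volume_Icc

section Barrier

namespace Jet

/-- The stationary barrier `exp (-α ‖x - y‖² / ρ²) - exp (-α)`, which vanishes on `∂B_ρ(y)`. Once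
`α` is large it is a strict subsolution of `-u_t + a_{ij} D_{ij} u = 0` outside `B_{ρ/2}(y)`. -/
def gaussian (α ρ : ℝ) (y : En n) : Jet n where
  val X := Real.exp (-(α / ρ ^ 2) * ‖X.1 - y‖ ^ 2) - Real.exp (-α)
  grad X := (-(2 * α / ρ ^ 2) * Real.exp (-(α / ρ ^ 2) * ‖X.1 - y‖ ^ 2)) • (X.1 - y)
  hess X := (-(2 * α / ρ ^ 2) * Real.exp (-(α / ρ ^ 2) * ‖X.1 - y‖ ^ 2)) •
      ContinuousLinearMap.id ℝ (En n) +
    ((4 * α ^ 2 / ρ ^ 4) * Real.exp (-(α / ρ ^ 2) * ‖X.1 - y‖ ^ 2)) •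
      (innerSL ℝ (X.1 - y)).smulRight (X.1 - y)
  dt _ := 0

/-- The jet of a function `g` of time alone. -/
def ofTime (g : ℝ → ℝ) : Jet n where
  val X := g X.2
  grad _ := 0
  hess _ := 0
  dt X := deriv g X.2

theorem isJetOn_ofTime {g : ℝ → ℝ} (hg : ContDiff ℝ 1 g) (U : Set (En n × ℝ)) :
    (ofTime g).IsJetOn U where
  continuous_val := hg.continuous.comp continuous_snd
  continuous_grad := continuous_const
  continuous_hess := continuous_const
  continuous_dt := (hg.continuous_deriv le_rfl).comp continuous_snd
  hasGradientAt X _ := hasGradientAt_const X.1 (g X.2)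
  hasFDerivAt_grad X _ := hasFDerivAt_const 0 X.1
  hasDerivAt_dt X _ := (hg.differentiable one_ne_zero X.2).hasDerivAt

variable {α ρ ν : ℝ} {y : En n} {X : En n × ℝ}

theorem hasFDerivAt_exp_neg_mul_norm_sub_sq (k : ℝ) (y x : En n) :
    HasFDerivAt (fun x => Real.exp (-k * ‖x - y‖ ^ 2))
      ((-(2 * k) * Real.exp (-k * ‖x - y‖ ^ 2)) • innerSL ℝ (x - y)) x := by
  refine ((((hasFDerivAt_id x).sub_const y).norm_sq.const_mul (-k)).exp).congr_fderiv ?_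
  ext z
  simp only [smul_apply, id, ContinuousLinearMap.comp_id, innerSL_apply_apply, smul_eq_mul,
    nsmul_eq_mul]
  push_cast
  ring

theorem isJetOn_gaussian (α ρ : ℝ) (y : En n) (U : Set (En n × ℝ)) :
    (gaussian α ρ y).IsJetOn U where
  continuous_val := by unfold gaussian; fun_prop
  continuous_grad := by unfold gaussian; fun_prop
  continuous_hess := by
    have hinner : Continuous fun X : En n × ℝ => innerSL ℝ (X.1 - y) :=
      (innerSL ℝ).continuous.comp (by fun_prop)
    have hrank : Continuous fun X : En n × ℝ => (innerSL ℝ (X.1 - y)).smulRight (X.1 - y) :=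
      ((ContinuousLinearMap.smulRightL ℝ (En n) (En n)).continuous.comp hinner).clm_apply
        (by fun_prop)
    unfold gaussian
    fun_prop
  continuous_dt := continuous_const
  hasGradientAt X _ := by
    refine hasGradientAt_iff_hasFDerivAt.2
      (((hasFDerivAt_exp_neg_mul_norm_sub_sq (α / ρ ^ 2) y X.1).sub_const _).congr_fderiv ?_)
    ext z
    simp only [gaussian, map_smul, smul_apply, InnerProductSpace.toDual_apply_apply,
      innerSL_apply_apply, smul_eq_mul]
    ring
  hasFDerivAt_grad X _ := by
    refine (((hasFDerivAt_exp_neg_mul_norm_sub_sq (α / ρ ^ 2) y X.1).const_mul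
      (-(2 * α / ρ ^ 2))).smul ((hasFDerivAt_id X.1).sub_const y)).congr_fderiv ?_
    ext z i
    simp [gaussian]
    ring
  hasDerivAt_dt X _ := hasDerivAt_const X.2 ((gaussian α ρ y).val X)

theorem exp_neg_mul_norm_sub_sq_le_one (hα : 0 ≤ α) (x : En n) :
    Real.exp (-(α / ρ ^ 2) * ‖x - y‖ ^ 2) ≤ 1 :=
  Real.exp_le_one_iff.2 (by rw [neg_mul, neg_nonpos]; positivity)

theorem gaussian_val_le_one (hα : 0 ≤ α) : (gaussian α ρ y).val X ≤ 1 :=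
  (sub_le_self _ (Real.exp_pos _).le).trans (exp_neg_mul_norm_sub_sq_le_one hα X.1)

theorem gaussian_val_eq_zero (hρ : ρ ≠ 0) (hX : X.1 ∈ sphere y ρ) : (gaussian α ρ y).val X = 0 := by
  change Real.exp (-(α / ρ ^ 2) * ‖X.1 - y‖ ^ 2) - Real.exp (-α) = 0
  rw [mem_sphere_iff_norm.1 hX, neg_mul, div_mul_cancel₀ _ (pow_ne_zero 2 hρ), sub_self]

/-- The minimum of `Jet.gaussian α ρ y` over the ball of radius `3ρ/4`. -/
def gaussianInf (α : ℝ) : ℝ := Real.exp (-(9 / 16 * α)) - Real.exp (-α)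

theorem gaussianInf_pos (hα : 0 < α) : 0 < gaussianInf α :=
  sub_pos.2 (Real.exp_lt_exp.2 (by linarith))

theorem gaussianInf_le_one (hα : 0 ≤ α) : gaussianInf α ≤ 1 :=
  (sub_le_self _ (Real.exp_pos _).le).trans (Real.exp_le_one_iff.2 (by linarith))

theorem gaussianInf_le_gaussian_val (hα : 0 ≤ α) (hρ : 0 < ρ)
    (hX : X.1 ∈ closedBall y (3 / 4 * ρ)) : gaussianInf α ≤ (gaussian α ρ y).val X := by
  refine sub_le_sub_right (Real.exp_le_exp.2 ?_) _
  have hdist : α / ρ ^ 2 * ‖X.1 - y‖ ^ 2 ≤ α / ρ ^ 2 * (3 / 4 * ρ) ^ 2 := by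
    gcongr
    exact mem_closedBall_iff_norm.1 hX
  have hval : α / ρ ^ 2 * (3 / 4 * ρ) ^ 2 = 9 / 16 * α := by field_simp; ring
  linarith

theorem norm_gaussian_grad_le (hα : 0 ≤ α) (hρ : 0 < ρ) (hX : X.1 ∈ closedBall y ρ) :
    ‖(gaussian α ρ y).grad X‖ ≤ 2 * α / ρ := by
  rw [gaussian, norm_smul, norm_mul, norm_neg, Real.norm_of_nonneg (by positivity),
    Real.norm_of_nonneg (Real.exp_pos _).le]
  calc 2 * α / ρ ^ 2 * Real.exp (-(α / ρ ^ 2) * ‖X.1 - y‖ ^ 2) * ‖X.1 - y‖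
      ≤ 2 * α / ρ ^ 2 * 1 * ρ := by
        gcongr
        exacts [exp_neg_mul_norm_sub_sq_le_one hα X.1, mem_closedBall_iff_norm.1 hX]
    _ = 2 * α / ρ := by field_simp

theorem hessTrace_gaussian_hess (A : Matrix (Fin n) (Fin n) ℝ) :
    hessTrace A ((gaussian α ρ y).hess X) = Real.exp (-(α / ρ ^ 2) * ‖X.1 - y‖ ^ 2) *
      ((4 * α ^ 2 / ρ ^ 4) * hessTrace A ((innerSL ℝ (X.1 - y)).smulRight (X.1 - y)) -
        (2 * α / ρ ^ 2) * A.trace) := by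
  simp only [gaussian, map_add, map_smul, hessTrace_id, smul_eq_mul]
  ring

variable {A : Matrix (Fin n) (Fin n) ℝ}

theorem neg_le_hessTrace_gaussian_hess (hν : 0 ≤ ν) (hA : IsElliptic ν A) (hα : 0 ≤ α) :
    -(2 * α * n * ν) / ρ ^ 2 ≤ hessTrace A ((gaussian α ρ y).hess X) := by
  have hrank : 0 ≤ hessTrace A ((innerSL ℝ (X.1 - y)).smulRight (X.1 - y)) :=
    le_trans (by positivity) (hA.inv_mul_sq_norm_le _)
  have htrace := hA.trace_le hν
  have hexp : Real.exp (-(α / ρ ^ 2) * ‖X.1 - y‖ ^ 2) * (2 * α / ρ ^ 2 * (n * ν)) ≤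
      1 * (2 * α / ρ ^ 2 * (n * ν)) := by
    gcongr
    exact exp_neg_mul_norm_sub_sq_le_one hα X.1
  calc -(2 * α * n * ν) / ρ ^ 2 = -(1 * (2 * α / ρ ^ 2 * (n * ν))) := by ring
    _ ≤ -(Real.exp (-(α / ρ ^ 2) * ‖X.1 - y‖ ^ 2) * (2 * α / ρ ^ 2 * (n * ν))) :=
        neg_le_neg hexp
    _ = Real.exp (-(α / ρ ^ 2) * ‖X.1 - y‖ ^ 2) *
          (4 * α ^ 2 / ρ ^ 4 * 0 - 2 * α / ρ ^ 2 * (n * ν)) := by ring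
    _ ≤ hessTrace A ((gaussian α ρ y).hess X) := by
        rw [hessTrace_gaussian_hess]
        gcongr

/-- The exponent that makes `Jet.gaussian` a subsolution outside the half ball for all coefficient
matrices of ellipticity `ν`. -/
def barrierExponent (n : ℕ) (ν : ℝ) : ℝ := 2 * ν * (n * ν + 1)

theorem two_le_barrierExponent (n : ℕ) (hν : 1 ≤ ν) : 2 ≤ barrierExponent n ν := by
  have : 0 ≤ (n : ℝ) * ν := by positivity
  unfold barrierExponent
  nlinarith

theorem le_hessTrace_gaussian_hess (hν : 0 < ν) (hA : IsElliptic ν A) (hρ : 0 < ρ)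
    (hX : ‖X.1 - y‖ ∈ Icc (ρ / 2) ρ) :
    barrierExponent n ν * Real.exp (-barrierExponent n ν) / ρ ^ 2 ≤
      hessTrace A ((gaussian (barrierExponent n ν) ρ y).hess X) := by
  set α := barrierExponent n ν with hα_def
  have hα : 0 < α := by rw [hα_def, barrierExponent]; positivity
  have htrace := hA.trace_le hν.le
  have hrank : ν⁻¹ * (ρ / 2) ^ 2 ≤ hessTrace A ((innerSL ℝ (X.1 - y)).smulRight (X.1 - y)) := by
    refine le_trans ?_ (hA.inv_mul_sq_norm_le _)
    gcongr
    exact hX.1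
  have hexp : Real.exp (-α) ≤ Real.exp (-(α / ρ ^ 2) * ‖X.1 - y‖ ^ 2) := by
    have : α / ρ ^ 2 * ‖X.1 - y‖ ^ 2 ≤ α / ρ ^ 2 * ρ ^ 2 := by gcongr; exact hX.2
    rw [div_mul_cancel₀ _ (by positivity)] at this
    exact Real.exp_le_exp.2 (by linarith)
  have hbracket : α / ρ ^ 2 ≤ 4 * α ^ 2 / ρ ^ 4 *
      hessTrace A ((innerSL ℝ (X.1 - y)).smulRight (X.1 - y)) - 2 * α / ρ ^ 2 * A.trace :=
    calc α / ρ ^ 2 ≤ 2 * (α / ρ ^ 2) := by linarith [show 0 < α / ρ ^ 2 by positivity]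
      _ = 4 * α ^ 2 / ρ ^ 4 * (ν⁻¹ * (ρ / 2) ^ 2) - 2 * α / ρ ^ 2 * (n * ν) := by
          rw [hα_def, barrierExponent]
          field_simp
          ring
      _ ≤ _ := by gcongr
  rw [hessTrace_gaussian_hess]
  calc α * Real.exp (-α) / ρ ^ 2 = Real.exp (-α) * (α / ρ ^ 2) := by ring
    _ ≤ _ := by gcongr

end Jet

end Barrier

section ContactEstimate

theorem pow_mul_le_of_inv_mul_add_le {ν τ w a b : ℝ} (n : ℕ) (hν : 0 < ν) (hτ : 0 ≤ τ) (hw : 0 ≤ w)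
    (ha : 0 ≤ a) (hb : 0 ≤ b) (h : ν⁻¹ * τ + w ≤ a + b) :
    τ ^ n * w ≤ 2 ^ (n + 1) * ν ^ n * (a ^ (n + 1) + w * b ^ n) := by
  have hτ_le : τ ≤ ν * (a + b) := (inv_mul_le_iff₀ hν).1 (by linarith)
  have hντ : 0 ≤ ν⁻¹ * τ := by positivity
  rcases le_total b a with hba | hab
  · calc τ ^ n * w ≤ (ν * (2 * a)) ^ n * (2 * a) := by
          gcongr
          · exact hτ_le.trans (by gcongr; linarith)
          · linarith
      _ = 2 ^ (n + 1) * ν ^ n * (a ^ (n + 1) + 0) := by ring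
      _ ≤ _ := by gcongr; positivity
  · calc τ ^ n * w ≤ (ν * (2 * b)) ^ n * w := by
          gcongr
          exact hτ_le.trans (by gcongr; linarith)
      _ = 2 ^ n * ν ^ n * (0 + w * b ^ n) := by ring
      _ ≤ _ := by gcongr <;> first | positivity | norm_num

theorem Jet.abs_det_mul_dt_le_of_mem_contactSet {w : Jet n} {y : En n} {ρ t₀ T κ ν f c : ℝ}
    {X : En n × ℝ} {A : Matrix (Fin n) (Fin n) ℝ} (hw : w.IsJetOn (ball y ρ ×ˢ Ioo t₀ T))
    (hν : 0 < ν) (hA : IsElliptic ν A) (ht : X.2 ∈ Ioo t₀ T) (hX : X ∈ w.contactSet y ρ t₀ κ)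
    (hf : 0 ≤ f) (hc : 0 ≤ c) (hLw : w.dt X - hessTrace A (w.hess X) ≤ f + c) :
    |(w.hess X).det| * w.dt X ≤ 2 ^ (n + 1) * ν ^ n * (f ^ (n + 1) + w.dt X * c ^ n) := by
  have hdt : 0 ≤ w.dt X := hX.2.2.1.le
  have hpos : (-w.hess X : En n →L[ℝ] En n).IsPositive :=
    hw.isPositive_neg_hess_of_mem_contactSet ht hX
  have hpos' := ContinuousLinearMap.isPositive_toLinearMap_iff _ |>.2 hpos
  have hdet : |(w.hess X).det| ≤ LinearMap.trace ℝ (En n) ↑(-w.hess X) ^ n := by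
    have := abs_det_le_trace_pow_finrank hpos'
    rwa [ContinuousLinearMap.toLinearMap_neg, ← neg_one_smul ℝ, LinearMap.det_smul, abs_mul,
      abs_neg_one_pow, one_mul, finrank_euclideanSpace_fin, neg_one_smul,
      ← ContinuousLinearMap.toLinearMap_neg] at this
  have htrace := hA.inv_mul_trace_le_hessTrace hpos
  rw [map_neg] at htrace
  calc |(w.hess X).det| * w.dt X ≤ LinearMap.trace ℝ (En n) ↑(-w.hess X) ^ n * w.dt X := by gcongr
    _ ≤ _ := pow_mul_le_of_inv_mul_add_le n hν
        (hpos'.trace_nonneg) hdt hf hc (by linarith)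

end ContactEstimate

section Supersolution

/-- `v` is nonnegative on the closed cylinder and satisfies
`a_{ij} D_{ij} v ≤ v_t + B(x) |∇v|` inside, for some coefficients of ellipticity `ν` depending on
the point. The coefficients and the drift only matter through this inequality, for almost every time
at each `x`; `B` plays the role of `ess sup_t |b|`. -/
structure Jet.IsSupersolution (v : Jet n) (ν : ℝ) (y : En n) (r a s : ℝ) (B : En n → ℝ≥0∞) :
    Prop where
  isJetOn : v.IsJetOn (ball y r ×ˢ Ioo a s)
  nonneg : ∀ X ∈ closedBall y r ×ˢ Icc a s, 0 ≤ v.val X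
  hessTrace_le : ∀ x ∈ ball y r, ∀ᵐ t ∂volume.restrict (Ioo a s), ∃ A, IsElliptic ν A ∧
    ∃ β : NNReal, β ≤ B x ∧ hessTrace A (v.hess (x, t)) ≤ v.dt (x, t) + β * ‖v.grad (x, t)‖

theorem Jet.IsSupersolution.mono_time {v : Jet n} {ν r a s a' s' : ℝ} {y : En n} {B : En n → ℝ≥0∞}
    (hv : v.IsSupersolution ν y r a s B) (ha : a ≤ a') (hs : s' ≤ s) :
    v.IsSupersolution ν y r a' s' B where
  isJetOn := hv.isJetOn.mono (prod_mono_right (Ioo_subset_Ioo ha hs))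
  nonneg X hX := hv.nonneg X (prod_mono_right (Icc_subset_Icc ha hs) hX)
  hessTrace_le x hx :=
    ae_mono (Measure.restrict_mono (Ioo_subset_Ioo ha hs) le_rfl) (hv.hessTrace_le x hx)

theorem Jet.IsSupersolution.const_smul {v : Jet n} {ν r a s c : ℝ} {y : En n} {B : En n → ℝ≥0∞}
    (hv : v.IsSupersolution ν y r a s B) (hc : 0 ≤ c) : (c • v).IsSupersolution ν y r a s B where
  isJetOn := hv.isJetOn.const_smul c
  nonneg X hX := mul_nonneg hc (hv.nonneg X hX)
  hessTrace_le x hx := by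
    filter_upwards [hv.hessTrace_le x hx] with t ⟨A, hA, β, hβ, hLv⟩
    refine ⟨A, hA, β, hβ, ?_⟩
    calc hessTrace A (c • v.hess (x, t)) = c * hessTrace A (v.hess (x, t)) := by
          rw [map_smul, smul_eq_mul]
      _ ≤ c * (v.dt (x, t) + β * ‖v.grad (x, t)‖) := by gcongr
      _ = c • v.dt (x, t) + β * ‖c • v.grad (x, t)‖ := by
          rw [norm_smul, Real.norm_of_nonneg hc, smul_eq_mul]
          ring

end Supersolution

theorem sum_half_pow_mul_pow_le {d : ℕ} (hd : d ≠ 0) {J : Finset ℕ} {a K : ℝ} (ha : 0 ≤ a)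
    (hK : 0 ≤ K) (h : ∀ j ∈ J, (1 / 2 : ℝ) ^ j * a ≤ K) :
    ∑ j ∈ J, ((1 / 2 : ℝ) ^ j * a) ^ d ≤ 2 * K ^ d := by
  rcases J.eq_empty_or_nonempty with rfl | hJ
  · rw [Finset.sum_empty]
    positivity
  set k := J.min' hJ
  have hk (j) (hj : j ∈ J) : k ≤ j := J.min'_le j hj
  have hterm (j) (hj : j ∈ J) : ((1 / 2 : ℝ) ^ j * a) ^ d ≤ (1 / 2) ^ (j - k) * K ^ d :=
    calc ((1 / 2 : ℝ) ^ j * a) ^ d = ((1 / 2) ^ (j - k) * ((1 / 2) ^ k * a)) ^ d := by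
          rw [← mul_assoc, ← pow_add, Nat.sub_add_cancel (hk j hj)]
      _ ≤ ((1 / 2) ^ (j - k) * K) ^ d := by
          gcongr
          exact h k (J.min'_mem hJ)
      _ ≤ (1 / 2) ^ (j - k) * K ^ d := by
          rw [mul_pow]
          gcongr
          exact pow_le_of_le_one (by positivity) (pow_le_one₀ (by norm_num) (by norm_num)) hd
  have hsub : J ⊆ Finset.Ico k (J.max' hJ + 1) := fun j hj =>
    Finset.mem_Ico.2 ⟨hk j hj, Nat.lt_succ_of_le (J.le_max' j hj)⟩
  calc ∑ j ∈ J, ((1 / 2 : ℝ) ^ j * a) ^ d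
      ≤ ∑ j ∈ J, (1 / 2) ^ (j - k) * K ^ d := Finset.sum_le_sum hterm
    _ ≤ ∑ j ∈ Finset.Ico k (J.max' hJ + 1), (1 / 2) ^ (j - k) * K ^ d :=
        Finset.sum_le_sum_of_subset_of_nonneg hsub fun _ _ _ => by positivity
    _ = (∑ i ∈ Finset.range (J.max' hJ + 1 - k), (1 / 2 : ℝ) ^ i) * K ^ d := by
        simp only [Finset.sum_Ico_eq_sum_range, add_tsub_cancel_left, Finset.sum_mul]
    _ ≤ 2 * K ^ d := by
        gcongr
        exact sum_geometric_two_le _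

/-- Gaussian barriers of radii `2⁻ʲ * scale` about `center j`, all moved by the same nonpositive
function `time` on `[t₀, T]`. Comparing `v` with many of them at once pays for the drift only once,
because at each point all but one of the contributions of the drift decay geometrically. -/
structure DyadicBarriers (n : ℕ) (t₀ T : ℝ) where
  exponent : ℝ
  scale : ℝ
  center : ℕ → En n
  time : ℝ → ℝ
  exponent_nonneg : 0 ≤ exponent
  scale_pos : 0 < scale
  contDiff_time : ContDiff ℝ 1 time
  time_nonpos : ∀ t ∈ Icc t₀ T, time t ≤ 0

namespace DyadicBarriers

variable {t₀ T : ℝ}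

/-- The radius of the `j`-th barrier. -/
def radius (P : DyadicBarriers n t₀ T) (j : ℕ) : ℝ := (1 / 2) ^ j * P.scale

/-- The `j`-th barrier without its dependence on time. -/
def profile (P : DyadicBarriers n t₀ T) (j : ℕ) : Jet n :=
  Jet.gaussian P.exponent (P.radius j) (P.center j)

/-- The difference of the `j`-th barrier and `v`. -/
def test (P : DyadicBarriers n t₀ T) (v : Jet n) (j : ℕ) : Jet n :=
  P.profile j + Jet.ofTime P.time - v

/-- The set on which the Alexandrov–Bakelman–Pucci estimate for `P.test v j` is used, when the test
function reaches the value `m`. -/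
def contactSet (P : DyadicBarriers n t₀ T) (v : Jet n) (m : ℝ) (j : ℕ) : Set (En n × ℝ) :=
  (P.test v j).contactSet (P.center j) (P.radius j) t₀ (m / (4 * P.radius j))

variable {P : DyadicBarriers n t₀ T} {v : Jet n} {U : Set (En n × ℝ)} {m ν β f r : ℝ} {j N : ℕ}
  {X : En n × ℝ} {y : En n} {B : En n → ℝ≥0∞}

theorem radius_pos (P : DyadicBarriers n t₀ T) (j : ℕ) : 0 < P.radius j :=
  mul_pos (by positivity) P.scale_pos

theorem radius_le_scale (P : DyadicBarriers n t₀ T) (j : ℕ) : P.radius j ≤ P.scale :=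
  mul_le_of_le_one_left P.scale_pos.le (pow_le_one₀ (by norm_num) (by norm_num))

theorem isJetOn_test (P : DyadicBarriers n t₀ T) (hv : v.IsJetOn U) (j : ℕ) :
    (P.test v j).IsJetOn U :=
  ((Jet.isJetOn_gaussian _ _ _ U).add (Jet.isJetOn_ofTime P.contDiff_time U)).sub hv

theorem test_val (P : DyadicBarriers n t₀ T) (v : Jet n) (j : ℕ) (X : En n × ℝ) :
    (P.test v j).val X = (P.profile j).val X + P.time X.2 - v.val X := rfl

theorem test_dt (P : DyadicBarriers n t₀ T) (v : Jet n) (j : ℕ) (X : En n × ℝ) :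
    (P.test v j).dt X = deriv P.time X.2 - v.dt X := by
  change 0 + deriv P.time X.2 - v.dt X = _
  rw [zero_add]

theorem test_grad (P : DyadicBarriers n t₀ T) (v : Jet n) (j : ℕ) (X : En n × ℝ) :
    (P.test v j).grad X = (P.profile j).grad X - v.grad X := by
  change (P.profile j).grad X + 0 - v.grad X = _
  rw [add_zero]

theorem test_hess (P : DyadicBarriers n t₀ T) (v : Jet n) (j : ℕ) (X : En n × ℝ) :
    (P.test v j).hess X = (P.profile j).hess X - v.hess X := by
  change (P.profile j).hess X + 0 - v.hess X = _
  rw [add_zero]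

theorem measurableSet_contactSet (P : DyadicBarriers n t₀ T) (hv : v.IsJetOn U) (m : ℝ) (j : ℕ) :
    MeasurableSet (P.contactSet v m j) :=
  (P.isJetOn_test hv j).measurableSet_contactSet _ _ _ _

theorem deriv_time_sub_dt_pos (hX : X ∈ P.contactSet v m j) : 0 < deriv P.time X.2 - v.dt X := by
  rw [← P.test_dt v j]
  exact hX.2.2.1

theorem radius_mul_norm_grad_le (hX : X ∈ P.contactSet v m j) :
    P.radius j * ‖v.grad X‖ ≤ 2 * P.exponent + m / 4 := by
  have hρ := P.radius_pos j
  have hprofile : ‖(P.profile j).grad X‖ ≤ 2 * P.exponent / P.radius j :=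
    Jet.norm_gaussian_grad_le P.exponent_nonneg hρ (ball_subset_closedBall hX.1)
  have htest : ‖(P.profile j).grad X - v.grad X‖ < m / (4 * P.radius j) := by
    rw [← test_grad]
    exact hX.2.1
  calc P.radius j * ‖v.grad X‖
      ≤ P.radius j * (2 * P.exponent / P.radius j + m / (4 * P.radius j)) := by
        gcongr
        linarith [norm_le_norm_add_norm_sub' (v.grad X) ((P.profile j).grad X),
          norm_sub_rev (v.grad X) ((P.profile j).grad X)]
    _ = 2 * P.exponent + m / 4 := by field_simp

variable {A : Matrix (Fin n) (Fin n) ℝ}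

theorem radius_pow_mul_abs_det_le (hv : v.IsJetOn (ball (P.center j) (P.radius j) ×ˢ Ioo t₀ T))
    (hν : 0 < ν) (hA : IsElliptic ν A) (ht : X.2 ∈ Ioo t₀ T) (hX : X ∈ P.contactSet v m j)
    (hf : 0 ≤ f) (hβ : 0 ≤ β) (hLv : hessTrace A (v.hess X) ≤ v.dt X + β * ‖v.grad X‖)
    (hLP : deriv P.time X.2 - hessTrace A ((P.profile j).hess X) ≤ f) :
    P.radius j ^ n * (|((P.test v j).hess X).det| * (P.test v j).dt X) ≤
      2 ^ (n + 1) * ν ^ n * (P.scale ^ n * f ^ (n + 1) +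
        (deriv P.time X.2 - v.dt X) * β ^ n * ((1 / 2) ^ j * (P.scale * ‖v.grad X‖)) ^ n) := by
  have hρ := P.radius_pos j
  have habs := Jet.abs_det_mul_dt_le_of_mem_contactSet (P.isJetOn_test hv j) hν hA ht hX hf
    (by positivity : 0 ≤ β * ‖v.grad X‖) (by
      rw [test_dt, test_hess, map_sub]
      linarith)
  rw [test_dt] at habs ⊢
  calc P.radius j ^ n * (|((P.test v j).hess X).det| * (deriv P.time X.2 - v.dt X))
      ≤ P.radius j ^ n * (2 ^ (n + 1) * ν ^ n *
          (f ^ (n + 1) + (deriv P.time X.2 - v.dt X) * (β * ‖v.grad X‖) ^ n)) := by gcongr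
    _ = 2 ^ (n + 1) * ν ^ n * (P.radius j ^ n * f ^ (n + 1) +
          (deriv P.time X.2 - v.dt X) * β ^ n * ((1 / 2) ^ j * (P.scale * ‖v.grad X‖)) ^ n) := by
        rw [radius]
        ring
    _ ≤ _ := by
        gcongr
        exact P.radius_le_scale j

theorem sum_radius_pow_mul_abs_det_le (hn : n ≠ 0) {J : Finset ℕ} (hJ : J.Nonempty)
    (hv : ∀ j ∈ J, v.IsJetOn (ball (P.center j) (P.radius j) ×ˢ Ioo t₀ T)) (hν : 0 < ν)
    (hA : IsElliptic ν A) (ht : X.2 ∈ Ioo t₀ T) (hX : ∀ j ∈ J, X ∈ P.contactSet v m j)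
    (hf : 0 ≤ f) (hβ : 0 ≤ β) (hm : 0 ≤ m)
    (hLv : hessTrace A (v.hess X) ≤ v.dt X + β * ‖v.grad X‖)
    (hLP : ∀ j ∈ J, deriv P.time X.2 - hessTrace A ((P.profile j).hess X) ≤ f) :
    ∑ j ∈ J, P.radius j ^ n * (|((P.test v j).hess X).det| * (P.test v j).dt X) ≤
      J.card * (2 ^ (n + 1) * ν ^ n * P.scale ^ n * f ^ (n + 1)) +
        2 ^ (n + 2) * ν ^ n * (2 * P.exponent + m / 4) ^ n * β ^ n *
          (deriv P.time X.2 - v.dt X) := by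
  have hexp := P.exponent_nonneg
  have hscale := P.scale_pos
  obtain ⟨i, hi⟩ := hJ
  have hτ := deriv_time_sub_dt_pos (hX i hi)
  set τ := deriv P.time X.2 - v.dt X
  have hgeom : ∑ j ∈ J, ((1 / 2 : ℝ) ^ j * (P.scale * ‖v.grad X‖)) ^ n ≤
      2 * (2 * P.exponent + m / 4) ^ n := by
    refine sum_half_pow_mul_pow_le hn (by positivity) (by positivity) fun j hj => ?_
    rw [← mul_assoc]
    exact radius_mul_norm_grad_le (hX j hj)
  calc ∑ j ∈ J, P.radius j ^ n * (|((P.test v j).hess X).det| * (P.test v j).dt X)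
      ≤ ∑ j ∈ J, 2 ^ (n + 1) * ν ^ n * (P.scale ^ n * f ^ (n + 1) +
          τ * β ^ n * ((1 / 2) ^ j * (P.scale * ‖v.grad X‖)) ^ n) :=
        Finset.sum_le_sum fun j hj =>
          radius_pow_mul_abs_det_le (hv j hj) hν hA ht (hX j hj) hf hβ hLv (hLP j hj)
    _ = J.card * (2 ^ (n + 1) * ν ^ n * P.scale ^ n * f ^ (n + 1)) + 2 ^ (n + 1) * ν ^ n * τ *
          β ^ n * ∑ j ∈ J, ((1 / 2 : ℝ) ^ j * (P.scale * ‖v.grad X‖)) ^ n := by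
        simp only [← Finset.mul_sum, Finset.sum_add_distrib, Finset.sum_const, nsmul_eq_mul]
        ring
    _ ≤ J.card * (2 ^ (n + 1) * ν ^ n * P.scale ^ n * f ^ (n + 1)) + 2 ^ (n + 1) * ν ^ n * τ *
          β ^ n * (2 * (2 * P.exponent + m / 4) ^ n) := by gcongr
    _ = _ := by ring

theorem sum_radius_pow_mul_indicator_jacobian_le (hn : n ≠ 0) {N : ℕ}
    (hv : ∀ j < N, v.IsJetOn (ball (P.center j) (P.radius j) ×ˢ Ioo t₀ T)) (hν : 0 < ν)
    (hA : IsElliptic ν A) (ht : X.2 ∈ Ioo t₀ T) (hf : 0 ≤ f) (hβ : 0 ≤ β) (hm : 0 ≤ m)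
    (hLv : hessTrace A (v.hess X) ≤ v.dt X + β * ‖v.grad X‖)
    (hLP : ∀ j < N, X ∈ P.contactSet v m j →
      deriv P.time X.2 - hessTrace A ((P.profile j).hess X) ≤ f) :
    ∑ j ∈ Finset.range N, ENNReal.ofReal (P.radius j ^ n) *
        (P.contactSet v m j).indicator (P.test v j).jacobian X ≤
      ENNReal.ofReal (N * (2 ^ (n + 1) * ν ^ n * P.scale ^ n * f ^ (n + 1))) +
        ENNReal.ofReal (2 ^ (n + 2) * ν ^ n * (2 * P.exponent + m / 4) ^ n * β ^ n) *
          (⋃ j < N, P.contactSet v m j).indicator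
            (fun X => ENNReal.ofReal (deriv P.time X.2 - v.dt X)) X := by
  classical
  have hexp := P.exponent_nonneg
  have hscale := P.scale_pos
  set J := {j ∈ Finset.range N | X ∈ P.contactSet v m j} with hJ_def
  have hJ {j} (hj : j ∈ J) : j < N ∧ X ∈ P.contactSet v m j := by
    simpa only [hJ_def, Finset.mem_filter, Finset.mem_range] using hj
  have hsum : ∑ j ∈ Finset.range N, ENNReal.ofReal (P.radius j ^ n) *
      (P.contactSet v m j).indicator (P.test v j).jacobian X = ENNReal.ofReal
        (∑ j ∈ J, P.radius j ^ n * (|((P.test v j).hess X).det| * (P.test v j).dt X)) := by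
    rw [ENNReal.ofReal_sum_of_nonneg fun j hj => mul_nonneg (pow_nonneg (P.radius_pos j).le n)
      (mul_nonneg (abs_nonneg _) (hJ hj).2.2.2.1.le), hJ_def, Finset.sum_filter]
    refine Finset.sum_congr rfl fun j _ => ?_
    split_ifs with h
    · rw [indicator_of_mem h, Jet.jacobian, ENNReal.ofReal_mul (pow_nonneg (P.radius_pos j).le n),
        ENNReal.ofReal_mul (abs_nonneg _)]
    · rw [indicator_of_notMem h, mul_zero]
  rcases J.eq_empty_or_nonempty with hJe | hJne
  · rw [hsum, hJe, Finset.sum_empty, ENNReal.ofReal_zero]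
    exact zero_le
  obtain ⟨i, hi⟩ := id hJne
  have hτ := deriv_time_sub_dt_pos (hJ hi).2
  have hcard : (J.card : ℝ) ≤ N := by
    exact_mod_cast (Finset.card_filter_le _ _).trans_eq (Finset.card_range N)
  rw [hsum, indicator_of_mem (mem_iUnion₂.2 ⟨i, (hJ hi).1, (hJ hi).2⟩),
    ← ENNReal.ofReal_mul (by positivity), ← ENNReal.ofReal_add (by positivity) (by positivity)]
  refine ENNReal.ofReal_le_ofReal ((sum_radius_pow_mul_abs_det_le hn hJne
    (fun j hj => hv j (hJ hj).1) hν hA ht (fun j hj => (hJ hj).2) hf hβ hm hLv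
    fun j hj => hLP j (hJ hj).1 (hJ hj).2).trans ?_)
  gcongr

theorem val_sub_time_le_of_mem_contactSet (hv : v.IsJetOn U) (hX : X ∈ P.contactSet v m j) {t : ℝ}
    (ht : t ∈ Icc t₀ X.2) : v.val X - P.time X.2 ≤ v.val (X.1, t) - P.time t := by
  have hle : (P.test v j).val (X.1, t) - ⟪(P.test v j).grad X, X.1 - P.center j⟫ ≤
      (P.test v j).val X - ⟪(P.test v j).grad X, X.1 - P.center j⟫ :=
    (sub_inner_le_legendreSup (P.isJetOn_test hv j).continuous_val (ball_subset_closedBall hX.1)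
      ht).trans hX.2.2.2.2
  have hprofile : (P.profile j).val (X.1, t) = (P.profile j).val X := rfl
  rw [test_val, test_val, hprofile] at hle
  linarith

theorem setLIntegral_deriv_time_sub_dt_le (hv : v.IsSupersolution ν y r t₀ T B) (N : ℕ)
    (hsub : ∀ j < N, closedBall (P.center j) (P.radius j) ⊆ ball y r) (x : En n) :
    ∫⁻ t in Ioo t₀ T, (⋃ j < N, P.contactSet v m j).indicator
      (fun X => ENNReal.ofReal (deriv P.time X.2 - v.dt X)) (x, t) ≤ 1 := by
  set E := ⋃ j < N, P.contactSet v m j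
  have hE : MeasurableSet (Prod.mk x ⁻¹' E) := measurable_prodMk_left
    (.iUnion fun j => .iUnion fun _ => P.measurableSet_contactSet hv.isJetOn m j)
  have hmem {t} (ht : t ∈ Prod.mk x ⁻¹' E) : ∃ j < N, (x, t) ∈ P.contactSet v m j := by
    simpa only [E, mem_preimage, mem_iUnion, exists_prop] using ht
  have hball {t} (ht : t ∈ Prod.mk x ⁻¹' E) : x ∈ ball y r := by
    obtain ⟨j, hj, hX⟩ := hmem ht
    exact hsub j hj (ball_subset_closedBall hX.1)
  calc ∫⁻ t in Ioo t₀ T, E.indicator (fun X => ENNReal.ofReal (deriv P.time X.2 - v.dt X)) (x, t)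
      = ∫⁻ t in Prod.mk x ⁻¹' E ∩ Ioo t₀ T,
          ENNReal.ofReal (-(v.dt (x, t) - deriv P.time t)) := by
        rw [← Measure.restrict_restrict hE, ← lintegral_indicator hE]
        simp only [neg_sub]
        rfl
    _ ≤ ENNReal.ofReal (1 - 0) := by
        refine setLIntegral_neg_deriv_le (V := fun t => v.val (x, t) - P.time t)
          (hE.inter measurableSet_Ioo) (fun t ht => ht.2.1.le) (fun t ht => ?_) (fun t ht => ?_)
          (fun t ht => ?_) fun t ht s hs => ?_
        · exact (hv.isJetOn.hasDerivAt_dt (x, t) ⟨hball ht.1, ht.2⟩).sub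
            (P.contDiff_time.differentiable one_ne_zero t).hasDerivAt
        · obtain ⟨j, -, hX⟩ := hmem ht.1
          linarith [deriv_time_sub_dt_pos hX]
        · obtain ⟨j, -, hX⟩ := hmem ht.1
          have hpos : 0 < (P.profile j).val (x, t) + P.time t - v.val (x, t) := hX.2.2.2.1
          have hone : (P.profile j).val (x, t) ≤ 1 := Jet.gaussian_val_le_one P.exponent_nonneg
          have htime := P.time_nonpos t (Ioo_subset_Icc_self ht.2)
          have hval := hv.nonneg (x, t)
            ⟨ball_subset_closedBall (hball ht.1), Ioo_subset_Icc_self ht.2⟩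
          exact ⟨by linarith, by linarith⟩
        · obtain ⟨j, -, hX⟩ := hmem ht.1
          exact val_sub_time_le_of_mem_contactSet hv.isJetOn hX hs
    _ = 1 := by rw [sub_zero, ENNReal.ofReal_one]

theorem measurable_indicator_jacobian (P : DyadicBarriers n t₀ T) (hv : v.IsJetOn U) (m : ℝ)
    (j : ℕ) : Measurable ((P.contactSet v m j).indicator (P.test v j).jacobian) :=
  (P.isJetOn_test hv j).measurable_jacobian.indicator (P.measurableSet_contactSet hv m j)

theorem ae_sum_indicator_jacobian_le (hn : n ≠ 0) (hν : 0 < ν) (hf : 0 ≤ f)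
    {E : Set (En n × ℝ)} (hv : v.IsSupersolution ν y r t₀ T B)
    (hsub : ∀ j < N, closedBall (P.center j) (P.radius j) ⊆ ball y r) (hm : 0 ≤ m)
    (hLP : ∀ j < N, ∀ X ∈ P.contactSet v m j, X.2 ∈ Ioo t₀ T → ∀ A, IsElliptic ν A →
      deriv P.time X.2 - hessTrace A ((P.profile j).hess X) ≤ E.indicator (fun _ => f) X)
    {x : En n} (hx : x ∈ ball y r) :
    ∀ᵐ t ∂volume.restrict (Ioo t₀ T), ∑ j ∈ Finset.range N, ENNReal.ofReal (P.radius j ^ n) *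
        (P.contactSet v m j).indicator (P.test v j).jacobian (x, t) ≤
      ENNReal.ofReal (N * (2 ^ (n + 1) * ν ^ n * P.scale ^ n * f ^ (n + 1))) *
          E.indicator 1 (x, t) +
        ENNReal.ofReal (2 ^ (n + 2) * ν ^ n * (2 * P.exponent + m / 4) ^ n) * B x ^ n *
          (⋃ j < N, P.contactSet v m j).indicator
            (fun X => ENNReal.ofReal (deriv P.time X.2 - v.dt X)) (x, t) := by
  have hexp := P.exponent_nonneg
  filter_upwards [hv.hessTrace_le x hx, ae_restrict_mem measurableSet_Ioo] with t ht hmem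
  obtain ⟨A, hA, β, hβ, hLv⟩ := ht
  refine (sum_radius_pow_mul_indicator_jacobian_le hn
    (fun j hj => hv.isJetOn.mono (prod_mono_left (ball_subset_closedBall.trans (hsub j hj))))
    hν hA hmem (indicator_nonneg (fun _ _ => hf) _) β.coe_nonneg hm hLv
    fun j hj hX => hLP j hj (x, t) hX hmem A hA).trans ?_
  gcongr
  · by_cases h : (x, t) ∈ E <;> simp [h]
  · rw [ENNReal.ofReal_mul (by positivity), ENNReal.ofReal_pow β.coe_nonneg]
    gcongr
    rwa [ENNReal.ofReal_coe_nnreal]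

theorem measurable_indicator_deriv_time_sub_dt (P : DyadicBarriers n t₀ T) (hv : v.IsJetOn U)
    (m : ℝ) (N : ℕ) : Measurable ((⋃ j < N, P.contactSet v m j).indicator
      fun X => ENNReal.ofReal (deriv P.time X.2 - v.dt X)) := by
  have hderiv : Continuous fun X : En n × ℝ => deriv P.time X.2 :=
    (P.contDiff_time.continuous_deriv le_rfl).comp continuous_snd
  exact (hderiv.sub hv.continuous_dt).measurable.ennreal_ofReal.indicator
    (.iUnion fun j => .iUnion fun _ => P.measurableSet_contactSet hv m j)

theorem sum_setLIntegral_indicator_jacobian_le (hn : n ≠ 0) (hν : 0 < ν) (hf : 0 ≤ f)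
    {E : Set (En n × ℝ)} (hE : MeasurableSet E) (hv : v.IsSupersolution ν y r t₀ T B)
    (hsub : ∀ j < N, closedBall (P.center j) (P.radius j) ⊆ ball y r) (hm : 0 ≤ m)
    (hLP : ∀ j < N, ∀ X ∈ P.contactSet v m j, X.2 ∈ Ioo t₀ T → ∀ A, IsElliptic ν A →
      deriv P.time X.2 - hessTrace A ((P.profile j).hess X) ≤ E.indicator (fun _ => f) X)
    {x : En n} (hx : x ∈ ball y r) :
    ∑ j ∈ Finset.range N, ENNReal.ofReal (P.radius j ^ n) *
        ∫⁻ t in Ioo t₀ T, (P.contactSet v m j).indicator (P.test v j).jacobian (x, t) ≤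
      ENNReal.ofReal (N * (2 ^ (n + 1) * ν ^ n * P.scale ^ n * f ^ (n + 1))) *
          (∫⁻ t in Ioo t₀ T, E.indicator 1 (x, t)) +
        ENNReal.ofReal (2 ^ (n + 2) * ν ^ n * (2 * P.exponent + m / 4) ^ n) * B x ^ n := by
  have hmeas (j) :
      Measurable fun t => (P.contactSet v m j).indicator (P.test v j).jacobian (x, t) :=
    (P.measurable_indicator_jacobian hv.isJetOn m j).comp measurable_prodMk_left
  have hmeasτ : Measurable fun t => (⋃ j < N, P.contactSet v m j).indicator
      (fun X => ENNReal.ofReal (deriv P.time X.2 - v.dt X)) (x, t) :=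
    (P.measurable_indicator_deriv_time_sub_dt hv.isJetOn m N).comp measurable_prodMk_left
  have hind : Measurable fun t => E.indicator (1 : En n × ℝ → ℝ≥0∞) (x, t) :=
    (measurable_one.indicator hE).comp measurable_prodMk_left
  calc ∑ j ∈ Finset.range N, ENNReal.ofReal (P.radius j ^ n) *
        ∫⁻ t in Ioo t₀ T, (P.contactSet v m j).indicator (P.test v j).jacobian (x, t)
      = ∫⁻ t in Ioo t₀ T, ∑ j ∈ Finset.range N, ENNReal.ofReal (P.radius j ^ n) *
          (P.contactSet v m j).indicator (P.test v j).jacobian (x, t) := by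
        rw [lintegral_finsetSum _ fun j _ => (hmeas j).const_mul _]
        simp only [lintegral_const_mul _ (hmeas _)]
    _ ≤ _ := lintegral_mono_ae (ae_sum_indicator_jacobian_le hn hν hf hv hsub hm hLP hx)
    _ ≤ _ := by
        rw [lintegral_add_left (hind.const_mul _), lintegral_const_mul _ hind,
          lintegral_const_mul _ hmeasτ]
        refine add_le_add le_rfl ?_
        exact mul_le_of_le_one_right' (setLIntegral_deriv_time_sub_dt_le hv N hsub x)

theorem support_lintegral_indicator_jacobian_subset (P : DyadicBarriers n t₀ T) (v : Jet n) (m : ℝ)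
    (j : ℕ) (I : Set ℝ) : Function.support (fun x => ∫⁻ t in I,
      (P.contactSet v m j).indicator (P.test v j).jacobian (x, t)) ⊆
        ball (P.center j) (P.radius j) := by
  intro x hx
  by_contra hxj
  have hnot (t : ℝ) : (x, t) ∉ P.contactSet v m j := fun hX => hxj hX.1
  exact hx (by simp only [indicator_of_notMem (hnot _), lintegral_zero])

theorem ofReal_mul_volume_unitBall_le (hv : v.IsSupersolution ν y r t₀ T B)
    (hsub : closedBall (P.center j) (P.radius j) ⊆ ball y r) (hm : 0 < m) {x₀ : En n}
    (hx₀ : x₀ ∈ closedBall (P.center j) (P.radius j)) (hT : t₀ ≤ T) (htime : P.time t₀ ≤ -1)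
    (hval : m ≤ (P.test v j).val (x₀, T)) :
    ENNReal.ofReal (m / 2 * (m / 4) ^ n) * volume (ball (0 : En n) 1) ≤
      ENNReal.ofReal (P.radius j ^ n) * ∫⁻ x in ball y r, ∫⁻ t in Ioo t₀ T,
        (P.contactSet v m j).indicator (P.test v j).jacobian (x, t) := by
  have hρ := P.radius_pos j
  have hvnonneg {x t} (hx : x ∈ closedBall (P.center j) (P.radius j)) (ht : t ∈ Icc t₀ T) :
      0 ≤ v.val (x, t) := hv.nonneg (x, t) ⟨ball_subset_closedBall (hsub hx), ht⟩
  have hbot (x) (hx : x ∈ closedBall (P.center j) (P.radius j)) : (P.test v j).val (x, t₀) ≤ 0 := by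
    have hone : (P.profile j).val (x, t₀) ≤ 1 := Jet.gaussian_val_le_one P.exponent_nonneg
    rw [test_val]
    linarith [hvnonneg hx (left_mem_Icc.2 hT)]
  have hlat (x) (hx : x ∈ sphere (P.center j) (P.radius j)) (t) (ht : t ∈ Icc t₀ T) :
      (P.test v j).val (x, t) ≤ 0 := by
    have hzero : (P.profile j).val (x, t) = 0 := Jet.gaussian_val_eq_zero hρ.ne' hx
    rw [test_val]
    linarith [hvnonneg (sphere_subset_closedBall hx) ht, P.time_nonpos t ht]
  have habp : ENNReal.ofReal (m - 2 * (m / (4 * P.radius j) * P.radius j)) *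
      volume (ball (0 : En n) (m / (4 * P.radius j))) ≤ ∫⁻ x in ball y r, ∫⁻ t in Ioo t₀ T,
        (P.contactSet v m j).indicator (P.test v j).jacobian (x, t) := by
    rw [setLIntegral_eq_of_support_subset ((P.support_lintegral_indicator_jacobian_subset v m j
      _).trans (ball_subset_closedBall.trans hsub))]
    exact (P.isJetOn_test (hv.isJetOn.mono (prod_mono_left hsub))
      j).ofReal_mul_volume_ball_le_lintegral_jacobian hT hbot hlat hx₀ hval
  calc ENNReal.ofReal (m / 2 * (m / 4) ^ n) * volume (ball (0 : En n) 1)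
      = ENNReal.ofReal (P.radius j ^ n) * (ENNReal.ofReal (m - 2 * (m / (4 * P.radius j) *
          P.radius j)) * volume (ball (0 : En n) (m / (4 * P.radius j)))) := by
        rw [Measure.addHaar_ball_of_pos _ _ (div_pos hm (by positivity)),
          finrank_euclideanSpace_fin, ← mul_assoc (ENNReal.ofReal (m - _)),
          ← mul_assoc (ENNReal.ofReal (P.radius j ^ n)),
          ← ENNReal.ofReal_mul' (by positivity), ← ENNReal.ofReal_mul (by positivity),
          mul_left_comm, ← mul_pow]
        congr 2
        field_simp
        ring
    _ ≤ _ := mul_le_mul_right habp _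

theorem setLIntegral_setLIntegral_indicator_one_le {E : Set (En n × ℝ)} (hE : MeasurableSet E)
    (U : Set (En n)) (I : Set ℝ) :
    ∫⁻ x in U, ∫⁻ t in I, E.indicator (1 : En n × ℝ → ℝ≥0∞) (x, t) ≤ volume E :=
  calc ∫⁻ x in U, ∫⁻ t in I, E.indicator (1 : En n × ℝ → ℝ≥0∞) (x, t)
      ≤ ∫⁻ x, ∫⁻ t, E.indicator (1 : En n × ℝ → ℝ≥0∞) (x, t) :=
        (setLIntegral_le_lintegral _ _).trans
          (lintegral_mono fun _ => setLIntegral_le_lintegral _ _)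
    _ = volume E := by
        rw [Measure.volume_eq_prod, ← lintegral_indicator_one hE, lintegral_prod _
          (measurable_one.indicator hE).aemeasurable]

theorem ofReal_natCast_mul_volume_unitBall_le (hn : n ≠ 0) (hν : 0 < ν) (hf : 0 ≤ f)
    {E : Set (En n × ℝ)} (hE : MeasurableSet E)
    (hv : v.IsSupersolution ν y r t₀ T B)
    (hsub : ∀ j < N, closedBall (P.center j) (P.radius j) ⊆ ball y r) (hm : 0 < m)
    (hLP : ∀ j < N, ∀ X ∈ P.contactSet v m j, X.2 ∈ Ioo t₀ T → ∀ A, IsElliptic ν A →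
      deriv P.time X.2 - hessTrace A ((P.profile j).hess X) ≤ E.indicator (fun _ => f) X)
    {x₀ : En n} (hx₀ : ∀ j < N, x₀ ∈ closedBall (P.center j) (P.radius j))
    (hT : t₀ ≤ T) (htime : P.time t₀ ≤ -1) (hval : ∀ j < N, m ≤ (P.test v j).val (x₀, T)) :
    ENNReal.ofReal (N * (m / 2 * (m / 4) ^ n)) * volume (ball (0 : En n) 1) ≤
      ENNReal.ofReal (N * (2 ^ (n + 1) * ν ^ n * P.scale ^ n * f ^ (n + 1))) * volume E +
        ENNReal.ofReal (2 ^ (n + 2) * ν ^ n * (2 * P.exponent + m / 4) ^ n) *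
          ∫⁻ x in ball y r, B x ^ n := by
  have hmeas (j) : Measurable fun x => ∫⁻ t in Ioo t₀ T,
      (P.contactSet v m j).indicator (P.test v j).jacobian (x, t) :=
    (P.measurable_indicator_jacobian hv.isJetOn m j).lintegral_prod_right'
  have hind : Measurable fun x => ∫⁻ t in Ioo t₀ T, E.indicator (1 : En n × ℝ → ℝ≥0∞) (x, t) :=
    (measurable_one.indicator hE).lintegral_prod_right'
  calc ENNReal.ofReal (N * (m / 2 * (m / 4) ^ n)) * volume (ball (0 : En n) 1)
      = ∑ _j ∈ Finset.range N,
          ENNReal.ofReal (m / 2 * (m / 4) ^ n) * volume (ball (0 : En n) 1) := by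
        rw [Finset.sum_const, Finset.card_range, nsmul_eq_mul, ENNReal.ofReal_mul (by positivity),
          ENNReal.ofReal_natCast, mul_assoc]
    _ ≤ ∑ j ∈ Finset.range N, ENNReal.ofReal (P.radius j ^ n) * ∫⁻ x in ball y r, ∫⁻ t in Ioo t₀ T,
          (P.contactSet v m j).indicator (P.test v j).jacobian (x, t) :=
        Finset.sum_le_sum fun j hj => by
          have hj := Finset.mem_range.1 hj
          exact ofReal_mul_volume_unitBall_le hv (hsub j hj) hm (hx₀ j hj) hT htime (hval j hj)
    _ = ∫⁻ x in ball y r, ∑ j ∈ Finset.range N, ENNReal.ofReal (P.radius j ^ n) *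
          ∫⁻ t in Ioo t₀ T, (P.contactSet v m j).indicator (P.test v j).jacobian (x, t) := by
        rw [lintegral_finsetSum _ fun j _ => (hmeas j).const_mul _]
        simp only [lintegral_const_mul _ (hmeas _)]
    _ ≤ _ := setLIntegral_mono_ae' measurableSet_ball (.of_forall fun x hx =>
        sum_setLIntegral_indicator_jacobian_le hn hν hf hE hv hsub hm.le hLP hx)
    _ = _ := by
        rw [lintegral_add_left (hind.const_mul _), lintegral_const_mul _ hind, lintegral_const_mul']
        exact ENNReal.ofReal_ne_top
    _ ≤ _ := by
        gcongr
        exact setLIntegral_setLIntegral_indicator_one_le hE _ _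
end DyadicBarriers

/-- `v` is a nonnegative supersolution on `closedBall y r ×ˢ Icc a s` whose drift has
`∫ (ess sup_t |b|)ⁿ dx ≤ S`, the coefficients and the derivatives of `v` being left implicit. -/
def IsNonnegSupersolution (ν S : ℝ) (y : En n) (r a s : ℝ) (v : En n × ℝ → ℝ) : Prop :=
  ∃ (w : Jet n) (B : En n → ℝ≥0∞), w.val = v ∧ w.IsSupersolution ν y r a s B ∧
    ∫⁻ x in ball y r, B x ^ n ≤ ENNReal.ofReal S

namespace IsNonnegSupersolution

variable {ν S r a s c : ℝ} {y : En n} {v : En n × ℝ → ℝ}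

theorem continuous (hv : IsNonnegSupersolution ν S y r a s v) : Continuous v := by
  obtain ⟨w, B, rfl, hw, -⟩ := hv
  exact hw.isJetOn.continuous_val

theorem mono {z : En n} {R a' s' : ℝ} (hv : IsNonnegSupersolution ν S y r a s v)
    (hball : closedBall z R ⊆ ball y r) (ha : a ≤ a') (hs : s' ≤ s) :
    IsNonnegSupersolution ν S z R a' s' v := by
  obtain ⟨w, B, hval, hw, hB⟩ := hv
  have hsub : ball z R ⊆ ball y r := ball_subset_closedBall.trans hball
  refine ⟨w, B, hval, ⟨?_, ?_, ?_⟩, (lintegral_mono_set hsub).trans hB⟩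
  · exact (hw.mono_time ha hs).isJetOn.mono (prod_mono_left hsub)
  · exact fun X hX => (hw.mono_time ha hs).nonneg X
      (prod_mono_left (hball.trans ball_subset_closedBall) hX)
  · exact fun x hx => (hw.mono_time ha hs).hessTrace_le x (hsub hx)

theorem const_mul (hv : IsNonnegSupersolution ν S y r a s v) (hc : 0 ≤ c) :
    IsNonnegSupersolution ν S y r a s (fun X => c * v X) := by
  obtain ⟨w, B, rfl, hw, hB⟩ := hv
  exact ⟨c • w, B, rfl, hw.const_smul hc, hB⟩

end IsNonnegSupersolution

section GrowthTime

/-- The time dependence of the barriers of the growth lemma: it rises by at least one on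
`[t₀ - ρ², t₀]`, and then falls so fast that the barrier is a subsolution after `t₀`, where nothing
is known about `v`. -/
def growthTime (K Λ ρ t₀ T t : ℝ) : ℝ :=
  (t - T) / ρ ^ 2 - K * Real.exp (Λ / (ρ ^ 2 * K) * (t - t₀))

variable {K Λ ρ t₀ T t : ℝ}

theorem contDiff_growthTime (K Λ ρ t₀ T : ℝ) : ContDiff ℝ 1 (growthTime K Λ ρ t₀ T) := by
  unfold growthTime
  fun_prop

theorem deriv_growthTime (hK : K ≠ 0) : deriv (growthTime K Λ ρ t₀ T) t =
    1 / ρ ^ 2 - Λ / ρ ^ 2 * Real.exp (Λ / (ρ ^ 2 * K) * (t - t₀)) := by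
  have h : HasDerivAt (growthTime K Λ ρ t₀ T)
      (1 / ρ ^ 2 - K * (Real.exp (Λ / (ρ ^ 2 * K) * (t - t₀)) * (Λ / (ρ ^ 2 * K) * 1))) t :=
    (((hasDerivAt_id t).sub_const T).div_const _).sub
      (((((hasDerivAt_id t).sub_const t₀).const_mul _).exp).const_mul K)
  rw [h.deriv]
  field_simp

theorem deriv_growthTime_le (hK : K ≠ 0) (hΛ : 0 ≤ Λ) :
    deriv (growthTime K Λ ρ t₀ T) t ≤ 1 / ρ ^ 2 := by
  rw [deriv_growthTime hK]
  exact sub_le_self _ (by positivity)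

theorem deriv_growthTime_le_of_le (hK : 0 < K) (hΛ : 0 ≤ Λ) (ht : t₀ ≤ t) :
    deriv (growthTime K Λ ρ t₀ T) t ≤ (1 - Λ) / ρ ^ 2 := by
  have hexp : 1 ≤ Real.exp (Λ / (ρ ^ 2 * K) * (t - t₀)) :=
    Real.one_le_exp (mul_nonneg (by positivity) (sub_nonneg.2 ht))
  rw [deriv_growthTime hK.ne', sub_div]
  exact sub_le_sub_left (le_mul_of_one_le_right (by positivity) hexp) _

theorem growthTime_neg (hK : 0 < K) (ht : t ≤ T) : growthTime K Λ ρ t₀ T t < 0 := by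
  have hle : (t - T) / ρ ^ 2 ≤ 0 := div_nonpos_of_nonpos_of_nonneg (sub_nonpos.2 ht) (sq_nonneg ρ)
  have hpos : 0 < K * Real.exp (Λ / (ρ ^ 2 * K) * (t - t₀)) := by positivity
  unfold growthTime
  linarith

theorem growthTime_sub_sq_le (hK : 0 ≤ K) (hρ : ρ ≠ 0) (hT : t₀ ≤ T) :
    growthTime K Λ ρ t₀ T (t₀ - ρ ^ 2) ≤ -1 := by
  have hle : (t₀ - ρ ^ 2 - T) / ρ ^ 2 ≤ -1 := by
    rw [div_le_iff₀ (by positivity)]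
    linarith
  exact (sub_le_self _ (by positivity)).trans hle

theorem neg_three_mul_le_growthTime (hK : 0 < K) (hρ : ρ ≠ 0) (hT : Λ * (T - t₀) ≤ K * ρ ^ 2) :
    -(3 * K) ≤ growthTime K Λ ρ t₀ T T := by
  have hexp : Real.exp (Λ / (ρ ^ 2 * K) * (T - t₀)) ≤ 3 := by
    have hle : Λ / (ρ ^ 2 * K) * (T - t₀) ≤ 1 := by
      rw [div_mul_eq_mul_div, div_le_one (by positivity)]
      linarith
    exact (Real.exp_le_exp.2 hle).trans (Real.exp_one_lt_d9.le.trans (by norm_num))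
  have hmul := mul_le_mul_of_nonneg_left hexp hK.le
  unfold growthTime
  rw [sub_self, zero_div]
  linarith

end GrowthTime

section GrowthLemma

open Jet

/-- The ratio of the largest radius in the family of barriers of the growth lemma to the radius of
the cylinder. -/
def barrierScale (n : ℕ) (ν : ℝ) : ℝ :=
  min 1 (barrierExponent n ν * Real.exp (-barrierExponent n ν))

/-- The number `D` such that the barriers of radius `R` of the growth lemma satisfy
`∂ₜ - a_{ij} D_{ij} ≤ D / R²`. -/
def barrierForcing (n : ℕ) (ν : ℝ) : ℝ := 2 * barrierExponent n ν * n * ν + 1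

/-- The lower bound for the radii of the first `N` barriers of the growth lemma, relative to the
radius of the cylinder. -/
def barrierRatio (n : ℕ) (ν : ℝ) (N : ℕ) : ℝ := (1 / 2) ^ N * barrierScale n ν

/-- The rate at which the barriers of the growth lemma fall after the time `t₀`. -/
def barrierDecay (n : ℕ) (ν : ℝ) (N : ℕ) : ℝ :=
  barrierForcing n ν / barrierRatio n ν N ^ 2 + 1

/-- The value which the growth lemma yields for a supersolution that is at least one on most of the
cylinder. -/
def growthLevel (n : ℕ) (ν : ℝ) : ℝ := gaussianInf (barrierExponent n ν) / 4

/-- The amount, relative to the radius of the cylinder, by which the estimate of the growth lemma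
extends beyond the cylinder. -/
def growthMargin (n : ℕ) (ν : ℝ) (N : ℕ) : ℝ :=
  min (barrierRatio n ν N / 4) (growthLevel n ν / 4 / barrierDecay n ν N)

variable {ν : ℝ} {N : ℕ}

theorem barrierExponent_pos (n : ℕ) (hν : 1 ≤ ν) : 0 < barrierExponent n ν :=
  two_pos.trans_le (two_le_barrierExponent n hν)

theorem barrierScale_pos (n : ℕ) (hν : 1 ≤ ν) : 0 < barrierScale n ν :=
  lt_min one_pos (mul_pos (barrierExponent_pos n hν) (Real.exp_pos _))

theorem barrierScale_le_one (n : ℕ) (ν : ℝ) : barrierScale n ν ≤ 1 := min_le_left _ _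

theorem barrierForcing_pos (n : ℕ) (hν : 1 ≤ ν) : 0 < barrierForcing n ν := by
  have := barrierExponent_pos n hν
  unfold barrierForcing
  positivity

theorem barrierRatio_pos (n : ℕ) (hν : 1 ≤ ν) (N : ℕ) : 0 < barrierRatio n ν N :=
  mul_pos (by positivity) (barrierScale_pos n hν)

theorem barrierRatio_le_one (n : ℕ) (hν : 1 ≤ ν) (N : ℕ) : barrierRatio n ν N ≤ 1 :=
  mul_le_one₀ (pow_le_one₀ (by norm_num) (by norm_num)) (barrierScale_pos n hν).le
    (barrierScale_le_one n ν)

theorem barrierDecay_pos (n : ℕ) (hν : 1 ≤ ν) (N : ℕ) : 0 < barrierDecay n ν N :=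
  add_pos (div_pos (barrierForcing_pos n hν) (pow_pos (barrierRatio_pos n hν N) 2)) one_pos

theorem growthLevel_pos (n : ℕ) (hν : 1 ≤ ν) : 0 < growthLevel n ν :=
  div_pos (gaussianInf_pos (barrierExponent_pos n hν)) four_pos

theorem growthLevel_le_one (n : ℕ) (hν : 1 ≤ ν) : growthLevel n ν ≤ 1 := by
  have := gaussianInf_le_one (barrierExponent_pos n hν).le
  unfold growthLevel
  linarith

theorem growthMargin_pos (n : ℕ) (hν : 1 ≤ ν) (N : ℕ) : 0 < growthMargin n ν N :=
  lt_min (div_pos (barrierRatio_pos n hν N) four_pos)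
    (div_pos (div_pos (growthLevel_pos n hν) four_pos) (barrierDecay_pos n hν N))

theorem growthMargin_le_one (n : ℕ) (hν : 1 ≤ ν) (N : ℕ) : growthMargin n ν N ≤ 1 := by
  have hle : growthMargin n ν N ≤ barrierRatio n ν N / 4 := min_le_left _ _
  have := barrierRatio_le_one n hν N
  linarith

section Barriers

variable {K ρ R t₀ T : ℝ} {c : En n} {X : En n × ℝ} {A : Matrix (Fin n) (Fin n) ℝ}

theorem deriv_growthTime_sub_hessTrace_le (hν : 1 ≤ ν) (hA : IsElliptic ν A) (hK : 0 < K)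
    (hR : 0 < R) (hRρ : R ≤ ρ) :
    deriv (growthTime K (barrierDecay n ν N) ρ t₀ T) X.2 -
      hessTrace A ((gaussian (barrierExponent n ν) R c).hess X) ≤
        barrierForcing n ν / R ^ 2 := by
  have hhess := neg_le_hessTrace_gaussian_hess (ρ := R) (y := c) (X := X) (zero_le_one.trans hν) hA
    (barrierExponent_pos n hν).le
  have htime : deriv (growthTime K (barrierDecay n ν N) ρ t₀ T) X.2 ≤ 1 / R ^ 2 :=
    (deriv_growthTime_le hK.ne' (barrierDecay_pos n hν N).le).trans (by gcongr)
  rw [barrierForcing, add_div]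
  rw [neg_div] at hhess
  linarith

theorem deriv_growthTime_sub_hessTrace_nonpos_of_le (hν : 1 ≤ ν) (hA : IsElliptic ν A)
    (hK : 0 < K) (hρ : 0 < ρ) (hR : barrierRatio n ν N * ρ ≤ R) (ht : t₀ ≤ X.2) :
    deriv (growthTime K (barrierDecay n ν N) ρ t₀ T) X.2 -
      hessTrace A ((gaussian (barrierExponent n ν) R c).hess X) ≤ 0 := by
  have hratio := barrierRatio_pos n hν N
  have hhess := neg_le_hessTrace_gaussian_hess (ρ := R) (y := c) (X := X) (zero_le_one.trans hν) hA
    (barrierExponent_pos n hν).le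
  have htime := deriv_growthTime_le_of_le (ρ := ρ) (T := T) hK (barrierDecay_pos n hν N).le ht
  have hforcing : 2 * barrierExponent n ν * n * ν / R ^ 2 ≤
      barrierForcing n ν / (barrierRatio n ν N * ρ) ^ 2 := by
    have := barrierForcing_pos n hν
    calc 2 * barrierExponent n ν * n * ν / R ^ 2 ≤ barrierForcing n ν / R ^ 2 := by
          gcongr
          exact le_add_of_nonneg_right zero_le_one
      _ ≤ _ := by gcongr
  have hdecay : (1 - barrierDecay n ν N) / ρ ^ 2 =
      -(barrierForcing n ν / (barrierRatio n ν N * ρ) ^ 2) := by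
    rw [barrierDecay]
    field_simp
    ring
  rw [neg_div] at hhess
  rw [hdecay] at htime
  linarith

theorem deriv_growthTime_sub_hessTrace_nonpos_of_mem_annulus (hν : 1 ≤ ν) (hA : IsElliptic ν A)
    (hK : 0 < K) (hρ : 0 < ρ) (hR : 0 < R) (hRρ : R ≤ barrierScale n ν * ρ)
    (hX : ‖X.1 - c‖ ∈ Icc (R / 2) R) :
    deriv (growthTime K (barrierDecay n ν N) ρ t₀ T) X.2 -
      hessTrace A ((gaussian (barrierExponent n ν) R c).hess X) ≤ 0 := by
  have hscale := barrierScale_pos n hν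
  have hhess := le_hessTrace_gaussian_hess (zero_lt_one.trans_le hν) hA hR hX
  have htime : deriv (growthTime K (barrierDecay n ν N) ρ t₀ T) X.2 ≤ 1 / ρ ^ 2 :=
    deriv_growthTime_le hK.ne' (barrierDecay_pos n hν N).le
  have hscale_sq : barrierScale n ν ^ 2 ≤
      barrierExponent n ν * Real.exp (-barrierExponent n ν) :=
    (pow_le_of_le_one hscale.le (barrierScale_le_one n ν) two_ne_zero).trans (min_le_right _ _)
  have hle : 1 / ρ ^ 2 ≤ barrierExponent n ν * Real.exp (-barrierExponent n ν) / R ^ 2 := by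
    rw [div_le_div_iff₀ (by positivity) (by positivity), one_mul]
    calc R ^ 2 ≤ (barrierScale n ν * ρ) ^ 2 := by gcongr
      _ = barrierScale n ν ^ 2 * ρ ^ 2 := mul_pow _ _ _
      _ ≤ _ := by gcongr
  linarith

end Barriers

/-- The barriers of the growth lemma. -/
def growthBarriers (hν : 1 ≤ ν) (N : ℕ) {ρ : ℝ} (hρ : 0 < ρ) (t₀ T : ℝ) (c : ℕ → En n) :
    DyadicBarriers n (t₀ - ρ ^ 2) T where
  exponent := barrierExponent n ν
  scale := barrierScale n ν * ρ
  center := c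
  time := growthTime (growthLevel n ν / 4) (barrierDecay n ν N) ρ t₀ T
  exponent_nonneg := (barrierExponent_pos n hν).le
  scale_pos := mul_pos (barrierScale_pos n hν) hρ
  contDiff_time := contDiff_growthTime _ _ _ _ _
  time_nonpos _ ht := (growthTime_neg (div_pos (growthLevel_pos n hν) four_pos) ht.2).le

variable {ρ t₀ T : ℝ} {c : ℕ → En n} {j : ℕ}

theorem barrierRatio_mul_le_radius_growthBarriers (hν : 1 ≤ ν) (hρ : 0 < ρ) (hj : j < N) :
    barrierRatio n ν N * ρ ≤ (growthBarriers hν N hρ t₀ T c).radius j := by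
  have hpow : (1 / 2 : ℝ) ^ N ≤ (1 / 2) ^ j :=
    pow_le_pow_of_le_one (by norm_num) (by norm_num) hj.le
  rw [barrierRatio, mul_assoc]
  exact mul_le_mul_of_nonneg_right hpow (mul_pos (barrierScale_pos n hν) hρ).le

theorem radius_growthBarriers_le (hν : 1 ≤ ν) (hρ : 0 < ρ) (j : ℕ) :
    (growthBarriers hν N hρ t₀ T c).radius j ≤ ρ :=
  (DyadicBarriers.radius_le_scale _ j).trans
    (mul_le_of_le_one_left hρ.le (barrierScale_le_one n ν))

theorem growthBarriers_deriv_time_sub_hessTrace_le (hν : 1 ≤ ν) (hρ : 0 < ρ) (hj : j < N)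
    {v : Jet n} {z : En n} {m : ℝ} {X : En n × ℝ} {A : Matrix (Fin n) (Fin n) ℝ}
    (hcenter : dist (c j) z ≤ ρ - (growthBarriers hν N hρ t₀ T c).radius j / 2)
    (hX : X ∈ (growthBarriers hν N hρ t₀ T c).contactSet v m j) (ht : X.2 ∈ Ioo (t₀ - ρ ^ 2) T)
    (hA : IsElliptic ν A) :
    deriv (growthBarriers hν N hρ t₀ T c).time X.2 -
        hessTrace A (((growthBarriers hν N hρ t₀ T c).profile j).hess X) ≤
      ({X | v.val X < 1} ∩ ball z ρ ×ˢ Ioo (t₀ - ρ ^ 2) t₀).indicator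
        (fun _ => barrierForcing n ν / (barrierRatio n ν N * ρ) ^ 2) X := by
  set P := growthBarriers hν N hρ t₀ T c
  have hforcing := barrierForcing_pos n hν
  have hratio := barrierRatio_pos n hν N
  have hK : 0 < growthLevel n ν / 4 := div_pos (growthLevel_pos n hν) four_pos
  have hR : barrierRatio n ν N * ρ ≤ P.radius j :=
    barrierRatio_mul_le_radius_growthBarriers hν hρ hj
  have hind : 0 ≤ ({X | v.val X < 1} ∩ ball z ρ ×ˢ Ioo (t₀ - ρ ^ 2) t₀).indicator
      (fun _ => barrierForcing n ν / (barrierRatio n ν N * ρ) ^ 2) X :=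
    indicator_nonneg (fun _ _ => by positivity) X
  rcases le_or_gt t₀ X.2 with hlate | hearly
  · exact (deriv_growthTime_sub_hessTrace_nonpos_of_le hν hA hK hρ hR hlate).trans hind
  rcases le_or_gt (P.radius j / 2) ‖X.1 - c j‖ with hfar | hnear
  · exact (deriv_growthTime_sub_hessTrace_nonpos_of_mem_annulus hν hA hK hρ (P.radius_pos j)
      (P.radius_le_scale j) ⟨hfar, (mem_ball_iff_norm.1 hX.1).le⟩).trans hind
  have hmem : X ∈ {X | v.val X < 1} ∩ ball z ρ ×ˢ Ioo (t₀ - ρ ^ 2) t₀ := by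
    refine ⟨?_, ?_, ht.1, hearly⟩
    · have hpos : 0 < (P.profile j).val X + P.time X.2 - v.val X := hX.2.2.2.1
      have hprofile : (P.profile j).val X ≤ 1 := gaussian_val_le_one P.exponent_nonneg
      have htime : P.time X.2 ≤ 0 := P.time_nonpos _ ⟨ht.1.le, ht.2.le⟩
      exact show v.val X < 1 by linarith
    · rw [← dist_eq_norm] at hnear
      have := dist_triangle X.1 (c j) z
      exact mem_ball.2 (by linarith)
  rw [indicator_of_mem hmem]
  refine (deriv_growthTime_sub_hessTrace_le hν hA hK (P.radius_pos j)
    (radius_growthBarriers_le hν hρ j)).trans ?_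
  gcongr

/-- The growth lemma: a nonnegative supersolution that is at least `l` on `ball z ρ × (t₀ - ρ², t₀)`
up to a set of small measure is at least `c * l` on a slightly larger ball, up to a slightly later
time. -/
def GrowthEstimate (n : ℕ) (ν S ε θ c : ℝ) : Prop :=
  ∀ (v : En n × ℝ → ℝ) (z : En n) (ρ t₀ T l : ℝ), 0 < ρ → 0 < l → T ∈ Icc t₀ (t₀ + θ * ρ ^ 2) →
    IsNonnegSupersolution ν S z (2 * ρ) (t₀ - ρ ^ 2) T v →
    volume ({X | v X < l} ∩ ball z ρ ×ˢ Ioo (t₀ - ρ ^ 2) t₀) ≤ ENNReal.ofReal (ε * ρ ^ (n + 2)) →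
    ∀ x ∈ closedBall z ((1 + θ) * ρ), c * l ≤ v (x, T)

/-- The coefficient of the measure of `{v < 1}` in the growth lemma with `N` barriers. -/
def measureCoeff (n : ℕ) (ν : ℝ) (N : ℕ) : ℝ :=
  2 ^ (n + 1) * ν ^ n * barrierScale n ν ^ n *
    (barrierForcing n ν / barrierRatio n ν N ^ 2) ^ (n + 1)

/-- The coefficient of the drift norm in the growth lemma. -/
def driftCoeff (n : ℕ) (ν : ℝ) : ℝ :=
  2 ^ (n + 2) * ν ^ n * (2 * barrierExponent n ν + growthLevel n ν / 4) ^ n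

/-- The measure of the set of slopes which one barrier of the growth lemma contributes. -/
def slopeVolume (n : ℕ) (ν : ℝ) : ℝ :=
  growthLevel n ν / 2 * (growthLevel n ν / 4) ^ n * (volume (ball (0 : En n) 1)).toReal

theorem exists_barrier_centers (hν : 1 ≤ ν) (hρ : 0 < ρ) {x z : En n}
    (hx : x ∈ closedBall z ((1 + growthMargin n ν N) * ρ)) (t₀ T : ℝ) :
    ∃ c : ℕ → En n, ∀ j < N,
      dist x (c j) ≤ 3 / 4 * (growthBarriers hν N hρ t₀ T c).radius j ∧
      dist (c j) z ≤ ρ - (growthBarriers hν N hρ t₀ T c).radius j / 2 := by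
  set R : ℕ → ℝ := (growthBarriers hν N hρ t₀ T (0 : ℕ → En n)).radius
  have hexists (j) (hj : j < N) : ∃ c, dist x c ≤ 3 / 4 * R j ∧ dist c z ≤ ρ - R j / 2 := by
    have hR : 0 < R j := DyadicBarriers.radius_pos _ j
    have hRρ : R j ≤ ρ := radius_growthBarriers_le hν hρ j
    have hR_ge : barrierRatio n ν N * ρ ≤ R j := barrierRatio_mul_le_radius_growthBarriers hν hρ hj
    have hmargin : growthMargin n ν N * ρ ≤ barrierRatio n ν N / 4 * ρ := by
      gcongr
      exact min_le_left _ _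
    have := mem_closedBall.1 hx
    exact exists_dist_le_le (by positivity) (by linarith) (by linarith)
  choose! c hc using hexists
  exact ⟨c, hc⟩

theorem level_le_growthBarriers_test (hν : 1 ≤ ν) (hρ : 0 < ρ)
    (hT : T ∈ Icc t₀ (t₀ + growthMargin n ν N * ρ ^ 2)) {v : Jet n} {x : En n}
    (hx : dist x (c j) ≤ 3 / 4 * (growthBarriers hν N hρ t₀ T c).radius j)
    (hlt : v.val (x, T) < growthLevel n ν) :
    growthLevel n ν ≤ ((growthBarriers hν N hρ t₀ T c).test v j).val (x, T) := by
  set P := growthBarriers hν N hρ t₀ T c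
  have hdecay_pos := barrierDecay_pos n hν N
  have hdecay : barrierDecay n ν N * (T - t₀) ≤ growthLevel n ν / 4 * ρ ^ 2 :=
    calc barrierDecay n ν N * (T - t₀)
        ≤ barrierDecay n ν N * (growthLevel n ν / 4 / barrierDecay n ν N * ρ ^ 2) := by
          gcongr
          exact (sub_le_iff_le_add'.2 hT.2).trans (by gcongr; exact min_le_right _ _)
      _ = growthLevel n ν / 4 * ρ ^ 2 := by field_simp
  have htime : -(3 * (growthLevel n ν / 4)) ≤ P.time T :=
    neg_three_mul_le_growthTime (div_pos (growthLevel_pos n hν) four_pos) hρ.ne' hdecay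
  have hprofile : gaussianInf (barrierExponent n ν) ≤ (P.profile j).val (x, T) :=
    gaussianInf_le_gaussian_val P.exponent_nonneg (P.radius_pos j) hx
  have hlevel := growthLevel_pos n hν
  change growthLevel n ν ≤ (P.profile j).val (x, T) + P.time T - v.val (x, T)
  unfold growthLevel at *
  linarith

theorem Jet.IsSupersolution.ofReal_mul_volume_unitBall_le (hn : n ≠ 0) (hν : 1 ≤ ν) (hρ : 0 < ρ)
    {v : Jet n} {B : En n → ℝ≥0∞} {x z : En n}
    (hT : T ∈ Icc t₀ (t₀ + growthMargin n ν N * ρ ^ 2))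
    (hv : v.IsSupersolution ν z (2 * ρ) (t₀ - ρ ^ 2) T B)
    (hx : x ∈ closedBall z ((1 + growthMargin n ν N) * ρ))
    (hlt : v.val (x, T) < growthLevel n ν) :
    ENNReal.ofReal (N * (growthLevel n ν / 2 * (growthLevel n ν / 4) ^ n)) *
        volume (ball (0 : En n) 1) ≤
      ENNReal.ofReal (N * (2 ^ (n + 1) * ν ^ n * (barrierScale n ν * ρ) ^ n *
          (barrierForcing n ν / (barrierRatio n ν N * ρ) ^ 2) ^ (n + 1))) *
          volume ({X | v.val X < 1} ∩ ball z ρ ×ˢ Ioo (t₀ - ρ ^ 2) t₀) +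
        ENNReal.ofReal (driftCoeff n ν) * ∫⁻ x in ball z (2 * ρ), B x ^ n := by
  obtain ⟨c, hc⟩ := exists_barrier_centers hν hρ hx t₀ T
  set P := growthBarriers hν N hρ t₀ T c
  have hforcing := barrierForcing_pos n hν
  have hsub : ∀ j < N, closedBall (P.center j) (P.radius j) ⊆ ball z (2 * ρ) := fun j hj => by
    refine closedBall_subset_ball' ?_
    have hRρ : P.radius j ≤ ρ := radius_growthBarriers_le hν hρ j
    have hcenter : dist (P.center j) z ≤ ρ - P.radius j / 2 := (hc j hj).2
    linarith
  have hx_mem : ∀ j < N, x ∈ closedBall (P.center j) (P.radius j) := fun j hj =>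
    (hc j hj).1.trans (by linarith [P.radius_pos j])
  exact P.ofReal_natCast_mul_volume_unitBall_le hn (zero_lt_one.trans_le hν) (by positivity)
    ((isOpen_lt hv.isJetOn.continuous_val continuous_const).measurableSet.inter
      (measurableSet_ball.prod measurableSet_Ioo)) hv hsub (growthLevel_pos n hν)
    (fun j hj X hX ht A hA =>
      growthBarriers_deriv_time_sub_hessTrace_le hν hρ hj (hc j hj).2 hX ht hA)
    hx_mem ((sub_le_self _ (sq_nonneg ρ)).trans hT.1)
    (growthTime_sub_sq_le (div_pos (growthLevel_pos n hν) four_pos).le hρ.ne' hT.1)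
    fun j hj => level_le_growthBarriers_test hν hρ hT (hc j hj).1 hlt

theorem IsNonnegSupersolution.natCast_mul_slopeVolume_le (hn : n ≠ 0) (hν : 1 ≤ ν) (hρ : 0 < ρ)
    {S ε : ℝ} (hε : 0 ≤ ε) {v : En n × ℝ → ℝ} {x z : En n}
    (hT : T ∈ Icc t₀ (t₀ + growthMargin n ν N * ρ ^ 2))
    (hv : IsNonnegSupersolution ν S z (2 * ρ) (t₀ - ρ ^ 2) T v)
    (hvol : volume ({X | v X < 1} ∩ ball z ρ ×ˢ Ioo (t₀ - ρ ^ 2) t₀) ≤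
      ENNReal.ofReal (ε * ρ ^ (n + 2)))
    (hx : x ∈ closedBall z ((1 + growthMargin n ν N) * ρ)) (hlt : v (x, T) < growthLevel n ν) :
    N * slopeVolume n ν ≤ N * (measureCoeff n ν N * ε) + driftCoeff n ν * max S 0 := by
  obtain ⟨w, B, rfl, hw, hB⟩ := hv
  have hlevel := growthLevel_pos n hν
  have hforcing := barrierForcing_pos n hν
  have hratio := barrierRatio_pos n hν N
  have hscale := barrierScale_pos n hν
  have hdrift : 0 ≤ driftCoeff n ν := by
    have := barrierExponent_pos n hν
    unfold driftCoeff
    positivity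
  have hmeasure : N * (2 ^ (n + 1) * ν ^ n * (barrierScale n ν * ρ) ^ n *
      (barrierForcing n ν / (barrierRatio n ν N * ρ) ^ 2) ^ (n + 1)) * (ε * ρ ^ (n + 2)) =
      N * (measureCoeff n ν N * ε) := by
    rw [measureCoeff, div_pow, div_pow, mul_pow _ ρ, mul_pow _ ρ]
    field_simp
    ring
  have key := (hw.ofReal_mul_volume_unitBall_le hn hν hρ hT hx hlt).trans <| add_le_add
    (mul_le_mul_right hvol _)
    (mul_le_mul_right (hB.trans (ENNReal.ofReal_le_ofReal (le_max_left S 0))) _)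
  rw [← ENNReal.ofReal_toReal (measure_ball_lt_top (μ := volume) (x := (0 : En n)) (r := 1)).ne,
    ← ENNReal.ofReal_mul (by positivity), ← ENNReal.ofReal_mul (by positivity),
    ← ENNReal.ofReal_mul hdrift, ← ENNReal.ofReal_add (by positivity) (by positivity),
    ENNReal.ofReal_le_ofReal_iff (by positivity), hmeasure] at key
  rwa [slopeVolume, ← mul_assoc]

theorem exists_natCast_mul_add_lt {a d : ℝ} {b : ℕ → ℝ} (ha : 0 < a) (hb : ∀ N, 0 < b N) :
    ∃ N : ℕ, ∃ ε : ℝ, 0 < ε ∧ N * (b N * ε) + d < N * a := by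
  obtain ⟨N, hN⟩ := exists_nat_gt (2 * d / a)
  refine ⟨N, a / (2 * b N), div_pos ha (mul_pos two_pos (hb N)), ?_⟩
  have hbN := (hb N).ne'
  rw [div_lt_iff₀ ha] at hN
  have heq : (N : ℝ) * (b N * (a / (2 * b N))) = N * a / 2 := by field_simp
  linarith

theorem exists_growthEstimate (hn : n ≠ 0) (hν : 1 ≤ ν) (S : ℝ) :
    ∃ ε θ c : ℝ, 0 < ε ∧ θ ∈ Ioc 0 1 ∧ c ∈ Ioc 0 1 ∧ GrowthEstimate n ν S ε θ c := by
  have hslope : 0 < slopeVolume n ν := by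
    have := growthLevel_pos n hν
    have hball : 0 < (volume (ball (0 : En n) 1)).toReal :=
      ENNReal.toReal_pos (measure_ball_pos volume _ one_pos).ne' measure_ball_lt_top.ne
    unfold slopeVolume
    positivity
  have hmeasure (N) : 0 < measureCoeff n ν N := by
    have := barrierForcing_pos n hν
    have := barrierRatio_pos n hν N
    have := barrierScale_pos n hν
    unfold measureCoeff
    positivity
  obtain ⟨N, ε, hε, hlt⟩ :=
    exists_natCast_mul_add_lt (d := driftCoeff n ν * max S 0) hslope hmeasure
  refine ⟨ε, growthMargin n ν N, growthLevel n ν, hε,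
    ⟨growthMargin_pos n hν N, growthMargin_le_one n hν N⟩,
    ⟨growthLevel_pos n hν, growthLevel_le_one n hν⟩, ?_⟩
  intro v z ρ t₀ T l hρ hl hT hv hvol x hx
  have hset : {X | l⁻¹ * v X < 1} = {X | v X < l} := by
    ext X
    rw [mem_ofPred_eq, mem_ofPred_eq, inv_mul_lt_iff₀ hl, mul_one]
  by_contra! hsmall
  refine hlt.not_ge ((hv.const_mul (inv_nonneg.2 hl.le)).natCast_mul_slopeVolume_le hn hν hρ hε.le
    hT (by rwa [hset]) hx ?_)
  rwa [inv_mul_lt_iff₀ hl, mul_comm l]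

end GrowthLemma

/-- The growth lemma propagated along parabolic chains: a nonnegative supersolution that is at least
`l` on `ball x ρ × (t₀ - ρ², t₀)` up to a set of small measure is at least `c * l` at every point
`(z, t)` with `|x - z| ≤ Λ ρ` and `t - t₀` between `τ₁ ρ²` and `τ₂ ρ²`. -/
def PropagationEstimate (n : ℕ) (ν S ε Λ τ₁ τ₂ c : ℝ) : Prop :=
  ∀ (v : En n × ℝ → ℝ) (y : En n) (r a s : ℝ), IsNonnegSupersolution ν S y r a s v →
    ∀ (x z : En n) (ρ t₀ t l : ℝ), 0 < ρ → 0 < l → closedBall x (2 * ρ) ⊆ ball y r →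
      closedBall z (2 * ρ) ⊆ ball y r → a ≤ t₀ - ρ ^ 2 → t ≤ s →
      volume ({X | v X < l} ∩ ball x ρ ×ˢ Ioo (t₀ - ρ ^ 2) t₀) ≤ ENNReal.ofReal (ε * ρ ^ (n + 2)) →
      dist x z ≤ Λ * ρ → t ∈ Icc (t₀ + τ₁ * ρ ^ 2) (t₀ + τ₂ * ρ ^ 2) → c * l ≤ v (z, t)

theorem closedBall_lineMap_subset {E : Type*} [NormedAddCommGroup E] [NormedSpace ℝ E] {s : Set E}
    (hs : Convex ℝ s) {x z : E} {R f : ℝ} (hx : closedBall x R ⊆ s) (hz : closedBall z R ⊆ s)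
    (hf : f ∈ Icc (0 : ℝ) 1) : closedBall (AffineMap.lineMap x z f) R ⊆ s := by
  intro w hw
  set d := w - AffineMap.lineMap x z f with hd
  have hd_le : ‖d‖ ≤ R := mem_closedBall_iff_norm.1 hw
  have hmem (p : E) : p + d ∈ closedBall p R := by simpa using hd_le
  convert hs.lineMap_mem (hx (hmem x)) (hz (hmem z)) hf using 1
  simp only [hd, AffineMap.lineMap_apply_module]
  module

namespace GrowthEstimate

variable {ν S ε θ c r a s l ρ q τ t : ℝ} {y x z : En n} {v : En n × ℝ → ℝ} {N : ℕ}

theorem le_of_forall_le (hG : GrowthEstimate n ν S ε θ c) (hθ : 0 ≤ θ)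
    (hv : IsNonnegSupersolution ν S y r a s v) (hl : 0 < l) {ρ' T δ : ℝ} (hρ' : 0 < ρ')
    (hρ : ρ' ≤ ρ) (hδ : δ ∈ Icc 0 (θ * ρ' ^ 2)) (hball : closedBall x (2 * ρ) ⊆ ball y r)
    (ha : a ≤ T - δ - ρ' ^ 2) (hT : T ≤ s)
    (h : ∀ z ∈ closedBall x ρ, ∀ t ∈ Icc (T - δ - ρ' ^ 2) (T - δ), l ≤ v (z, t)) :
    ∀ z ∈ closedBall x (ρ + θ * ρ'), c * l ≤ v (z, T) := by
  intro z hz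
  rw [mem_closedBall] at hz
  obtain ⟨w, hzw, hwx⟩ := exists_dist_le_le (x := z) (z := x) (δ := (1 + θ) * ρ') (ε := ρ - ρ')
    (by positivity) (by linarith) (by linarith)
  have hempty : {X | v X < l} ∩ ball w ρ' ×ˢ Ioo (T - δ - ρ' ^ 2) (T - δ) = ∅ := by
    refine eq_empty_of_forall_notMem fun X ⟨hlt, hX, ht⟩ =>
      (mem_ofPred_eq.mp hlt).not_ge (h X.1 ?_ X.2 (Ioo_subset_Icc_self ht))
    exact closedBall_subset_closedBall' (by linarith) (ball_subset_closedBall hX)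
  have hw_ball : closedBall w (2 * ρ') ⊆ ball y r :=
    (closedBall_subset_closedBall' (by linarith)).trans hball
  refine hG v w ρ' (T - δ) T l hρ' hl ⟨by linarith [hδ.1], by linarith [hδ.2]⟩
    (hv.mono hw_ball ha hT) ?_ z hzw
  rw [hempty, measure_empty]
  exact zero_le

theorem pow_mul_le_of_mem_Icc (hG : GrowthEstimate n ν S ε θ c) (hθ : θ ∈ Icc 0 1)
    (hc : c ∈ Ioc 0 1) (hv : IsNonnegSupersolution ν S y r a s v) (hl : 0 < l) (hρ : 0 < ρ)
    (hq : q ∈ Ioc 0 1) (hqτ : 2 * q ≤ τ) (hball : closedBall x (2 * ρ) ⊆ ball y r) (ha : a ≤ t)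
    (h : ∀ z ∈ closedBall x ρ, ∀ t' ∈ Icc t (t + τ * ρ ^ 2), t' ≤ s → l ≤ v (z, t')) (k : ℕ) :
    ∀ z ∈ closedBall x ρ, ∀ t' ∈ Icc t (t + τ * ρ ^ 2 + k * (θ * (q * ρ) ^ 2)), t' ≤ s →
      c ^ k * l ≤ v (z, t') := by
  obtain ⟨hθ0, hθ1⟩ := hθ
  obtain ⟨hc0, hc1⟩ := hc
  obtain ⟨hq0, hq1⟩ := hq
  induction k with
  | zero => simpa using h
  | succ k ih =>
    intro z hz t' ht' hs
    rw [pow_succ']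
    rcases le_or_gt t' (t + τ * ρ ^ 2 + k * (θ * (q * ρ) ^ 2)) with hle | hgt
    · exact (mul_assoc c _ _ ▸ mul_le_of_le_one_left (by positivity) hc1).trans
        (ih z hz t' ⟨ht'.1, hle⟩ hs)
    have hstep : θ * (q * ρ) ^ 2 ∈ Icc 0 (θ * (q * ρ) ^ 2) := right_mem_Icc.2 (by positivity)
    have hroom : θ * (q * ρ) ^ 2 + (q * ρ) ^ 2 ≤ τ * ρ ^ 2 :=
      calc θ * (q * ρ) ^ 2 + (q * ρ) ^ 2 ≤ 1 * (q * ρ) ^ 2 + (q * ρ) ^ 2 := by gcongr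
        _ = 2 * q * q * ρ ^ 2 := by ring
        _ ≤ 2 * q * 1 * ρ ^ 2 := by gcongr
        _ ≤ τ * ρ ^ 2 := by rw [mul_one]; gcongr
    have hk : 0 ≤ k * (θ * (q * ρ) ^ 2) := by positivity
    have hlate := ht'.2
    push_cast at hlate
    rw [mul_assoc]
    refine hG.le_of_forall_le hθ0 hv (by positivity) (by positivity)
      (mul_le_of_le_one_left hρ.le hq1) hstep hball (by linarith) hs (fun w hw t'' ht'' => ?_) z
      (closedBall_subset_closedBall (le_add_of_nonneg_right (by positivity)) hz)
    exact ih w hw t'' ⟨by linarith [ht''.1], by linarith [ht''.2]⟩ (by linarith [ht''.2, hstep.1])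

theorem pow_mul_le_of_mem_closedBall_lineMap (hG : GrowthEstimate n ν S ε θ c) (hθ : 0 ≤ θ)
    (hc : 0 < c) (hv : IsNonnegSupersolution ν S y r a s v) (hl : 0 < l) (hρ : 0 < ρ)
    (hq : q ∈ Ioc 0 1) (hN : 0 < N) (hdist : dist x z ≤ N * (θ * (q * ρ)))
    (hx : closedBall x (2 * ρ) ⊆ ball y r) (hz : closedBall z (2 * ρ) ⊆ ball y r) (ha : a ≤ t)
    {t₂ : ℝ} (h : ∀ w ∈ closedBall x ρ, ∀ t' ∈ Icc t t₂, t' ≤ s → l ≤ v (w, t')) {i : ℕ}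
    (hi : i ≤ N) :
    ∀ w ∈ closedBall (AffineMap.lineMap x z (i / N : ℝ)) ρ, ∀ t' ∈ Icc (t + i * (q * ρ) ^ 2) t₂,
      t' ≤ s → c ^ i * l ≤ v (w, t') := by
  obtain ⟨hq0, hq1⟩ := hq
  have hN_pos : (0 : ℝ) < N := Nat.cast_pos.2 hN
  induction i with
  | zero => simpa using h
  | succ i ih =>
    intro w hw t' ht' hs
    have hfrac : (i / N : ℝ) ∈ Icc (0 : ℝ) 1 :=
      ⟨by positivity, div_le_one_of_le₀ (Nat.cast_le.2 (Nat.le_of_succ_le hi)) hN_pos.le⟩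
    have hcenters : dist (AffineMap.lineMap x z ((i + 1 : ℕ) / N : ℝ))
        (AffineMap.lineMap x z (i / N : ℝ)) ≤ θ * (q * ρ) := by
      have hgap : ((i + 1 : ℕ) / N : ℝ) - i / N = 1 / N := by push_cast; ring
      rw [dist_lineMap_lineMap, Real.dist_eq, hgap, abs_of_pos (by positivity),
        one_div_mul_eq_div, div_le_iff₀' hN_pos]
      exact hdist
    have hearly := ht'.1
    push_cast at hearly
    have hi_nonneg : 0 ≤ i * (q * ρ) ^ 2 := by positivity
    rw [pow_succ', mul_assoc]
    refine hG.le_of_forall_le hθ hv (by positivity) (by positivity)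
      (mul_le_of_le_one_left hρ.le hq1) (left_mem_Icc.2 (by positivity))
      (closedBall_lineMap_subset (convex_ball y r) hx hz hfrac) (by linarith) hs
      (fun w' hw' t'' ht'' => ?_) w (closedBall_subset_closedBall' (by linarith) hw)
    rw [sub_zero] at ht''
    exact ih (Nat.le_of_succ_le hi) w' hw' t'' ⟨by linarith [ht''.1], ht''.2.trans ht'.2⟩
      (ht''.2.trans hs)

theorem exists_propagationEstimate (hG : GrowthEstimate n ν S ε θ c) (hθ : θ ∈ Ioc 0 1)
    (hc : c ∈ Ioc 0 1) {Λ τ₁ : ℝ} (hΛ : 0 < Λ) (hτ₁ : 0 < τ₁) (τ₂ : ℝ) :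
    ∃ c' ∈ Ioc 0 1, PropagationEstimate n ν S ε Λ τ₁ τ₂ c' := by
  obtain ⟨hθ0, hθ1⟩ := hθ
  obtain ⟨hc0, hc1⟩ := hc
  obtain ⟨k, hk⟩ := exists_nat_ge (τ₂ / (θ * (θ / 2) ^ 2))
  obtain ⟨q, hq, hqτ₁⟩ : ∃ q ∈ Ioc (0 : ℝ) 1, q * (Λ / θ + 1) ≤ τ₁ :=
    ⟨min 1 (τ₁ / (Λ / θ + 1)), ⟨by positivity, min_le_left _ _⟩,
      (le_div_iff₀ (by positivity)).1 (min_le_right _ _)⟩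
  have hq0 := hq.1
  have hNpos : 0 < ⌈Λ / (θ * q)⌉₊ := Nat.ceil_pos.2 (by positivity)
  have hN_le : Λ / (θ * q) ≤ ⌈Λ / (θ * q)⌉₊ := Nat.le_ceil _
  have hN_lt : (⌈Λ / (θ * q)⌉₊ : ℝ) < Λ / (θ * q) + 1 := Nat.ceil_lt_add_one (by positivity)
  generalize ⌈Λ / (θ * q)⌉₊ = N at hNpos hN_le hN_lt
  rw [div_le_iff₀ (by positivity)] at hk hN_le
  refine ⟨c ^ (N + k + 1), ⟨by positivity, pow_le_one₀ hc0.le hc1⟩, ?_⟩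
  intro v y r a s hv x z ρ t₀ t l hρ hl hx hz ha hs hvol hdist ht
  have hat₀ : a ≤ t₀ := ha.trans (sub_le_self _ (sq_nonneg ρ))
  have hgrow : ∀ w ∈ closedBall x ρ, ∀ t' ∈ Icc t₀ (t₀ + θ * ρ ^ 2), t' ≤ s → c * l ≤ v (w, t') :=
    fun w hw t' ht' hs' => hG v x ρ t₀ t' l hρ hl ht' (hv.mono hx ha hs') hvol w
      (closedBall_subset_closedBall (le_mul_of_one_le_left hρ.le (by linarith)) hw)
  have hduration : τ₂ * ρ ^ 2 ≤ θ * ρ ^ 2 + k * (θ * (θ / 2 * ρ) ^ 2) :=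
    calc τ₂ * ρ ^ 2 ≤ k * (θ * (θ / 2) ^ 2) * ρ ^ 2 := by gcongr
      _ = k * (θ * (θ / 2 * ρ) ^ 2) := by ring
      _ ≤ _ := le_add_of_nonneg_left (by positivity)
  have hwait : ∀ w ∈ closedBall x ρ, ∀ t' ∈ Icc t₀ (t₀ + τ₂ * ρ ^ 2), t' ≤ s →
      c ^ k * (c * l) ≤ v (w, t') := fun w hw t' ht' =>
    hG.pow_mul_le_of_mem_Icc ⟨hθ0.le, hθ1⟩ ⟨hc0, hc1⟩ hv (by positivity) hρ
      ⟨half_pos hθ0, by linarith⟩ (by linarith) hx hat₀ hgrow k w hw t'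
      ⟨ht'.1, ht'.2.trans (by linarith)⟩
  have htravel : N * (q * ρ) ^ 2 ≤ τ₁ * ρ ^ 2 :=
    calc N * (q * ρ) ^ 2 = N * q ^ 2 * ρ ^ 2 := by ring
      _ ≤ (Λ / (θ * q) + 1) * q ^ 2 * ρ ^ 2 := by gcongr
      _ = q * (Λ / θ + q) * ρ ^ 2 := by field_simp
      _ ≤ q * (Λ / θ + 1) * ρ ^ 2 := by gcongr; exact hq.2
      _ ≤ τ₁ * ρ ^ 2 := by gcongr
  have hmove := hG.pow_mul_le_of_mem_closedBall_lineMap hθ0.le hc0 hv (by positivity) hρ hq hNpos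
    (hdist.trans (by nlinarith)) hx hz hat₀ hwait le_rfl
  rw [div_self (Nat.cast_pos.2 hNpos).ne', AffineMap.lineMap_apply_one] at hmove
  rw [pow_succ, pow_add, mul_assoc, mul_assoc]
  exact hmove z (mem_closedBall_self hρ.le) t ⟨by linarith [ht.1], ht.2⟩ hs

end GrowthEstimate

section Interval

variable {k : ℝ}

theorem volume_Ioo_csInf_sub_le (hk : 0 ≤ k) {C : Set ℝ} (hC : IsConnected C) (hb : BddBelow C)
    (ha : BddAbove C) :
    volume (Ioo (sInf C - k * (sSup C - sInf C)) (sSup C)) ≤ ENNReal.ofReal (1 + k) * volume C :=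
  calc volume (Ioo (sInf C - k * (sSup C - sInf C)) (sSup C))
      = ENNReal.ofReal (1 + k) * volume (Ioo (sInf C) (sSup C)) := by
        rw [Real.volume_Ioo, Real.volume_Ioo, ← ENNReal.ofReal_mul (by positivity)]
        ring_nf
    _ ≤ ENNReal.ofReal (1 + k) * volume C := by gcongr; exact hC.Ioo_csInf_csSup_subset hb ha

theorem Ioo_sub_mul_subset (hk : 0 ≤ k) {C : Set ℝ} (hC : Bornology.IsBounded C) {a b : ℝ}
    (hab : a < b) (hsub : Ioo a b ⊆ C) :
    Ioo (a - k * (b - a)) b ⊆ Ioo (sInf C - k * (sSup C - sInf C)) (sSup C) := by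
  have hinf := csInf_le_csInf hC.bddBelow (nonempty_Ioo.2 hab) hsub
  have hsup := csSup_le_csSup hC.bddAbove (nonempty_Ioo.2 hab) hsub
  rw [csInf_Ioo hab] at hinf
  rw [csSup_Ioo hab] at hsup
  exact Ioo_subset_Ioo (by gcongr) hsup

theorem pairwiseDisjoint_range_connectedComponentIn {α : Type*} [TopologicalSpace α] (U : Set α) :
    (range (connectedComponentIn U)).PairwiseDisjoint id := by
  rintro - ⟨x, rfl⟩ - ⟨y, rfl⟩ hne
  refine disjoint_left.2 fun t hx hy => hne ?_
  exact (connectedComponentIn_eq hx).trans (connectedComponentIn_eq hy).symm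

theorem exists_finset_isConnected_pairwiseDisjoint {α ι : Type*} [TopologicalSpace α]
    [LocallyConnectedSpace α] (s : Finset ι) {V : ι → Set α} (hVo : ∀ i ∈ s, IsOpen (V i))
    (hVc : ∀ i ∈ s, IsConnected (V i)) :
    ∃ C : Finset (Set α), (C : Set (Set α)).PairwiseDisjoint id ∧
      (∀ D ∈ C, IsOpen D ∧ IsConnected D ∧ D ⊆ ⋃ i ∈ s, V i) ∧ ∀ i ∈ s, ∃ D ∈ C, V i ⊆ D := by
  classical
  set U := ⋃ i ∈ s, V i
  have hUo : IsOpen U := isOpen_biUnion hVo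
  have hVU : ∀ i ∈ s, V i ⊆ U := fun i hi => subset_biUnion_of_mem (u := V) hi
  have hpoint (i : s) : ∃ x, x ∈ V i := (hVc i i.2).nonempty
  choose x hx using hpoint
  refine ⟨Finset.univ.image fun i => connectedComponentIn U (x i), ?_, ?_, fun i hi => ?_⟩
  · refine (pairwiseDisjoint_range_connectedComponentIn U).subset fun D hD => ?_
    obtain ⟨i, -, rfl⟩ := Finset.mem_image.1 (Finset.mem_coe.1 hD)
    exact mem_range_self _
  · exact Finset.forall_mem_image.2 fun i _ => ⟨hUo.connectedComponentIn,
      isConnected_connectedComponentIn_iff.2 (hVU i i.2 (hx i)), connectedComponentIn_subset U _⟩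
  · exact ⟨_, Finset.mem_image_of_mem _ (Finset.mem_univ ⟨i, hi⟩),
      (hVc i hi).isPreconnected.subset_connectedComponentIn (hx ⟨i, hi⟩) (hVU i hi)⟩

-- Each interval lies in a component of the union, and the components are disjoint, so it suffices
-- to extend the components to the left by `k` times their lengths.
theorem volume_biUnion_Ioo_sub_mul_le {ι : Type*} (s : Finset ι) {a b : ι → ℝ}
    (hab : ∀ i ∈ s, a i < b i) (hk : 0 ≤ k) :
    volume (⋃ i ∈ s, Ioo (a i - k * (b i - a i)) (b i)) ≤
      ENNReal.ofReal (1 + k) * volume (⋃ i ∈ s, Ioo (a i) (b i)) := by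
  obtain ⟨C, hdisj, hC, hcover⟩ := exists_finset_isConnected_pairwiseDisjoint s
    (fun i _ => isOpen_Ioo) fun i hi => isConnected_Ioo (hab i hi)
  have hbdd : ∀ D ∈ C, Bornology.IsBounded D := fun D hD =>
    ((Bornology.isBounded_biUnion_finset s).2 fun _ _ => isBounded_Ioo _ _).subset (hC D hD).2.2
  calc volume (⋃ i ∈ s, Ioo (a i - k * (b i - a i)) (b i))
      ≤ volume (⋃ D ∈ C, Ioo (sInf D - k * (sSup D - sInf D)) (sSup D)) := by
        refine measure_mono (iUnion₂_subset fun i hi => ?_)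
        obtain ⟨D, hD, hsub⟩ := hcover i hi
        exact (Ioo_sub_mul_subset hk (hbdd D hD) (hab i hi) hsub).trans
          (subset_biUnion_of_mem (u := fun D => Ioo (sInf D - k * (sSup D - sInf D)) (sSup D)) hD)
    _ ≤ ∑ D ∈ C, ENNReal.ofReal (1 + k) * volume D :=
        (measure_biUnion_finset_le _ _).trans <| Finset.sum_le_sum fun D hD =>
          volume_Ioo_csInf_sub_le hk (hC D hD).2.1 (hbdd D hD).bddBelow (hbdd D hD).bddAbove
    _ = ENNReal.ofReal (1 + k) * volume (⋃ D ∈ C, id D) := by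
        rw [measure_biUnion_finset hdisj fun D hD => (hC D hD).1.measurableSet, Finset.mul_sum]
        rfl
    _ ≤ ENNReal.ofReal (1 + k) * volume (⋃ i ∈ s, Ioo (a i) (b i)) := by
        gcongr
        exact iUnion₂_subset fun D hD => (hC D hD).2.2

end Interval

section ParabolicBall

variable {E ι : Type*} [PseudoMetricSpace E]

/-- The parabolic ball of radius `r` around `X`, extending both to the past and to the future. -/
def parabolicBall (X : E × ℝ) (r : ℝ) : Set (E × ℝ) :=
  ball X.1 r ×ˢ Ioo (X.2 - r ^ 2) (X.2 + r ^ 2)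

/-- The stack on top of the parabolic ball of radius `r` around `X`: the cylinder over the same
ball, of height `h r²`, which starts where the parabolic ball ends. -/
def parabolicStack (h : ℝ) (X : E × ℝ) (r : ℝ) : Set (E × ℝ) :=
  ball X.1 r ×ˢ Ioo (X.2 + r ^ 2) (X.2 + (1 + h) * r ^ 2)

theorem isOpen_parabolicBall (X : E × ℝ) (r : ℝ) : IsOpen (parabolicBall X r) :=
  isOpen_ball.prod isOpen_Ioo

theorem mem_parabolicBall_self (X : E × ℝ) {r : ℝ} (hr : 0 < r) : X ∈ parabolicBall X r :=
  ⟨mem_ball_self hr, sub_lt_self _ (by positivity), lt_add_of_pos_right _ (by positivity)⟩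

theorem parabolicBall_subset_ball (X : E × ℝ) {r : ℝ} (hr : r ∈ Icc 0 1) :
    parabolicBall X r ⊆ ball X r := by
  have hsq : r ^ 2 ≤ r := pow_le_of_le_one hr.1 hr.2 two_ne_zero
  rw [← ball_prod_same, Real.ball_eq_Ioo]
  exact prod_mono_right (Ioo_subset_Ioo (by linarith) (by linarith))

-- The constant `5 = 2 * 2 + 1` comes from the factor `2` in Vitali's selection of the subfamily.
theorem exists_pairwiseDisjoint_parabolicBall (s : Finset ι) (X : ι → E × ℝ) {r : ι → ℝ}
    (hr : ∀ i ∈ s, 0 < r i) :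
    ∃ u ⊆ s, (u : Set ι).PairwiseDisjoint (fun i => parabolicBall (X i) (r i)) ∧
      ⋃ i ∈ s, parabolicBall (X i) (r i) ⊆ ⋃ i ∈ u, parabolicBall (X i) (5 * r i) := by
  obtain ⟨u, hus, hdisj, hcover⟩ := Vitali.exists_disjoint_subfamily_covering_enlargement
    (fun i => parabolicBall (X i) (r i)) s r 2 one_lt_two (fun i hi => (hr i hi).le) (∑ i ∈ s, r i)
    (fun i hi => Finset.single_le_sum (fun i hi => (hr i hi).le) hi)
    (fun i hi => ⟨X i, mem_parabolicBall_self (X i) (hr i hi)⟩)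
  lift u to Finset ι using s.finite_toSet.subset hus
  refine ⟨u, mod_cast hus, hdisj, iUnion₂_subset fun i hi => ?_⟩
  obtain ⟨j, hj, ⟨Z, ⟨hZi, hZi_gt, hZi_lt⟩, hZj, hZj_gt, hZj_lt⟩, hle⟩ := hcover i hi
  refine Subset.trans ?_ (subset_biUnion_of_mem (u := fun i => parabolicBall (X i) (5 * r i)) hj)
  have hri := hr i hi
  have hrj := hr j (hus hj)
  have hsq : r i ^ 2 ≤ (2 * r j) ^ 2 := by gcongr
  have hdist := dist_triangle_left (X i).1 (X j).1 Z.1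
  rw [mem_ball] at hZi hZj
  exact prod_mono (ball_subset_ball' (by linarith))
    (Ioo_subset_Ioo (by linarith [sq_nonneg (r j)]) (by linarith [sq_nonneg (r j)]))

theorem exists_finset_subset_biUnion_parabolicBall {K : Set (E × ℝ)} (hK : IsCompact K)
    {r : E × ℝ → ℝ} (hr : ∀ X ∈ K, 0 < r X) :
    ∃ s : Finset (E × ℝ), ↑s ⊆ K ∧ K ⊆ ⋃ X ∈ s, parabolicBall X (r X) :=
  hK.elim_nhds_subcover (fun X => parabolicBall X (r X)) fun X hX =>
    (isOpen_parabolicBall X _).mem_nhds (mem_parabolicBall_self X (hr X hX))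

variable [MeasurableSpace E]

theorem exists_radius_of_lt_measure_parabolicBall_sdiff (μ : Measure (E × ℝ)) {Γ : Set (E × ℝ)}
    (hΓ : IsOpen Γ) {X : E × ℝ} (hX : X ∈ Γ) {ε ρ : ℝ} {m : ℕ} (hρ : 0 < ρ)
    (hlt : ENNReal.ofReal (ε * ρ ^ m) < μ (parabolicBall X ρ \ Γ)) :
    ∃ r ∈ Ioc 0 ρ, ENNReal.ofReal (ε * r ^ m) < μ (parabolicBall X r \ Γ) ∧
      μ (parabolicBall X (r / 2) \ Γ) ≤ ENNReal.ofReal (ε * (r / 2) ^ m) := by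
  have hsmall : ∃ i : ℕ, μ (parabolicBall X (ρ / 2 ^ i) \ Γ) ≤
      ENNReal.ofReal (ε * (ρ / 2 ^ i) ^ m) := by
    obtain ⟨δ, hδ, hball⟩ := Metric.isOpen_iff.1 hΓ X hX
    obtain ⟨i, hi⟩ := pow_unbounded_of_one_lt (ρ / min δ 1) one_lt_two
    have hi_lt : ρ / 2 ^ i < min δ 1 := (div_lt_comm₀ (by positivity) (by positivity)).1 hi
    have hsub : parabolicBall X (ρ / 2 ^ i) ⊆ Γ :=
      (parabolicBall_subset_ball X ⟨by positivity, (hi_lt.trans_le (min_le_right _ _)).le⟩).trans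
        ((ball_subset_ball (hi_lt.trans_le (min_le_left _ _)).le).trans hball)
    exact ⟨i, by rw [sdiff_eq_empty.2 hsub, measure_empty]; exact zero_le⟩
  obtain ⟨i, hi, hi_succ⟩ :=
    Nat.exists_not_and_succ_of_not_zero_of_exists (by simpa using hlt) hsmall
  refine ⟨ρ / 2 ^ i, ⟨by positivity, div_le_self hρ.le (one_le_pow₀ one_le_two)⟩, not_le.1 hi, ?_⟩
  rwa [div_div, ← pow_succ]

variable [OpensMeasurableSpace E]

theorem measure_biUnion_parabolicBall_le_parabolicStack (μ : Measure E) (s : Finset ι)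
    (X : ι → E × ℝ) {r : ι → ℝ} (hr : ∀ i ∈ s, 0 < r i) {h : ℝ} (hh : 0 < h) :
    μ.prod volume (⋃ i ∈ s, parabolicBall (X i) (r i)) ≤
      ENNReal.ofReal (1 + 2 / h) * μ.prod volume (⋃ i ∈ s, parabolicStack h (X i) (r i)) := by
  classical
  have hmeas {f g : ι → ℝ} : MeasurableSet (⋃ i ∈ s, ball (X i).1 (r i) ×ˢ Ioo (f i) (g i)) :=
    Finset.measurableSet_biUnion _ fun _ _ => measurableSet_ball.prod measurableSet_Ioo
  have hsection (f g : ι → ℝ) (x : E) :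
      Prod.mk x ⁻¹' (⋃ i ∈ s, ball (X i).1 (r i) ×ˢ Ioo (f i) (g i)) =
        ⋃ i ∈ s.filter fun i => x ∈ ball (X i).1 (r i), Ioo (f i) (g i) := by
    ext t
    simp only [mem_preimage, mem_iUnion, mem_prod, Finset.mem_filter, exists_prop, and_assoc]
  unfold parabolicBall parabolicStack
  rw [Measure.prod_apply hmeas, Measure.prod_apply hmeas,
    ← lintegral_const_mul' _ _ ENNReal.ofReal_ne_top]
  refine lintegral_mono fun x => ?_
  rw [hsection, hsection]
  refine (measure_mono (iUnion₂_mono fun i _ => Ioo_subset_Ioo ?_ ?_)).trans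
    (volume_biUnion_Ioo_sub_mul_le (k := 2 / h) _ (fun i hi => ?_) (by positivity))
  · refine le_of_eq ?_
    field_simp
    ring
  · gcongr
    exact le_mul_of_one_le_left (sq_nonneg _) (by linarith)
  · have := hr i (Finset.mem_filter.1 hi).1
    gcongr
    exact lt_mul_of_one_lt_left (by positivity) (by linarith)

theorem mul_measure_biUnion_parabolicBall_le (μ : Measure (E × ℝ)) (s : Finset ι) (X : ι → E × ℝ)
    {r : ι → ℝ} (hr : ∀ i ∈ s, 0 < r i) {Γ : Set (E × ℝ)} (hΓ : MeasurableSet Γ) {e : ℝ≥0∞}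
    (he : ∀ i ∈ s, e * μ (parabolicBall (X i) (5 * r i)) ≤ μ (parabolicBall (X i) (r i) \ Γ)) :
    e * μ (⋃ i ∈ s, parabolicBall (X i) (r i)) ≤
      μ ((⋃ i ∈ s, parabolicBall (X i) (r i)) \ Γ) := by
  obtain ⟨u, hus, hdisj, hcover⟩ := exists_pairwiseDisjoint_parabolicBall s X hr
  calc e * μ (⋃ i ∈ s, parabolicBall (X i) (r i))
      ≤ e * ∑ i ∈ u, μ (parabolicBall (X i) (5 * r i)) := by
        gcongr
        exact (measure_mono hcover).trans (measure_biUnion_finset_le _ _)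
    _ = ∑ i ∈ u, e * μ (parabolicBall (X i) (5 * r i)) := Finset.mul_sum _ _ _
    _ ≤ ∑ i ∈ u, μ (parabolicBall (X i) (r i) \ Γ) :=
        Finset.sum_le_sum fun i hi => he i (hus hi)
    _ = μ (⋃ i ∈ u, parabolicBall (X i) (r i) \ Γ) :=
        (measure_biUnion_finset
          (fun i hi j hj hij => (hdisj hi hj hij).mono sdiff_subset sdiff_subset)
          fun i _ => (measurableSet_ball.prod measurableSet_Ioo).diff hΓ).symm
    _ ≤ μ ((⋃ i ∈ s, parabolicBall (X i) (r i)) \ Γ) := by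
        simp only [← iUnion_sdiff]
        exact measure_mono (sdiff_subset_sdiff_left (biUnion_subset_biUnion_left hus))

-- The parabolic balls of the cover carry measure `e |K|` outside `Γ`. Passing from them to their
-- stacks loses only the factor `1 + 2 / h`.
theorem mul_measure_le_parabolicStack (μ : Measure E) (s : Finset (E × ℝ)) {r : E × ℝ → ℝ}
    (hr : ∀ X ∈ s, 0 < r X) {Γ K : Set (E × ℝ)} (hΓ : MeasurableSet Γ) (hKΓ : K ⊆ Γ)
    (hKs : K ⊆ ⋃ X ∈ s, parabolicBall X (r X)) {e h : ℝ} (he : 0 ≤ e) (hh : 0 < h)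
    (hball : ∀ X ∈ s, ENNReal.ofReal e * μ.prod volume (parabolicBall X (5 * r X)) ≤
      μ.prod volume (parabolicBall X (r X) \ Γ)) :
    ENNReal.ofReal (1 + e) * μ.prod volume K ≤
      ENNReal.ofReal (1 + 2 / h) * μ.prod volume (⋃ X ∈ s, parabolicStack h X (r X)) := by
  set O := ⋃ X ∈ s, parabolicBall X (r X)
  calc ENNReal.ofReal (1 + e) * μ.prod volume K
      = μ.prod volume K + ENNReal.ofReal e * μ.prod volume K := by
        rw [ENNReal.ofReal_add zero_le_one he, ENNReal.ofReal_one, add_mul, one_mul]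
    _ ≤ μ.prod volume (O ∩ Γ) + ENNReal.ofReal e * μ.prod volume O := by
        gcongr
        exact subset_inter hKs hKΓ
    _ ≤ μ.prod volume (O ∩ Γ) + μ.prod volume (O \ Γ) := by
        gcongr
        exact mul_measure_biUnion_parabolicBall_le (μ.prod volume) s id hr hΓ hball
    _ = μ.prod volume O := measure_inter_add_sdiff O hΓ
    _ ≤ ENNReal.ofReal (1 + 2 / h) * μ.prod volume (⋃ X ∈ s, parabolicStack h X (r X)) :=
        measure_biUnion_parabolicBall_le_parabolicStack μ s id hr hh

end ParabolicBall

section Covering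

open Module

variable {E : Type*} [NormedAddCommGroup E] [NormedSpace ℝ E] [FiniteDimensional ℝ E]
  [MeasurableSpace E] [BorelSpace E] (μ : Measure E) [μ.IsAddHaarMeasure]

theorem measure_ball_prod_Ioo (y : E) {r : ℝ} (hr : 0 < r) (a b : ℝ) :
    μ.prod volume (ball y r ×ˢ Ioo a b) =
      ENNReal.ofReal (r ^ finrank ℝ E * (b - a)) * μ (ball 0 1) := by
  rw [Measure.prod_prod, Measure.addHaar_ball_of_pos μ y hr, Real.volume_Ioo,
    ENNReal.ofReal_mul (by positivity), mul_right_comm]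

theorem measure_parabolicBall (X : E × ℝ) {r : ℝ} (hr : 0 < r) :
    μ.prod volume (parabolicBall X r) =
      ENNReal.ofReal (2 * r ^ (finrank ℝ E + 2)) * μ (ball 0 1) := by
  rw [parabolicBall, measure_ball_prod_Ioo μ _ hr]
  ring_nf

theorem exists_pos_mul_measure_parabolicBall_le {ε : ℝ} (hε : 0 < ε) :
    ∃ e > 0, ∀ (X : E × ℝ) {r : ℝ}, 0 < r →
      ENNReal.ofReal e * μ.prod volume (parabolicBall X (5 * r)) ≤
        ENNReal.ofReal (ε * r ^ (finrank ℝ E + 2)) := by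
  have hball_lt : μ (ball 0 1) < ∞ := measure_ball_lt_top
  have hball : 0 < (μ (ball 0 1)).toReal :=
    toReal_pos (measure_ball_pos μ 0 one_pos).ne' hball_lt.ne
  refine ⟨ε / (2 * 5 ^ (finrank ℝ E + 2) * (μ (ball 0 1)).toReal), by positivity,
    fun X r hr => le_of_eq ?_⟩
  rw [measure_parabolicBall μ X (by positivity), ← ENNReal.ofReal_toReal_eq_iff.2 hball_lt.ne,
    ← ENNReal.ofReal_mul (by positivity), ← ENNReal.ofReal_mul (by positivity),
    toReal_ofReal hball.le, mul_pow]
  field_simp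

theorem exists_mul_measure_le_of_parabolicStack_subset {ε : ℝ} (hε : 0 < ε) :
    ∃ A h : ℝ, 1 < A ∧ 0 < h ∧ ∀ (Γ V : Set (E × ℝ)) (ρ : ℝ), IsOpen Γ → 0 < ρ →
      (∀ X ∈ Γ, ENNReal.ofReal (ε * ρ ^ (finrank ℝ E + 2)) <
        μ.prod volume (parabolicBall X ρ \ Γ)) →
      (∀ X ∈ Γ, ∀ r ∈ Ioc 0 ρ, μ.prod volume (parabolicBall X (r / 2) \ Γ) ≤
        ENNReal.ofReal (ε * (r / 2) ^ (finrank ℝ E + 2)) → parabolicStack h X r ⊆ V) →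
      ENNReal.ofReal A * μ.prod volume Γ ≤ μ.prod volume V := by
  obtain ⟨e, he, hball⟩ := exists_pos_mul_measure_parabolicBall_le μ hε
  refine ⟨(1 + e) / (1 + e / 2), 4 / e, by rw [one_lt_div (by positivity)]; linarith,
    by positivity, fun Γ V ρ hΓ hρ hlt hstack => ?_⟩
  have hradius X (hX : X ∈ Γ) := exists_radius_of_lt_measure_parabolicBall_sdiff
    (μ.prod volume) hΓ hX hρ (hlt X hX)
  choose! r hr hr_lt hr_le using hradius
  simp only [hΓ.measure_eq_iSup_isCompact, ENNReal.mul_iSup]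
  refine iSup_le fun K => iSup₂_le fun hKΓ hK => ?_
  obtain ⟨s, hsK, hKs⟩ :=
    exists_finset_subset_biUnion_parabolicBall hK fun X hX => (hr X (hKΓ hX)).1
  have hsΓ : ∀ X ∈ s, X ∈ Γ := fun X hX => hKΓ (hsK hX)
  have hmul := mul_measure_le_parabolicStack μ s (fun X hX => (hr X (hsΓ X hX)).1)
    hΓ.measurableSet hKΓ hKs he.le (h := 4 / e) (by positivity) fun X hX =>
      (hball X (hr X (hsΓ X hX)).1).trans (hr_lt X (hsΓ X hX)).le
  have hloss : 1 + 2 / (4 / e) = 1 + e / 2 := by field_simp; ring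
  have hgain : 1 + e = (1 + e / 2) * ((1 + e) / (1 + e / 2)) := by field_simp
  rw [hloss, hgain, ENNReal.ofReal_mul (by positivity), mul_assoc,
    ENNReal.mul_le_mul_iff_right (ofReal_pos.2 (by positivity)).ne' ofReal_ne_top] at hmul
  refine hmul.trans (measure_mono (iUnion₂_subset fun X hX => ?_))
  exact hstack X (hsΓ X hX) (r X) (hr X (hsΓ X hX)) (hr_le X (hsΓ X hX))

end Covering

/-- The part of the cylinder `ball y R ×ˢ Ioo a b` where `v` exceeds the level `l`. -/
def superlevelCylinder (v : En n × ℝ → ℝ) (l : ℝ) (y : En n) (R a b : ℝ) : Set (En n × ℝ) :=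
  {X | l < v X} ∩ ball y R ×ˢ Ioo a b

theorem isOpen_superlevelCylinder {v : En n × ℝ → ℝ} (hv : Continuous v) (l : ℝ) (y : En n)
    (R a b : ℝ) : IsOpen (superlevelCylinder v l y R a b) :=
  (isOpen_lt continuous_const hv).inter (isOpen_ball.prod isOpen_Ioo)

/-- The expansion of superlevel sets in time ("ink spots"): as long as the superlevel set
`{v > l}` in a cylinder has no parabolic ball of radius `ρ` that it almost fills, the superlevel set
`{v > c * l}` in a slightly larger cylinder is larger by the factor `A`. -/
def InkSpotsEstimate (n : ℕ) (ν S ε A h c : ℝ) : Prop :=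
  ∀ (v : En n × ℝ → ℝ) (y : En n) (r a s : ℝ), IsNonnegSupersolution ν S y r a s v →
    ∀ R b ρ l : ℝ, 0 < ρ → 0 < l → R + 2 * ρ ≤ r → b + (1 + h) * ρ ^ 2 ≤ s →
      (∀ X ∈ superlevelCylinder v l y R a b, ENNReal.ofReal (ε * ρ ^ (n + 2)) <
        volume (parabolicBall X ρ \ superlevelCylinder v l y R a b)) →
      ENNReal.ofReal A * volume (superlevelCylinder v l y R a b) ≤
        volume (superlevelCylinder v (c * l) y (R + ρ) a (b + (1 + h) * ρ ^ 2))

section Expansion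

variable {ν S ε θ c r a s l ρ R b A h : ℝ} {y : En n} {v : En n × ℝ → ℝ}

theorem PropagationEstimate.le_of_volume_parabolicBall_sdiff_le {Λ τ₁ τ₂ : ℝ}
    (hP : PropagationEstimate n ν S ε Λ τ₁ τ₂ c) (hv : IsNonnegSupersolution ν S y r a s v)
    (hρ : 0 < ρ) (hl : 0 < l) {X Z : En n × ℝ} (hX : dist X.1 y + 2 * ρ < r)
    (hZ : dist Z.1 y + 2 * ρ < r) (ha : a ≤ X.2) (hs : Z.2 ≤ s) {a' : ℝ}
    (hvol : volume (parabolicBall X ρ \ superlevelCylinder v l y R a' b) ≤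
      ENNReal.ofReal (ε * ρ ^ (n + 2)))
    (hdist : dist X.1 Z.1 ≤ Λ * ρ)
    (hZt : Z.2 ∈ Icc (X.2 + (1 + τ₁) * ρ ^ 2) (X.2 + (1 + τ₂) * ρ ^ 2)) : c * l ≤ v Z := by
  have hsub : {W | v W < l} ∩ ball X.1 ρ ×ˢ Ioo (X.2 + ρ ^ 2 - ρ ^ 2) (X.2 + ρ ^ 2) ⊆
      parabolicBall X ρ \ superlevelCylinder v l y R a' b := fun W ⟨hlt, hW⟩ =>
    ⟨prod_mono_right (Ioo_subset_Ioo_left (by linarith [sq_nonneg ρ])) hW,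
      fun hW' => (mem_ofPred_eq.mp hlt).not_gt (mem_ofPred_eq.mp hW'.1)⟩
  exact hP v y r a s hv X.1 Z.1 ρ (X.2 + ρ ^ 2) Z.2 l hρ hl (closedBall_subset_ball' (by linarith))
    (closedBall_subset_ball' (by linarith)) (by linarith) hs ((measure_mono hsub).trans hvol) hdist
    ⟨by linarith [hZt.1], by linarith [hZt.2]⟩

theorem PropagationEstimate.parabolicStack_subset_superlevelCylinder (hh : 0 ≤ h)
    (hP : PropagationEstimate n ν S ε 2 3 (3 + 4 * h) c) (hc : 0 < c)
    (hv : IsNonnegSupersolution ν S y r a s v) (hl : 0 < l) (hR : R + 2 * ρ ≤ r)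
    (hb : b + (1 + h) * ρ ^ 2 ≤ s) {X : En n × ℝ} (hX : X ∈ superlevelCylinder v l y R a b)
    {q : ℝ} (hq : q ∈ Ioc 0 ρ)
    (hvol : volume (parabolicBall X (q / 2) \ superlevelCylinder v l y R a b) ≤
      ENNReal.ofReal (ε * (q / 2) ^ (n + 2))) :
    parabolicStack h X q ⊆
      superlevelCylinder v (c / 2 * l) y (R + ρ) a (b + (1 + h) * ρ ^ 2) := by
  intro Z ⟨hZ, hZ_gt, hZ_lt⟩
  obtain ⟨-, hXR, hX_gt, hX_lt⟩ := hX
  obtain ⟨hq0, hqρ⟩ := hq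
  rw [mem_ball] at hXR hZ
  have hheight : (1 + h) * q ^ 2 ≤ (1 + h) * ρ ^ 2 := by gcongr
  have htriangle := dist_triangle Z.1 X.1 y
  have hcl : 0 < c * l := mul_pos hc hl
  have hgrowth : c * l ≤ v Z := hP.le_of_volume_parabolicBall_sdiff_le hv (half_pos hq0) hl
    (by linarith) (by linarith) hX_gt.le (by linarith) hvol (by rw [dist_comm]; linarith)
    ⟨by linarith, by linarith⟩
  refine ⟨?_, ?_, ?_, by linarith⟩
  · rw [mem_ofPred_eq]
    linarith
  · rw [mem_ball]
    linarith
  · linarith [sq_nonneg q]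

theorem GrowthEstimate.exists_inkSpotsEstimate (hG : GrowthEstimate n ν S ε θ c) (hε : 0 < ε)
    (hθ : θ ∈ Ioc 0 1) (hc : c ∈ Ioc 0 1) :
    ∃ A h c' : ℝ, 1 < A ∧ 0 < h ∧ c' ∈ Ioc 0 1 ∧ InkSpotsEstimate n ν S ε A h c' := by
  obtain ⟨A, h, hA, hh, hcover⟩ := exists_mul_measure_le_of_parabolicStack_subset
    (volume : Measure (En n)) hε
  rw [finrank_euclideanSpace_fin] at hcover
  obtain ⟨c', ⟨hc'0, hc'1⟩, hP⟩ :=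
    hG.exists_propagationEstimate hθ hc two_pos three_pos (3 + 4 * h)
  refine ⟨A, h, c' / 2, hA, hh, ⟨half_pos hc'0, by linarith⟩, ?_⟩
  intro v y r a s hv R b ρ l hρ hl hR hb hbad
  exact hcover _ _ ρ (isOpen_superlevelCylinder hv.continuous l y R a b) hρ hbad
    fun X hX q hq hvol =>
      hP.parabolicStack_subset_superlevelCylinder hh.le hc'0 hv hl hR hb hX hq hvol

theorem InkSpotsEstimate.pow_mul_volume_le (hI : InkSpotsEstimate n ν S ε A h c) (hc : 0 < c)
    (hh : 0 ≤ h) (hv : IsNonnegSupersolution ν S y r a s v) (hρ : 0 < ρ) (hl : 0 < l) {N : ℕ}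
    (hR : R + (N + 1) * ρ ≤ r) (hb : b + N * ((1 + h) * ρ ^ 2) ≤ s)
    (hbad : ∀ k < N, ∀ X ∈ superlevelCylinder v (c ^ k * l) y (R + k * ρ) a
        (b + k * ((1 + h) * ρ ^ 2)),
      ENNReal.ofReal (ε * ρ ^ (n + 2)) < volume (parabolicBall X ρ \
        superlevelCylinder v (c ^ k * l) y (R + k * ρ) a (b + k * ((1 + h) * ρ ^ 2)))) :
    ENNReal.ofReal A ^ N * volume (superlevelCylinder v l y R a b) ≤
      volume (superlevelCylinder v (c ^ N * l) y (R + N * ρ) a (b + N * ((1 + h) * ρ ^ 2))) := by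
  induction N with
  | zero => simp
  | succ N ih =>
    have hheight : 0 ≤ (1 + h) * ρ ^ 2 := by positivity
    push_cast at hR hb
    specialize ih (by linarith) (by linarith) fun k hk => hbad k (hk.trans N.lt_succ_self)
    calc ENNReal.ofReal A ^ (N + 1) * volume (superlevelCylinder v l y R a b)
        = ENNReal.ofReal A * (ENNReal.ofReal A ^ N * volume (superlevelCylinder v l y R a b)) := by
          ring
      _ ≤ ENNReal.ofReal A * volume (superlevelCylinder v (c ^ N * l) y (R + N * ρ) a
            (b + N * ((1 + h) * ρ ^ 2))) := by gcongr
      _ ≤ volume (superlevelCylinder v (c * (c ^ N * l)) y (R + N * ρ + ρ) a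
            (b + N * ((1 + h) * ρ ^ 2) + (1 + h) * ρ ^ 2)) :=
          hI v y r a s hv _ _ ρ _ hρ (by positivity) (by linarith) (by linarith)
            (hbad N N.lt_succ_self)
      _ = _ := by push_cast; ring_nf

theorem PropagationEstimate.lt_volume_parabolicBall_sdiff {κ : ℝ} (hκ : 0 < κ) (hr : 0 < r)
    (hP : PropagationEstimate n ν S ε (2 / κ) 1 (1 / κ ^ 2) c)
    (hv : IsNonnegSupersolution ν S y r (s - r ^ 2) s v) (hl : 0 < l) (hR : R + 2 * (κ * r) ≤ r)
    (hb : b + 2 * (κ * r) ^ 2 ≤ s - r ^ 2 / 4) {Z : En n × ℝ} (hκ8 : κ ≤ 1 / 8)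
    (hZ : Z ∈ closedBall y (r / 2) ×ˢ Icc (s - r ^ 2 / 4) s) (hlt : v Z < c * l)
    {X : En n × ℝ} (hX : X ∈ superlevelCylinder v l y R (s - r ^ 2) b) :
    ENNReal.ofReal (ε * (κ * r) ^ (n + 2)) <
      volume (parabolicBall X (κ * r) \ superlevelCylinder v l y R (s - r ^ 2) b) := by
  contrapose! hlt
  obtain ⟨-, hXR, hX_gt, hX_lt⟩ := hX
  obtain ⟨hZy, hZ_ge, hZ_le⟩ := hZ
  rw [mem_ball] at hXR
  rw [mem_closedBall] at hZy
  have hκr : κ * r ≤ 1 / 8 * r := by gcongr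
  have hκr0 : 0 < κ * r := by positivity
  have hrange : 2 / κ * (κ * r) = 2 * r := by field_simp
  have hduration : (1 + 1 / κ ^ 2) * (κ * r) ^ 2 = (κ * r) ^ 2 + r ^ 2 := by field_simp
  exact hP.le_of_volume_parabolicBall_sdiff_le hv hκr0 hl (by linarith) (by linarith)
    hX_gt.le hZ_le hlt (by linarith [dist_triangle_right X.1 Z.1 y])
    ⟨by linarith, by linarith [sq_nonneg (κ * r)]⟩

theorem InkSpotsEstimate.pow_mul_volume_le_of_lt (hI : InkSpotsEstimate n ν S ε A h c)
    (hc : c ∈ Ioc 0 1) (hh : 0 ≤ h) {N : ℕ} {κ c' : ℝ} (hκ : 0 < κ)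
    (hκN : 16 * (N + 1) * (1 + h) * κ ≤ 1) (hc' : 0 ≤ c')
    (hP : PropagationEstimate n ν S ε (2 / κ) 1 (1 / κ ^ 2) c') (hr : 0 < r)
    (hv : IsNonnegSupersolution ν S y r (s - r ^ 2) s v) (hl : 0 < l) {Z : En n × ℝ}
    (hZ : Z ∈ closedBall y (r / 2) ×ˢ Icc (s - r ^ 2 / 4) s) (hlt : v Z < c' * c ^ N * l) :
    ENNReal.ofReal A ^ N *
        volume (superlevelCylinder v l y (r / 2) (s - r ^ 2) (s - 3 / 4 * r ^ 2)) ≤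
      volume (ball y r ×ˢ Ioo (s - r ^ 2) s) := by
  have hr2 : 0 < r ^ 2 := by positivity
  have hκ16 : 16 * κ ≤ 1 :=
    calc 16 * κ = 16 * 1 * 1 * κ := by ring
      _ ≤ 16 * (N + 1) * (1 + h) * κ := by gcongr <;> linarith [N.cast_nonneg (α := ℝ)]
      _ ≤ 1 := hκN
  have hspace : 16 * (N + 1) * (κ * r) ≤ r :=
    calc 16 * (N + 1) * (κ * r) = 16 * (N + 1) * 1 * κ * r := by ring
      _ ≤ 16 * (N + 1) * (1 + h) * κ * r := by gcongr; linarith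
      _ ≤ r := mul_le_of_le_one_left hr.le hκN
  have htime : 16 * (N + 1) * ((1 + h) * (κ * r) ^ 2) ≤ r ^ 2 :=
    calc 16 * (N + 1) * ((1 + h) * (κ * r) ^ 2) = 16 * (N + 1) * (1 + h) * κ * (κ * r ^ 2) := by
          ring
      _ ≤ 1 * (1 * r ^ 2) := by gcongr; linarith
      _ = r ^ 2 := by ring
  have hκr : 0 < κ * r := by positivity
  have hheight : (κ * r) ^ 2 ≤ (1 + h) * (κ * r) ^ 2 :=
    le_mul_of_one_le_left (sq_nonneg _) (by linarith)
  have hheight0 : 0 ≤ (1 + h) * (κ * r) ^ 2 := by positivity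
  refine (hI.pow_mul_volume_le hc.1 hh hv hκr hl (by linarith) (by linarith)
    fun k hk X hX => ?_).trans (measure_mono fun X hX => ?_)
  · have hkN : (k : ℝ) ≤ N := Nat.cast_le.2 hk.le
    have hk_space : 0 ≤ k * (κ * r) ∧ k * (κ * r) ≤ N * (κ * r) := ⟨by positivity, by gcongr⟩
    have hk_time : 0 ≤ k * ((1 + h) * (κ * r) ^ 2) ∧
        k * ((1 + h) * (κ * r) ^ 2) ≤ N * ((1 + h) * (κ * r) ^ 2) := ⟨by positivity, by gcongr⟩
    have hlevel : c' * c ^ N * l ≤ c' * (c ^ k * l) := by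
      rw [mul_assoc]
      gcongr ?_ * (?_ * _)
      exact pow_le_pow_of_le_one hc.1.le hc.2 hk.le
    exact hP.lt_volume_parabolicBall_sdiff hκ hr hv (mul_pos (pow_pos hc.1 k) hl)
      (by linarith [hk_space.2]) (by linarith [hk_time.2]) (by linarith) hZ (hlt.trans_le hlevel) hX
  · exact ⟨ball_subset_ball (by linarith) hX.2.1, hX.2.2.1, hX.2.2.2.trans_le (by linarith)⟩

theorem volume_ball_prod_Ioo_sub_sq (y : En n) {r : ℝ} (hr : 0 < r) (s : ℝ) :
    volume (ball y r ×ˢ Ioo (s - r ^ 2) s) = ENNReal.ofReal (2 ^ (n + 2)) *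
      volume (ball y (r / 2) ×ˢ Ioo (s - r ^ 2) (s - 3 / 4 * r ^ 2)) := by
  rw [Measure.volume_eq_prod, measure_ball_prod_Ioo volume y hr,
    measure_ball_prod_Ioo volume y (half_pos hr), ← mul_assoc, ← ENNReal.ofReal_mul (by positivity),
    finrank_euclideanSpace_fin]
  congr 2
  rw [div_pow, pow_add]
  field_simp
  ring

theorem exists_mul_le_of_mul_volume_le_volume_superlevelCylinder (hn : n ≠ 0) (hν : 1 ≤ ν)
    (S : ℝ) {m : ℝ} (hm : 0 < m) :
    ∃ c ∈ Ioc (0 : ℝ) 1, ∀ (v : En n × ℝ → ℝ) (y : En n) (r s l : ℝ), 0 < r → 0 < l →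
      IsNonnegSupersolution ν S y r (s - r ^ 2) s v →
      ENNReal.ofReal m * volume (ball y (r / 2) ×ˢ Ioo (s - r ^ 2) (s - 3 / 4 * r ^ 2)) ≤
        volume (superlevelCylinder v l y (r / 2) (s - r ^ 2) (s - 3 / 4 * r ^ 2)) →
      ∀ Z ∈ closedBall y (r / 2) ×ˢ Icc (s - r ^ 2 / 4) s, c * l ≤ v Z := by
  obtain ⟨ε, θ, c₀, hε, hθ, hc₀, hG⟩ := exists_growthEstimate hn hν S
  obtain ⟨A, h, c₁, hA, hh, hc₁, hI⟩ := hG.exists_inkSpotsEstimate hε hθ hc₀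
  obtain ⟨N, hN⟩ := pow_unbounded_of_one_lt (2 ^ (n + 2) / m) hA
  have hκ : 0 < 1 / (16 * (N + 1) * (1 + h)) := by positivity
  have hκN : 16 * (N + 1) * (1 + h) * (1 / (16 * (N + 1) * (1 + h))) ≤ 1 := by field_simp; rfl
  generalize 1 / (16 * (N + 1) * (1 + h)) = κ at hκ hκN
  obtain ⟨c₂, hc₂, hP⟩ := hG.exists_propagationEstimate hθ hc₀ (div_pos two_pos hκ) one_pos
    (1 / κ ^ 2)
  refine ⟨c₂ * c₁ ^ N, ⟨mul_pos hc₂.1 (pow_pos hc₁.1 N),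
    mul_le_one₀ hc₂.2 (pow_nonneg hc₁.1.le N) (pow_le_one₀ hc₁.1.le hc₁.2)⟩, ?_⟩
  intro v y r s l hr hl hv hvol Z hZ
  by_contra! hlt
  have hexpand := hI.pow_mul_volume_le_of_lt hc₁ hh.le hκ hκN hc₂.1.le hP hr hv hl hZ hlt
  have hQ_pos : 0 < volume (ball y (r / 2) ×ˢ Ioo (s - r ^ 2) (s - 3 / 4 * r ^ 2)) :=
    (isOpen_ball.prod isOpen_Ioo).measure_pos _
      ((nonempty_ball.2 (half_pos hr)).prod (nonempty_Ioo.2 (by linarith [pow_pos hr 2])))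
  have hQ_lt : volume (ball y (r / 2) ×ˢ Ioo (s - r ^ 2) (s - 3 / 4 * r ^ 2)) < ∞ :=
    (isBounded_ball.prod (isBounded_Ioo _ _)).measure_lt_top
  have hratio : ENNReal.ofReal (A ^ N * m) ≤ ENNReal.ofReal (2 ^ (n + 2)) := by
    rw [← ENNReal.mul_le_mul_iff_left hQ_pos.ne' hQ_lt.ne, ← volume_ball_prod_Ioo_sub_sq y hr s,
      ENNReal.ofReal_mul (by positivity), ENNReal.ofReal_pow (by positivity), mul_assoc]
    exact (by gcongr : _ ≤ _).trans hexpand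
  rw [ENNReal.ofReal_le_ofReal_iff (by positivity), ← le_div_iff₀ hm] at hratio
  exact hN.not_ge hratio

end Expansion

theorem exists_continuous_eqOn_of_continuousOn.{u, v} {X : Type u} {Y : Type v}
    [TopologicalSpace X] [NormalSpace X] [TopologicalSpace Y] [TietzeExtension.{u, v} Y] {K : Set X}
    (hK : IsClosed K) {f : X → Y} (hf : ContinuousOn f K) :
    ∃ g : X → Y, Continuous g ∧ EqOn g f K := by
  obtain ⟨g, hg⟩ := ContinuousMap.exists_restrict_eq hK ⟨K.domRestrict f, hf.domRestrict⟩
  exact ⟨g, g.continuous, fun x hx => DFunLike.congr_fun hg ⟨x, hx⟩⟩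

section SpatialDerivatives

/-- The gradient of `u` with respect to the spatial variables, assembled from the partial
derivatives `Dx u i`. -/
def spatialGradient (u : En n × ℝ → ℝ) (X : En n × ℝ) : En n :=
  WithLp.toLp 2 fun i => Dx u i X

/-- The Hessian of `u` with respect to the spatial variables, as the derivative of
`spatialGradient`. -/
def spatialHessian (u : En n × ℝ → ℝ) (X : En n × ℝ) : En n →L[ℝ] En n :=
  fderiv ℝ (fun x => spatialGradient u (x, X.2)) X.1

variable {u : En n × ℝ → ℝ} {X : En n × ℝ} {K U : Set (En n × ℝ)}

theorem hasGradientAt_spatialGradient (hu : DifferentiableAt ℝ (fun x => u (x, X.2)) X.1) :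
    HasGradientAt (fun x => u (x, X.2)) (spatialGradient u X) X.1 := by
  convert hu.hasGradientAt using 1
  ext i
  have hcoord := EuclideanSpace.inner_single_right i (1 : ℝ) (gradient (fun x => u (x, X.2)) X.1)
  simp only [one_mul, conj_trivial] at hcoord
  rw [← hcoord, gradient, InnerProductSpace.toDual_symm_apply]
  rfl

theorem hasFDerivAt_spatialGradient
    (hu : ∀ j, DifferentiableAt ℝ (fun x => Dx u j (x, X.2)) X.1) :
    HasFDerivAt (fun x => spatialGradient u (x, X.2)) (spatialHessian u X) X.1 :=
  (differentiableAt_euclidean.2 hu).hasFDerivAt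

theorem spatialHessian_single (hu : ∀ j, DifferentiableAt ℝ (fun x => Dx u j (x, X.2)) X.1)
    (i j : Fin n) : spatialHessian u X (EuclideanSpace.single i 1) j = Dxx u i j X := by
  have hcoord : HasFDerivAt (fun x => Dx u j (x, X.2))
      (EuclideanSpace.proj (𝕜 := ℝ) j ∘L spatialHessian u X) X.1 :=
    (EuclideanSpace.proj (𝕜 := ℝ) j).hasFDerivAt.comp X.1 (hasFDerivAt_spatialGradient hu)
  rw [Dxx, Dx, hcoord.fderiv]
  rfl

theorem hessTrace_spatialHessian (A : Matrix (Fin n) (Fin n) ℝ)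
    (hu : ∀ j, DifferentiableAt ℝ (fun x => Dx u j (x, X.2)) X.1) :
    hessTrace A (spatialHessian u X) = ∑ i, ∑ j, A i j * Dxx u i j X := by
  simp only [hessTrace_apply, spatialHessian_single hu]

namespace IsC21

theorem continuousOn_spatialGradient (hu : IsC21 u K) : ContinuousOn (spatialGradient u) K :=
  (PiLp.continuous_toLp 2 _).comp_continuousOn (continuousOn_pi.2 hu.cont_x)

theorem continuousOn_spatialHessian (hu : IsC21 u K) : ContinuousOn (spatialHessian u) K := by
  refine continuousOn_clm_apply.2 fun y => ?_
  have hsum : EqOn (fun X => spatialHessian u X y)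
      (fun X => ∑ i, y i • WithLp.toLp 2 fun j => Dxx u i j X) K := fun X hX => by
    have hexpand := (EuclideanSpace.basisFun (Fin n) ℝ).sum_repr y
    simp only [EuclideanSpace.basisFun_repr, EuclideanSpace.basisFun_apply] at hexpand
    conv_lhs => rw [← hexpand]
    simp only [map_sum, map_smul]
    refine Finset.sum_congr rfl fun i _ => congrArg (y i • ·) ?_
    ext j
    exact spatialHessian_single (fun j => hu.diff_xx j X hX) i j
  refine ContinuousOn.congr ?_ hsum
  refine continuousOn_finsetSum _ fun i _ => ContinuousOn.fun_const_smul ?_ (y i)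
  exact (PiLp.continuous_toLp 2 _).comp_continuousOn (continuousOn_pi.2 (hu.cont_xx i))

theorem exists_jet (hu : IsC21 u K) (hK : IsClosed K) (hU : IsOpen U) (hUK : U ⊆ K) :
    ∃ w : Jet n, w.IsJetOn U ∧ EqOn w.val u K ∧ EqOn w.grad (spatialGradient u) K ∧
      EqOn w.hess (spatialHessian u) K ∧ EqOn w.dt (Dt u) K := by
  obtain ⟨v, hv, hv_eq⟩ := exists_continuous_eqOn_of_continuousOn hK hu.cont
  obtain ⟨G, hG, hG_eq⟩ := exists_continuous_eqOn_of_continuousOn hK hu.continuousOn_spatialGradient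
  obtain ⟨H, hH, hH_eq⟩ := exists_continuous_eqOn_of_continuousOn hK hu.continuousOn_spatialHessian
  obtain ⟨d, hd, hd_eq⟩ := exists_continuous_eqOn_of_continuousOn hK hu.cont_t
  have hspace (X) (hX : X ∈ U) : ∀ᶠ x in nhds X.1, (x, X.2) ∈ K :=
    (Continuous.prodMk_left X.2).continuousAt.eventually_mem
      (Filter.mem_of_superset (hU.mem_nhds hX) hUK)
  have htime (X) (hX : X ∈ U) : ∀ᶠ t in nhds X.2, (X.1, t) ∈ K :=
    (Continuous.prodMk_right X.1).continuousAt.eventually_mem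
      (Filter.mem_of_superset (hU.mem_nhds hX) hUK)
  refine ⟨⟨v, G, H, d⟩, ⟨hv, hG, hH, hd, fun X hX => ?_, fun X hX => ?_, fun X hX => ?_⟩,
    hv_eq, hG_eq, hH_eq, hd_eq⟩
  · change HasGradientAt _ (G X) _
    rw [hG_eq (hUK hX)]
    exact (hasGradientAt_spatialGradient (hu.diff_x X (hUK hX))).congr_of_eventuallyEq <|
      (hspace X hX).mono fun x hx => hv_eq hx
  · change HasFDerivAt _ (H X) _
    rw [hH_eq (hUK hX)]
    exact (hasFDerivAt_spatialGradient fun j => hu.diff_xx j X (hUK hX)).congr_of_eventuallyEq <|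
      (hspace X hX).mono fun x hx => hG_eq hx
  · change HasDerivAt _ (d X) _
    rw [hd_eq (hUK hX)]
    exact (hu.diff_t X (hUK hX)).hasDerivAt.congr_of_eventuallyEq <|
      (htime X hX).mono fun t ht => hv_eq ht

end IsC21

end SpatialDerivatives

section Cylinders

variable {Y : En n × ℝ} {r : ℝ}

theorem closure_pcyl (Y : En n × ℝ) (hr : 0 < r) :
    closure (pcyl Y r) = closedBall Y.1 r ×ˢ Icc (Y.2 - r ^ 2) Y.2 := by
  rw [pcyl, box, closure_prod_eq, closure_ball _ hr.ne',
    closure_Ioo (sub_lt_self _ (by positivity)).ne]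

theorem pcyl_half_sub (Y : En n × ℝ) (r : ℝ) :
    pcyl (Y.1, Y.2 - 3 / 4 * r ^ 2) (r / 2) =
      ball Y.1 (r / 2) ×ˢ Ioo (Y.2 - r ^ 2) (Y.2 - 3 / 4 * r ^ 2) := by
  rw [pcyl, box]
  ring_nf

theorem isCompact_closure_pcyl (Y : En n × ℝ) (hr : 0 < r) : IsCompact (closure (pcyl Y r)) := by
  rw [closure_pcyl Y hr]
  exact (isCompact_closedBall _ _).prod isCompact_Icc

theorem pcyl_half_subset (Y : En n × ℝ) (hr : 0 < r) : pcyl Y (r / 2) ⊆ pcyl Y r :=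
  prod_mono (ball_subset_ball (half_le_self hr.le)) (Ioo_subset_Ioo_left (by nlinarith))

theorem pcyl_half_sub_subset (Y : En n × ℝ) (hr : 0 < r) :
    pcyl (Y.1, Y.2 - 3 / 4 * r ^ 2) (r / 2) ⊆ pcyl Y r := by
  rw [pcyl_half_sub]
  exact prod_mono (ball_subset_ball (half_le_self hr.le)) (Ioo_subset_Ioo_right (by nlinarith))

theorem setOf_mk_mem_pcyl {x : En n} (hx : x ∈ ball Y.1 r) :
    {t | (x, t) ∈ pcyl Y r} = Ioo (Y.2 - r ^ 2) Y.2 :=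
  Set.ext fun _ => and_iff_right hx

end Cylinders

section SupPos

variable {u : En n × ℝ → ℝ} {K : Set (En n × ℝ)} {C : ℝ}

theorem supPos_nonneg (u : En n × ℝ → ℝ) (K : Set (En n × ℝ)) : 0 ≤ supPos u K :=
  Real.sSup_nonneg (forall_mem_image.2 fun _ _ => le_max_right _ _)

theorem supPos_le (hC : 0 ≤ C) (h : ∀ X ∈ K, u X ≤ C) : supPos u K ≤ C :=
  Real.sSup_le (forall_mem_image.2 fun X hX => max_le (h X hX) hC) hC

theorem le_supPos (hK : IsCompact K) (hu : ContinuousOn u K) {X : En n × ℝ} (hX : X ∈ K) :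
    u X ≤ supPos u K :=
  (le_max_left _ _).trans
    (le_csSup (hK.image_of_continuousOn (hu.sup continuousOn_const)).bddAbove
      (mem_image_of_mem _ hX))

end SupPos

theorem mul_measure_le_of_measure_inter_le {α : Type*} [MeasurableSpace α] {m : Measure α}
    {s t t' : Set α} {θ : ℝ} (hs : m s ≠ ∞) (hcover : s ⊆ t ∪ t')
    (ht : m (s ∩ t) ≤ ENNReal.ofReal θ * m s) :
    ENNReal.ofReal (1 - θ.toNNReal) * m s ≤ m t' :=
  calc ENNReal.ofReal (1 - θ.toNNReal) * m s
      = m s - ENNReal.ofReal θ * m s := by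
        rw [ENNReal.ofReal_sub 1 θ.toNNReal.coe_nonneg, ENNReal.sub_mul fun _ _ => hs,
          ENNReal.ofReal_one, one_mul, ENNReal.ofReal_coe_nnreal, ENNReal.ofReal]
    _ ≤ m s - m (s ∩ t) := tsub_le_tsub_left ht _
    _ ≤ m (s \ (s ∩ t)) := le_measure_sdiff
    _ ≤ m t' := measure_mono fun x hx => (hcover hx.1).resolve_left fun hxt => hx.2 ⟨hx.1, hxt⟩

section Subsolutions

variable {u : En n × ℝ → ℝ} {a : En n × ℝ → Matrix (Fin n) (Fin n) ℝ} {b : En n × ℝ → En n}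
  {Y : En n × ℝ} {r ν S M : ℝ}

theorem Lop_eq_hessTrace_add_inner {X : En n × ℝ}
    (hu : ∀ j, DifferentiableAt ℝ (fun x => Dx u j (x, X.2)) X.1) :
    Lop a b u X = hessTrace (a X) (spatialHessian u X) + ⟪spatialGradient u X, b X⟫ := by
  rw [Lop, hessTrace_spatialHessian _ hu, PiLp.inner_apply]
  rfl

theorem IsC21.exists_isNonnegSupersolution (hu : IsC21 u (closure (pcyl Y r)))
    (ha : UnifParabolic ν a (pcyl Y r)) (hb : LxnLtinfPow b (pcyl Y r) ≤ ENNReal.ofReal S)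
    (hsub : ∀ X ∈ pcyl Y r, 0 ≤ -Dt u X + Lop a b u X) (hr : 0 < r)
    (hM : ∀ X ∈ closure (pcyl Y r), u X ≤ M) :
    ∃ v, IsNonnegSupersolution ν S Y.1 r (Y.2 - r ^ 2) Y.2 v ∧
      ∀ X ∈ closure (pcyl Y r), v X = M - u X := by
  obtain ⟨w, hw, hval, hgrad, hhess, hdt⟩ :=
    hu.exists_jet isClosed_closure (isOpen_ball.prod isOpen_Ioo) subset_closure
  have hv (X) (hX : X ∈ closure (pcyl Y r)) : (Jet.ofTime (fun _ => M) - w).val X = M - u X :=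
    congrArg (M - ·) (hval hX)
  refine ⟨_, ⟨Jet.ofTime (fun _ => M) - w, fun x => essSup (fun t => (‖b (x, t)‖₊ : ℝ≥0∞))
    (volume.restrict {t | (x, t) ∈ pcyl Y r}), rfl, ⟨?_, fun X hX => ?_, fun x hx => ?_⟩,
    (setLIntegral_le_lintegral _ _).trans hb⟩, hv⟩
  · exact (Jet.isJetOn_ofTime contDiff_const _).sub hw
  · rw [← closure_pcyl Y hr] at hX
    rw [hv X hX]
    exact sub_nonneg.2 (hM X hX)
  · rw [setOf_mk_mem_pcyl hx]
    filter_upwards [ENNReal.ae_le_essSup _, ae_restrict_mem measurableSet_Ioo] with t hbt ht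
    have hX : (x, t) ∈ pcyl Y r := ⟨hx, ht⟩
    have hXK := subset_closure hX
    refine ⟨a (x, t), ha _ hX, ‖b (x, t)‖₊, hbt, ?_⟩
    have hL := hsub _ hX
    rw [Lop_eq_hessTrace_add_inner fun j => hu.diff_xx j _ hXK, ← hgrad hXK, ← hhess hXK,
      ← hdt hXK] at hL
    have hinner := real_inner_le_norm (w.grad (x, t)) (b (x, t))
    change hessTrace (a (x, t)) (0 - w.hess (x, t)) ≤
      deriv (fun _ => M) t - w.dt (x, t) + ‖b (x, t)‖ * ‖0 - w.grad (x, t)‖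
    rw [map_sub, map_zero, deriv_const, zero_sub, zero_sub, zero_sub, norm_neg]
    linarith

theorem mul_volume_le_volume_superlevelCylinder {v : En n × ℝ → ℝ} (hr : 0 < r) (hM : 0 < M)
    (hvu : ∀ X ∈ closure (pcyl Y r), v X = M - u X) {μ : ℝ}
    (hvol : volume {X ∈ pcyl (Y.1, Y.2 - 3 / 4 * r ^ 2) (r / 2) | 0 < u X} ≤
      ENNReal.ofReal μ * volume (pcyl (Y.1, Y.2 - 3 / 4 * r ^ 2) (r / 2))) :
    ENNReal.ofReal (1 - μ.toNNReal) *
        volume (ball Y.1 (r / 2) ×ˢ Ioo (Y.2 - r ^ 2) (Y.2 - 3 / 4 * r ^ 2)) ≤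
      volume (superlevelCylinder v (M / 2) Y.1 (r / 2) (Y.2 - r ^ 2) (Y.2 - 3 / 4 * r ^ 2)) := by
  have hsub := subset_closure.trans (closure_mono (pcyl_half_sub_subset Y hr))
  rw [← pcyl_half_sub]
  refine mul_measure_le_of_measure_inter_le
    (measure_ne_top_of_subset hsub (isCompact_closure_pcyl Y hr).measure_ne_top)
    (fun X hX => (lt_or_ge 0 (u X)).imp id fun huX => ⟨?_, pcyl_half_sub Y r ▸ hX⟩) hvol
  rw [mem_ofPred_eq, hvu X (hsub hX)]
  linarith

end Subsolutions

/-- **Third Growth Theorem** (Theorem 5.4). -/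
theorem third_growth_theorem
    (n : ℕ) (hn : 0 < n) (ν S μ : ℝ) (hν : 1 ≤ ν) (hμ : μ < 1) :
    ∃ β : ℝ, 0 < β ∧ β < 1 ∧
      ∀ (Y : En n × ℝ) (r : ℝ) (u : En n × ℝ → ℝ)
        (a : En n × ℝ → Matrix (Fin n) (Fin n) ℝ) (b : En n × ℝ → En n),
        0 < r →
        IsC21 u (closure (pcyl Y r)) →
        UnifParabolic ν a (pcyl Y r) →
        LxnLtinfPow b (pcyl Y r) ≤ ENNReal.ofReal S →
        (∀ X ∈ pcyl Y r, 0 ≤ -Dt u X + Lop a b u X) →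
        volume {X ∈ pcyl (Y.1, Y.2 - 3 / 4 * r ^ 2) (r / 2) | 0 < u X} ≤
          ENNReal.ofReal μ * volume (pcyl (Y.1, Y.2 - 3 / 4 * r ^ 2) (r / 2)) →
        supPos u (closure (pcyl Y (r / 2))) ≤ β * supPos u (closure (pcyl Y r)) := by
  have hm : 0 < 1 - (μ.toNNReal : ℝ) := sub_pos.2 (max_lt hμ one_pos)
  obtain ⟨c, ⟨hc, hc1⟩, hgrowth⟩ :=
    exists_mul_le_of_mul_volume_le_volume_superlevelCylinder hn.ne' hν S hm
  refine ⟨1 - c / 2, by linarith, by linarith, fun Y r u a b hr hu ha hb hsub hvol => ?_⟩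
  set M := supPos u (closure (pcyl Y r))
  have huM (X) (hX : X ∈ closure (pcyl Y r)) : u X ≤ M :=
    le_supPos (isCompact_closure_pcyl Y hr) hu.cont hX
  have hM : 0 ≤ M := supPos_nonneg _ _
  refine supPos_le (mul_nonneg (by linarith) hM) fun X hX => ?_
  have hXr := closure_mono (pcyl_half_subset Y hr) hX
  rcases hM.eq_or_lt with hM0 | hMpos
  · simpa [← hM0] using huM X hXr
  obtain ⟨v, hv, hvu⟩ := hu.exists_isNonnegSupersolution ha hb hsub hr huM
  rw [closure_pcyl Y (half_pos hr)] at hX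
  have hcv := hgrowth v Y.1 r Y.2 (M / 2) hr (half_pos hMpos) hv
    (mul_volume_le_volume_superlevelCylinder hr hMpos hvu hvol) X
    ⟨hX.1, by linarith [hX.2.1], hX.2.2⟩
  linarith [hvu X hXr]
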